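/- Let L be any Lagrangian smooth submanifold of E (not assumed compact or closed as a subset). Then every point of L is locally rigid with respect to L. -/

import Mathlib

/-!
Local rigidity of Lagrangian points is a lower bound for the energy needed to move a small ball
centred on a Lagrangian off it.

*Normal form.* Near `p` the submanifold `L` is parametrised by an isotropic chart
(`exists_lagrangian_chart`). A linear symplectic map makes it tangent to the zero section
`{y = 0}`, so it becomes the graph of a closed one-form (`exists_graph`). Such a form extends, after
shrinking, to a closed form `β` on all of `ℝⁿ` (`exists_global_closed`), and the shear
`(x, y) ↦ (x, y + β x)` is symplectic. Hence `L ∩ W` is the image of the zero section under a global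
symplectic diffeomorphism (`exists_normal_form`), and Hofer lengths are preserved by the change of
coordinates (`transported_estimate`).

*Existence of trajectories.* For a compactly supported Hamiltonian `G` and a point `q`, there is a
`G`-trajectory from `{y = 0}` ending arbitrarily close to the fibre over `q`, with action
`∫ y dx - G dt` bounded below by `-∫ sup G` up to an arbitrarily small error (`exists_trajectory`).
The action of polygons is a hyperbolic quadratic form plus a bounded perturbation with bounded
gradient. If it had no almost critical points at levels between `-sup` and `-inf` of the
perturbation, gradient descent would carry the negative eigenspace below the level `-sup`, hence
away from the positive eigenspace, contradicting Brouwer's theorem (`exists_almost_critical`, with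
Brouwer's theorem proved by the determinant integral of a would-be retraction). Approximate critical
polygons are approximate Euler polygons, which converge to trajectories (`euler_error`).

*Energy estimate.* Let `φ` be the time-one map of `H`, displacing the ball `{|z|² < ρ}` from the
zero section, and let `R` be the rotation `z ↦ e^{iθ(|z|²)} z` with `θ` supported in `(-∞, ρ]` and
values in `[0, 1]`. The commutator `R φ R⁻¹ φ⁻¹` is generated by a Hamiltonian `commH` with
`∫ sup commH ≤ ‖H‖`. On the zero section `φ⁻¹` takes values outside the ball, where `R` is the
identity, so the commutator agrees there with `R` (`exists_commH_trajectory`). Since `θ ≤ 1 < π/2`,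
the only point of `R({y = 0})` over the origin is the origin itself, and the identity `da = y dx`
for the action at the endpoint (`action_variation`), integrated along a ray from infinity, gives its
action as at most `-½ ∫₀^ρ θ` (`commH_action_zero`). Comparison with the lower bound `-∫ sup commH`
yields `½ ∫₀^ρ θ ≤ ‖H‖` (`main_estimate`), a positive bound independent of `H`.
-/

open scoped ENNReal Topology

noncomputable section

/-- The standard symplectic vector space `E = ℝⁿ × ℝⁿ`. -/
abbrev E (n : ℕ) := (Fin n → ℝ) × (Fin n → ℝ)

/-- The standard symplectic form `ω₀((x,y),(x',y')) = ⟨x,y'⟩ − ⟨y,x'⟩`. -/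
def omega0 (n : ℕ) (z w : E n) : ℝ :=
  (∑ i, z.1 i * w.2 i) - ∑ i, z.2 i * w.1 i

/-- The Hamiltonian vector field `X_{H_t}(x,y) = (∂_y H(t,x,y), −∂_x H(t,x,y))`. -/
def XH (n : ℕ) (H : ℝ × E n → ℝ) (t : ℝ) (z : E n) : E n :=
  ((fun i => fderiv ℝ (fun w => H (t, w)) z (0, Pi.single i 1)),
   (fun i => -fderiv ℝ (fun w => H (t, w)) z (Pi.single i 1, 0)))

/-- `Φ` is the Hamiltonian flow of `H`: `Φ 0 = id` and `(d/dt) Φ t z = X_{H_t} (Φ t z)`. -/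
def IsHamFlow (n : ℕ) (H : ℝ × E n → ℝ) (Φ : ℝ → E n → E n) : Prop :=
  (∀ z, Φ 0 z = z) ∧ ∀ z t, HasDerivAt (fun s => Φ s z) (XH n H t (Φ t z)) t

/-- `H : ℝ × E → ℝ` is smooth with support a compact subset of `[0,1] × W`. -/
def AdmissibleH (n : ℕ) (W : Set (E n)) (H : ℝ × E n → ℝ) : Prop :=
  ContDiff ℝ (⊤ : ℕ∞) H ∧ IsCompact (tsupport H) ∧
    tsupport H ⊆ Set.Icc (0 : ℝ) 1 ×ˢ W

/-- `Ham(W)`: time-one maps of Hamiltonian flows of admissible Hamiltonians. -/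
def HamGrp (n : ℕ) (W : Set (E n)) : Set (E n → E n) :=
  {φ | ∃ H Φ, AdmissibleH n W H ∧ IsHamFlow n H Φ ∧ φ = Φ 1}

/-- `‖H‖ = ∫₀¹ (sup H(t,·) − inf H(t,·)) dt`. -/
def HNorm (n : ℕ) (H : ℝ × E n → ℝ) : ℝ :=
  ∫ t in (0:ℝ)..(1:ℝ),
    (sSup (Set.range fun z => H (t, z)) - sInf (Set.range fun z => H (t, z)))

/-- The Hofer norm `‖φ‖_W` of `φ ∈ Ham(W)`. -/
def hoferNorm (n : ℕ) (W : Set (E n)) (φ : E n → E n) : ℝ :=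
  sInf {c | ∃ H Φ, AdmissibleH n W H ∧ IsHamFlow n H Φ ∧ φ = Φ 1 ∧ c = HNorm n H}

/-- The displacement energy `e_W(U,N)`, valued in `ℝ≥0∞` (so `inf ∅ = ⊤`).
`closure U ∩ W` is the closure of `U` in `W`. -/
def dispE (n : ℕ) (W U N : Set (E n)) : ℝ≥0∞ :=
  sInf {c | ∃ φ ∈ HamGrp n W, φ '' (closure U ∩ W) ∩ N = ∅ ∧
    c = ENNReal.ofReal (hoferNorm n W φ)}

/-- `p` is rigid with respect to `N` in `W`. -/
def RigidWrt (n : ℕ) (W N : Set (E n)) (p : E n) : Prop :=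
  ∀ U : Set (E n), IsOpen U → p ∈ U → U ⊆ W → 0 < dispE n W U N

/-- `N` is a subset of `W` which is closed as a subset of `W`. -/
def ClosedIn (n : ℕ) (W N : Set (E n)) : Prop :=
  N ⊆ W ∧ closure N ∩ W ⊆ N

/-- `N` is locally closed. -/
def LocallyClosedSet (n : ℕ) (N : Set (E n)) : Prop :=
  ∀ q ∈ N, ∃ V : Set (E n), IsOpen V ∧ q ∈ V ∧ ClosedIn n V (N ∩ V)

/-- `p` is locally rigid with respect to `N`. -/
def LocRigid (n : ℕ) (N : Set (E n)) (p : E n) : Prop :=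
  ∃ W : Set (E n), IsOpen W ∧ p ∈ W ∧ ClosedIn n W (N ∩ W) ∧
    RigidWrt n W (N ∩ W) p

/-- `ψ` is a symplectomorphism from the open set `W` onto its (open) image. -/
def IsSymplecto (n : ℕ) (W : Set (E n)) (ψ : E n → E n) : Prop :=
  IsOpen W ∧ IsOpen (ψ '' W) ∧ Set.InjOn ψ W ∧ ContDiffOn ℝ (⊤ : ℕ∞) ψ W ∧
  (∃ g : E n → E n, ContDiffOn ℝ (⊤ : ℕ∞) g (ψ '' W) ∧ ∀ z ∈ W, g (ψ z) = z) ∧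
  ∀ z ∈ W, ∀ u v, omega0 n (fderiv ℝ ψ z u) (fderiv ℝ ψ z v) = omega0 n u v

/-- `ψ` is a symplectic homeomorphism of `E`: a homeomorphism which is a `C⁰`-limit
(uniformly on compact sets, together with inverses) of symplectomorphisms of `E` onto `E`. -/
def IsSympHomeo (n : ℕ) (ψ : E n ≃ₜ E n) : Prop :=
  ∃ Ψ : ℕ → E n ≃ E n,
    (∀ m, IsSymplecto n Set.univ (Ψ m)) ∧
    TendstoLocallyUniformly (fun m z => Ψ m z) (fun z => ψ z) Filter.atTop ∧
    TendstoLocallyUniformly (fun m z => (Ψ m).symm z) (fun z => ψ.symm z) Filter.atTop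

/-- A fixed `k`-dimensional coordinate subspace `ℝᵏ × {0}` of `E`. -/
def coordSubspace (n k : ℕ) : Set (E n) :=
  {z | (∀ i : Fin n, k ≤ (i : ℕ) → z.1 i = 0) ∧
       (∀ i : Fin n, k ≤ n + (i : ℕ) → z.2 i = 0)}

/-- `N` is a smooth `k`-dimensional submanifold of `E`. -/
def IsSubmanifold (n k : ℕ) (N : Set (E n)) : Prop :=
  ∀ p ∈ N, ∃ (V : Set (E n)) (Φ : E n → E n),
    IsOpen V ∧ p ∈ V ∧ IsOpen (Φ '' V) ∧ Set.InjOn Φ V ∧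
    ContDiffOn ℝ (⊤ : ℕ∞) Φ V ∧
    (∃ g : E n → E n, ContDiffOn ℝ (⊤ : ℕ∞) g (Φ '' V) ∧ ∀ z ∈ V, g (Φ z) = z) ∧
    Φ '' (N ∩ V) = coordSubspace n k ∩ Φ '' V

/-- The tangent space `T_pN`, as velocities of curves through `p` lying locally in `N`. -/
def TangentSet (n : ℕ) (N : Set (E n)) (p : E n) : Set (E n) :=
  {v | ∃ γ : ℝ → E n, γ 0 = p ∧ (∀ᶠ t in 𝓝 (0:ℝ), γ t ∈ N) ∧ HasDerivAt γ v 0}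

/-- The symplectic orthogonal complement `T^{ω₀}`. -/
def symplOrth (n : ℕ) (T : Set (E n)) : Set (E n) :=
  {v | ∀ u ∈ T, omega0 n v u = 0}

/-- `N` is coisotropic: `(T_pN)^{ω₀} ⊆ T_pN` for all `p ∈ N`. -/
def IsCoisotropic (n : ℕ) (N : Set (E n)) : Prop :=
  ∀ p ∈ N, symplOrth n (TangentSet n N p) ⊆ TangentSet n N p

/-- `N` is Lagrangian: `(T_pN)^{ω₀} = T_pN` for all `p ∈ N`. -/
def IsLagrangian (n : ℕ) (N : Set (E n)) : Prop :=
  ∀ p ∈ N, symplOrth n (TangentSet n N p) = TangentSet n N p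

/-- `Σ_N`: Hamiltonian diffeomorphisms preserving `N`. -/
def SigmaGrp (n : ℕ) (N : Set (E n)) : Set (E n → E n) :=
  {φ | φ ∈ HamGrp n Set.univ ∧ φ '' N = N}

/-- `Σ̄_N`: the closure of `Σ_N` in the Hofer metric. -/
def SigmaBar (n : ℕ) (N : Set (E n)) : Set (E n → E n) :=
  {φ | φ ∈ HamGrp n Set.univ ∧ ∀ ε : ℝ, 0 < ε →
    ∃ ψ ∈ SigmaGrp n N, ∃ χ : E n → E n,
      Function.LeftInverse χ ψ ∧ Function.RightInverse χ ψ ∧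
      hoferNorm n Set.univ (χ ∘ φ) < ε}

/-- The rigid locus `R_N = ⋂_{φ ∈ Σ̄_N} φ⁻¹(N)`. -/
def rigidLocus (n : ℕ) (N : Set (E n)) : Set (E n) :=
  ⋂ φ ∈ SigmaBar n N, φ ⁻¹' N

/-! ### Brouwer: bounded `C¹` perturbations of the identity have zeros -/

/-- If `f` is Lipschitz on the closed ball and vanishes on the sphere, then `x ↦ x + t f(x)` is a bijection of the ball for small `t ≥ 0`. -/
lemma small_perturb_bijOn {ι : Type*} [Fintype ι] {f : EuclideanSpace ℝ ι → EuclideanSpace ℝ ι}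
    {R : ℝ} {K : NNReal} (hK : LipschitzOnWith K f (Metric.closedBall 0 R))
    (hf0 : ∀ x, ‖x‖ = R → f x = 0) {t : ℝ} (ht : 0 ≤ t) (htK : t * K < 1) :
    Set.BijOn (fun x => x + t • f x) (Metric.closedBall 0 R) (Metric.closedBall 0 R) := by
  classical
  set B := Metric.closedBall (0 : EuclideanSpace ℝ ι) R with hB
  -- extension by zero is still Lipschitz, since a segment leaving the ball meets the sphere
  set F : EuclideanSpace ℝ ι → EuclideanSpace ℝ ι := fun x => if ‖x‖ ≤ R then f x else 0 with hF
  have key : ∀ x y, ‖x‖ ≤ R → ¬ ‖y‖ ≤ R → dist (f x) 0 ≤ K * dist x y := by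
    intro x y hx hy
    push Not at hy
    have hc : ContinuousOn (fun s : ℝ => ‖AffineMap.lineMap x y s‖) (Set.Icc 0 1) := by
      apply Continuous.continuousOn
      exact (AffineMap.lineMap_continuous).norm
    have := intermediate_value_Icc (zero_le_one) hc
    obtain ⟨s, hs, hsR⟩ := this (show R ∈ Set.Icc _ _ by simp [hx, hy.le])
    have h1 : dist (f x) (f (AffineMap.lineMap x y s)) ≤ K * dist x (AffineMap.lineMap x y s) :=
      hK.dist_le_mul x (by simpa [hB] using hx) _ (by simpa [hB] using hsR.le)
    rw [hf0 _ hsR] at h1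
    refine h1.trans ?_
    gcongr
    rw [dist_left_lineMap]
    have : ‖s‖ ≤ 1 := by rw [Real.norm_of_nonneg hs.1]; exact hs.2
    exact mul_le_of_le_one_left dist_nonneg this
  have hFL : LipschitzWith K F := by
    apply LipschitzWith.of_dist_le_mul
    intro x y
    by_cases hx : ‖x‖ ≤ R <;> by_cases hy : ‖y‖ ≤ R
    · simpa [hF, hx, hy] using hK.dist_le_mul x (by simpa [hB] using hx) y (by simpa [hB] using hy)
    · simpa only [hF, hx, hy, if_true, if_false] using key x y hx hy
    · simp only [hF, hx, hy, if_true, if_false]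
      rw [dist_comm, dist_comm x]; exact key y x hy hx
    · simp [hF, hx, hy]; positivity
  have hFc : ∀ y, ContractingWith (Real.toNNReal t * K) (fun x => y - t • F x) := by
    intro y
    refine ⟨by rw [← NNReal.coe_lt_coe]; simpa [ht] using htK, LipschitzWith.of_dist_le_mul ?_⟩
    intro a b
    rw [dist_sub_left, dist_smul₀, Real.norm_of_nonneg ht]
    have := hFL.dist_le_mul a b
    calc t * dist (F a) (F b) ≤ t * (K * dist a b) := by gcongr
      _ = _ := by simp [mul_assoc, ht]
  refine ⟨?_, ?_, ?_⟩
  · intro x hx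
    have hx' : ‖x‖ ≤ R := by simpa [hB] using hx
    -- otherwise the image point would be a fixed point of the contraction
    by_contra hcon
    have hcon' : ¬ ‖x + t • f x‖ ≤ R := by simpa [hB] using hcon
    have e1 : Function.IsFixedPt (fun z => (x + t • f x) - t • F z) x := by
      simp [Function.IsFixedPt, hF, hx']
    have e2 : Function.IsFixedPt (fun z => (x + t • f x) - t • F z) (x + t • f x) := by
      simp [Function.IsFixedPt, hF, hcon']
    have := (hFc (x + t • f x)).fixedPoint_unique' e1 e2
    rw [← this] at hcon'
    exact hcon' hx'
  · intro x hx y hy hxy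
    have hx' : ‖x‖ ≤ R := by simpa [hB] using hx
    have hy' : ‖y‖ ≤ R := by simpa [hB] using hy
    have e1 : Function.IsFixedPt (fun z => (x + t • f x) - t • F z) x := by
      simp [Function.IsFixedPt, hF, hx']
    have e2 : Function.IsFixedPt (fun z => (x + t • f x) - t • F z) y := by
      have hxy' : x + t • f x = y + t • f y := hxy
      simp only [Function.IsFixedPt, hF, hxy']
      simp [hy']
    exact (hFc (x + t • f x)).fixedPoint_unique' e1 e2
  · intro y hy
    have hy' : ‖y‖ ≤ R := by simpa [hB] using hy
    have hfix := (hFc y).fixedPoint_isFixedPt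
    set x := ContractingWith.fixedPoint _ (hFc y)
    have hx : y - t • F x = x := hfix
    by_cases hxR : ‖x‖ ≤ R
    · refine ⟨x, by simpa [hB] using hxR, ?_⟩
      have : F x = f x := by simp [hF, hxR]
      rw [this] at hx
      simp only
      exact (sub_eq_iff_eq_add.mp hx).symm
    · have : F x = 0 := by simp [hF, hxR]
      rw [this] at hx
      simp at hx
      exact absurd (hx ▸ hy') hxR

/-- Along a line of endomorphisms the determinant is a polynomial of degree at most the
dimension. -/
lemma det_add_smul_poly {ι : Type*} [Fintype ι]
    (M : EuclideanSpace ℝ ι →L[ℝ] EuclideanSpace ℝ ι) :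
    ∃ p : Polynomial ℝ, p.natDegree ≤ Fintype.card ι ∧
      ∀ t : ℝ, (ContinuousLinearMap.id ℝ _ + t • M).det = p.eval t := by
  classical
  set b := (EuclideanSpace.basisFun ι ℝ).toBasis
  set A := LinearMap.toMatrix b b (M : EuclideanSpace ℝ ι →ₗ[ℝ] EuclideanSpace ℝ ι)
  refine ⟨_, Polynomial.natDegree_det_X_add_C_le A 1, fun t => ?_⟩
  rw [ContinuousLinearMap.det, ← LinearMap.det_toMatrix b, ← Polynomial.coe_evalRingHom,
    RingHom.map_det]
  congr 1
  ext i j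
  rcases eq_or_ne i j with rfl | hij
  · simp [A]; ring
  · simp [A, Matrix.one_apply_ne hij]; ring

/-- There is no `C¹` retraction of a ball onto its boundary sphere. The integral over the ball of
`det (1 + t Df)` is polynomial in `t` and equals the volume for small `t`; for `t = 1` the integrand
vanishes. -/
lemma no_retraction {ι : Type*} [Fintype ι] {r : EuclideanSpace ℝ ι → EuclideanSpace ℝ ι}
    (hr : ContDiff ℝ 1 r) {R : ℝ} (hR : 0 < R) (hnorm : ∀ x, ‖r x‖ = R)
    (hid : ∀ x, ‖x‖ = R → r x = x) : False := by
  classical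
  set f : EuclideanSpace ℝ ι → EuclideanSpace ℝ ι := fun x => r x - x with hf
  have hfC : ContDiff ℝ 1 f := hr.sub contDiff_id
  obtain ⟨K, hK⟩ := hfC.contDiffOn.exists_lipschitzOnWith one_ne_zero
    (convex_closedBall (0 : EuclideanSpace ℝ ι) R) (isCompact_closedBall 0 R)
  set B := Metric.closedBall (0 : EuclideanSpace ℝ ι) R with hB
  have hf0 : ∀ x, ‖x‖ = R → f x = 0 := fun x hx => by simp [hf, hid x hx]
  have hfd : ∀ x, HasFDerivAt f (fderiv ℝ f x) x := fun x =>
    (hfC.differentiable one_ne_zero x).hasFDerivAt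
  set D : ℝ → EuclideanSpace ℝ ι → ℝ :=
    fun t x => (ContinuousLinearMap.id ℝ (EuclideanSpace ℝ ι) + t • fderiv ℝ f x).det with hD
  have hDc : ∀ t, Continuous (D t) := by
    intro t
    have h1 : Continuous (fderiv ℝ f) := hfC.continuous_fderiv one_ne_zero
    exact ContinuousLinearMap.continuous_det.comp (continuous_const.add (h1.const_smul t))
  have hDint : ∀ t, MeasureTheory.IntegrableOn (D t) B := fun t =>
    (hDc t).continuousOn.integrableOn_compact (isCompact_closedBall 0 R)
  have hDf : ∀ x ∈ B, ‖fderiv ℝ f x‖ ≤ K := by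
    have hcl : IsClosed {x | ‖fderiv ℝ f x‖ ≤ K} :=
      isClosed_le (hfC.continuous_fderiv one_ne_zero).norm continuous_const
    rw [hB, ← closure_ball _ hR.ne']
    exact closure_minimal (fun x hx => (hfd x).le_of_lipschitzOn (Metric.isOpen_ball.mem_nhds hx)
          (hK.mono Metric.ball_subset_closedBall)) hcl
  have hvol : ∀ t : ℝ, 0 ≤ t → t * K < 1 →
      ∫ x in B, D t x
        = (MeasureTheory.volume (Metric.closedBall (0 : EuclideanSpace ℝ ι) R)).toReal := by
    intro t ht htK
    have hbij := small_perturb_bijOn hK hf0 ht htK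
    have hder : ∀ x, HasFDerivAt (fun x => x + t • f x)
        (ContinuousLinearMap.id ℝ (EuclideanSpace ℝ ι) + t • fderiv ℝ f x) x := fun x =>
      (hasFDerivAt_id x).add ((hfd x).const_smul t)
    have hpos : ∀ x ∈ B, 0 < D t x := by
      intro x hx
      have hbound := hDf x hx
      have hne : ∀ s : ℝ, s ∈ Set.Icc 0 t → D s x ≠ 0 := by
        intro s hs hdet
        have hni : ¬ Function.Injective (ContinuousLinearMap.id ℝ (EuclideanSpace ℝ ι) + s • fderiv ℝ f x) := by
          intro hinj
          have := (LinearEquiv.ofInjectiveEndo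
            ((ContinuousLinearMap.id ℝ _ + s • fderiv ℝ f x :
              EuclideanSpace ℝ ι →L[ℝ] EuclideanSpace ℝ ι) :
              EuclideanSpace ℝ ι →ₗ[ℝ] EuclideanSpace ℝ ι) hinj).isUnit_det'
          exact this.ne_zero hdet
        apply hni
        rw [injective_iff_map_eq_zero]
        intro v hv
        have hv' : v = - (s • fderiv ℝ f x v) := by
          rw [eq_neg_iff_add_eq_zero]; simpa using hv
        have h2 : ‖v‖ ≤ s * K * ‖v‖ := by
          conv_lhs => rw [hv', norm_neg, norm_smul, Real.norm_of_nonneg hs.1]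
          rw [mul_assoc]
          exact mul_le_mul_of_nonneg_left ((fderiv ℝ f x).le_of_opNorm_le hbound v) hs.1
        have h3 : s * K < 1 := lt_of_le_of_lt (by gcongr; exact hs.2) htK
        by_contra hvne
        have := norm_pos_iff.mpr hvne
        nlinarith
      by_contra hneg
      push Not at hneg
      have hcont : ContinuousOn (fun s => D s x) (Set.Icc 0 t) := by
        apply Continuous.continuousOn
        exact ContinuousLinearMap.continuous_det.comp
          (continuous_const.add (continuous_id.smul continuous_const))
      have h0 : D 0 x = 1 := by simp [hD, ContinuousLinearMap.det]
      obtain ⟨s, hs, hs0⟩ := intermediate_value_Icc' ht hcont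
        (show (0 : ℝ) ∈ Set.Icc _ _ from ⟨hneg, by rw [h0]; exact zero_le_one⟩)
      exact hne s hs hs0
    have himg := MeasureTheory.integral_image_eq_integral_abs_det_fderiv_smul
      (F := ℝ) MeasureTheory.volume
      (measurableSet_closedBall (x := (0 : EuclideanSpace ℝ ι)) (ε := R))
      (fun x _ => (hder x).hasFDerivWithinAt) hbij.injOn (fun _ => (1 : ℝ))
    rw [hbij.image_eq] at himg
    simp only [MeasureTheory.integral_const, MeasurableSet.univ, smul_eq_mul, mul_one,
      MeasureTheory.measureReal_def, MeasureTheory.Measure.restrict_apply, Set.univ_inter] at himg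
    rw [himg]
    apply MeasureTheory.setIntegral_congr_fun measurableSet_closedBall
    intro x hx
    exact (abs_of_pos (hpos x hx)).symm
  have hD1 : ∀ x, D 1 x = 0 := by
    intro x
    have hrd : HasFDerivAt r (ContinuousLinearMap.id ℝ (EuclideanSpace ℝ ι) + fderiv ℝ f x) x := by
      have := (hasFDerivAt_id x).add (hfd x)
      have e : r = id + f := by funext y; simp [hf]
      rw [e]; exact this
    set T := ContinuousLinearMap.id ℝ (EuclideanSpace ℝ ι) + fderiv ℝ f x with hT
    have horth : ∀ v, inner ℝ (r x) (T v) = 0 := by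
      intro v
      have h1 : HasFDerivAt (fun y => inner ℝ (r y) (r y)) _ x := hrd.inner ℝ hrd
      have h2 : (fun y => inner ℝ (r y) (r y)) = fun _ => R ^ 2 := by
        funext y; rw [real_inner_self_eq_norm_sq, hnorm]
      rw [h2] at h1
      have h3 := congrArg (fun L => L v) (h1.unique (hasFDerivAt_const (R ^ 2) x))
      simp [fderivInnerCLM_apply, real_inner_comm] at h3
      exact h3
    by_contra hne
    have hdet : LinearMap.det (T : EuclideanSpace ℝ ι →ₗ[ℝ] EuclideanSpace ℝ ι) ≠ 0 := by
      simpa [hD, ContinuousLinearMap.det, hT] using hne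
    have hsurj := (LinearMap.equivOfDetNeZero _ hdet).surjective (r x)
    obtain ⟨v, hv⟩ := hsurj
    have hv' : T v = r x := hv
    have := horth v
    rw [hv', real_inner_self_eq_norm_sq, hnorm] at this
    exact hR.ne' (by simpa using this)
  -- Lagrange interpolation of the polynomial `t ↦ D t x` at `d + 1` small nodes
  set d := Fintype.card ι with hd
  set τ : ℝ := 1 / ((d + 2) * (K + 1)) with hτ
  have hτpos : 0 < τ := by positivity
  set v : ℕ → ℝ := fun i => (i + 1) * τ with hv
  have hvinj : Set.InjOn v (Finset.range (d + 1)) := by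
    intro i _ j _ hij
    have : ((i : ℝ) + 1) = j + 1 := mul_right_cancel₀ hτpos.ne' hij
    exact_mod_cast add_right_cancel this
  have hvK : ∀ i ∈ Finset.range (d + 1), v i * K < 1 := by
    intro i hi
    have hi' : (i : ℝ) + 1 ≤ d + 1 := by
      have := Finset.mem_range.mp hi
      exact_mod_cast this
    have hK0 : (0 : ℝ) ≤ K := K.2
    have : v i * K = ((i + 1) * K) / ((d + 2) * (K + 1)) := by simp only [hv, hτ]; ring
    rw [this, div_lt_one (by positivity)]
    nlinarith [mul_le_mul_of_nonneg_right hi' hK0]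
  set lam : ℕ → ℝ := fun i => (Lagrange.basis (Finset.range (d + 1)) v i).eval 1 with hlam
  have hinterp : ∀ x, D 1 x = ∑ i ∈ Finset.range (d + 1), lam i * D (v i) x := by
    intro x
    obtain ⟨p, hp, hpe⟩ := det_add_smul_poly (fderiv ℝ f x)
    have hdeg : p.degree < (Finset.range (d + 1)).card := by
      rw [Finset.card_range]
      refine lt_of_le_of_lt Polynomial.degree_le_natDegree ?_
      exact_mod_cast Nat.lt_succ_of_le hp
    have := Lagrange.eq_interpolate hvinj hdeg
    simp only [hD, hpe]
    conv_lhs => rw [this]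
    rw [Lagrange.interpolate_apply, Polynomial.eval_finsetSum]
    refine Finset.sum_congr rfl fun i _ => ?_
    simp [hlam, mul_comm]
  have hlamsum : ∑ i ∈ Finset.range (d + 1), lam i = 1 := by
    have := Lagrange.sum_basis hvinj ⟨0, by simp⟩
    have := congrArg (Polynomial.eval 1) this
    rw [Polynomial.eval_finsetSum] at this
    simpa [hlam] using this
  have hzero : ∫ x in B, D 1 x = 0 := by simp [hD1]
  simp_rw [hinterp] at hzero
  rw [MeasureTheory.integral_finsetSum _ fun i _ => (hDint (v i)).const_mul _] at hzero
  simp_rw [MeasureTheory.integral_const_mul] at hzero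
  rw [Finset.sum_congr rfl fun i hi => by rw [hvol (v i) (by positivity) (hvK i hi)],
    ← Finset.sum_mul, hlamsum, one_mul] at hzero
  have hpos := Metric.measure_closedBall_pos MeasureTheory.volume
    (0 : EuclideanSpace ℝ ι) hR
  have hfin : MeasureTheory.volume (Metric.closedBall (0 : EuclideanSpace ℝ ι) R) ≠ ⊤ :=
    MeasureTheory.measure_closedBall_lt_top.ne
  exact (ENNReal.toReal_pos hpos.ne' hfin).ne' hzero

/-- Brouwer's theorem in the form used below: a bounded `C¹` perturbation of the identity has a
zero. -/
lemma exists_zero_of_bounded {ι : Type*} [Fintype ι]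
    {b : EuclideanSpace ℝ ι → EuclideanSpace ℝ ι}
    (hb : ContDiff ℝ 1 b) {C : ℝ} (hC : ∀ x, ‖b x‖ ≤ C) : ∃ x, x + b x = 0 := by
  by_contra hcon
  push Not at hcon
  set R : ℝ := |C| + 1
  have hR : 0 < R := by positivity
  have hbR : ∀ x, ‖b x‖ < R := fun x =>
    lt_of_le_of_lt ((hC x).trans (le_abs_self C)) (lt_add_one _)
  let χ : ContDiffBump (0 : EuclideanSpace ℝ ι) := ⟨R, 2 * R, hR, by linarith⟩
  -- damp the perturbation outside a large ball, without creating zeros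
  set g : EuclideanSpace ℝ ι → EuclideanSpace ℝ ι := fun x => x + χ x • b x with hg
  have hgC : ContDiff ℝ 1 g := contDiff_id.add ((χ.contDiff).smul hb)
  have hg0 : ∀ x, g x ≠ 0 := by
    intro x
    by_cases hx : ‖x‖ ≤ R
    · have : χ x = 1 := χ.one_of_mem_closedBall (by simpa using hx)
      simpa [hg, this] using hcon x
    · intro h0
      have h1 : x = - (χ x • b x) := by rw [eq_neg_iff_add_eq_zero]; exact h0
      have h2 : ‖x‖ ≤ ‖b x‖ := by
        conv_lhs => rw [h1, norm_neg, norm_smul, Real.norm_of_nonneg χ.nonneg]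
        exact mul_le_of_le_one_left (norm_nonneg _) χ.le_one
      have := hbR x
      linarith
  apply no_retraction (r := fun x => (2 * R / ‖g x‖) • g x) (R := 2 * R)
  · refine ContDiff.smul (contDiff_const.div (hgC.norm ℝ hg0) fun x => ?_) hgC
    exact norm_ne_zero_iff.mpr (hg0 x)
  · positivity
  · intro x
    have := norm_pos_iff.mpr (hg0 x)
    rw [norm_smul, Real.norm_of_nonneg (by positivity)]
    field_simp
  · intro x hx
    have : χ x = 0 := χ.zero_of_le_dist (by simp [hx, χ])
    have hgx : g x = x := by simp [hg, this]
    simp only [hgx, hx]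
    rw [div_self (by positivity), one_smul]

/-! ### Almost critical points of perturbed hyperbolic quadratic forms -/

/-- One step of gradient descent with a step size small against the Lipschitz constant of the
gradient decreases the function by a definite amount. -/
lemma descent_step {Z : Type*} [NormedAddCommGroup Z] [InnerProductSpace ℝ Z]
    {S : Z → ℝ} {g : Z → Z} (hS : ∀ z v : Z, HasDerivAt (fun τ : ℝ => S (z + τ • v))
      (inner ℝ (g z) v) 0) {K : ℝ} (hg : ∀ z w, ‖g z - g w‖ ≤ K * ‖z - w‖)
    {ε : ℝ} (hε : 0 < ε) (hεK : ε * K ≤ 1 / 2) (hK : 0 ≤ K) (z : Z) :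
    S (z - ε • g z) ≤ S z - ε / 2 * ‖g z‖ ^ 2 := by
  have hd : ∀ τ : ℝ, HasDerivAt (fun τ : ℝ => S (z + τ • (-g z)))
      (inner ℝ (g (z + τ • (-g z))) (-g z)) τ := by
    intro τ
    have h1 := hS (z + τ • (-g z)) (-g z)
    have h2 : HasDerivAt (fun s : ℝ => s - τ) 1 τ := (hasDerivAt_id τ).sub_const τ
    have h1' : HasDerivAt (fun τ' : ℝ => S (z + τ • (-g z) + τ' • (-g z)))
      (inner ℝ (g (z + τ • (-g z))) (-g z)) (τ - τ) := by rw [sub_self]; exact h1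
    have h3 := HasDerivAt.comp (h := fun s : ℝ => s - τ) τ h1' h2
    rw [mul_one] at h3
    refine h3.congr_of_eventuallyEq (Filter.Eventually.of_forall fun s => ?_)
    simp only [Function.comp]
    rw [add_assoc, ← add_smul]
    congr 3; ring
  obtain ⟨c, hc, hslope⟩ := exists_hasDerivAt_eq_slope (fun τ : ℝ => S (z + τ • (-g z))) _ hε
    (fun τ _ => (hd τ).continuousAt.continuousWithinAt) (fun τ _ => hd τ)
  simp only [zero_smul, add_zero, sub_zero] at hslope
  have e1 : z + ε • (-g z) = z - ε • g z := by rw [smul_neg, sub_eq_add_neg]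
  rw [e1, eq_div_iff hε.ne'] at hslope
  have hb : inner ℝ (g (z + c • (-g z))) (-g z) ≤ - (1 / 2) * ‖g z‖ ^ 2 := by
    have h1 : inner ℝ (g (z + c • (-g z))) (-g z)
        = inner ℝ (g (z + c • (-g z)) - g z) (-g z) - ‖g z‖ ^ 2 := by
      rw [inner_sub_left, ← real_inner_self_eq_norm_sq (g z), inner_neg_right, inner_neg_right]
      ring
    have h2 := real_inner_le_norm (g (z + c • (-g z)) - g z) (-g z)
    have h3 := hg (z + c • (-g z)) z
    rw [add_sub_cancel_left, norm_smul, Real.norm_of_nonneg hc.1.le, norm_neg] at h3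
    rw [norm_neg] at h2
    have h4 : K * (c * ‖g z‖) ≤ 1 / 2 * ‖g z‖ := by
      have : c * K ≤ 1 / 2 := (mul_le_mul_of_nonneg_right hc.2.le hK).trans hεK
      nlinarith [norm_nonneg (g z)]
    nlinarith [norm_nonneg (g z)]
  nlinarith

/-- Let `A` be a symmetric involution and `h` a bounded function with bounded Lipschitz gradient.
Then `S(z) = ½⟨Az, z⟩ - h(z)` has almost critical points at a level in `[-sup h, -inf h]`.
Otherwise gradient descent would push the negative eigenspace of `A`, on which `S ≤ -inf h`, into
`{S < -sup h}`, which is disjoint from the positive eigenspace; Brouwer's theorem forbids this. -/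
lemma exists_almost_critical {ι : Type*} [Fintype ι]
    (A : EuclideanSpace ℝ ι →L[ℝ] EuclideanSpace ℝ ι)
    (hA2 : ∀ z, A (A z) = z) (hAs : ∀ z w, inner ℝ (A z) w = inner ℝ z (A w))
    {h : EuclideanSpace ℝ ι → ℝ} (hh : ContDiff ℝ 2 h) {C : ℝ} (hC : ∀ z, ‖fderiv ℝ h z‖ ≤ C)
    {K : ℝ} (hK0 : 0 ≤ K) (hK : ∀ z w, ‖fderiv ℝ h z - fderiv ℝ h w‖ ≤ K * ‖z - w‖)
    {lo hi : ℝ} (hlo : ∀ z, lo ≤ h z) (hhi : ∀ z, h z ≤ hi) {δ : ℝ} (hδ : 0 < δ) :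
    ∃ z, (∀ u, |inner ℝ (A z) u - fderiv ℝ h z u| ≤ δ * ‖u‖) ∧
      -hi ≤ 1 / 2 * inner ℝ (A z) z - h z ∧ 1 / 2 * inner ℝ (A z) z - h z ≤ -lo := by
  set G : EuclideanSpace ℝ ι → EuclideanSpace ℝ ι :=
    fun z => (InnerProductSpace.toDual ℝ _).symm (fderiv ℝ h z) with hG
  have hGi : ∀ z u, inner ℝ (G z) u = fderiv ℝ h z u := fun z u => by
    simp [hG]
  have hGC : ContDiff ℝ 1 G := by
    have h1 : ContDiff ℝ 1 (fderiv ℝ h) := hh.fderiv_right (by norm_num)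
    exact (InnerProductSpace.toDual ℝ (EuclideanSpace ℝ ι)).symm.contDiff.comp h1
  have hGb : ∀ z, ‖G z‖ ≤ C := fun z => by simpa [hG] using hC z
  have hGL : ∀ z w, ‖G z - G w‖ ≤ K * ‖z - w‖ := fun z w => by
    simp only [hG]
    rw [← map_sub, LinearIsometryEquiv.norm_map]; exact hK z w
  set S : EuclideanSpace ℝ ι → ℝ := fun z => 1 / 2 * inner ℝ (A z) z - h z with hSdef
  set g : EuclideanSpace ℝ ι → EuclideanSpace ℝ ι := fun z => A z - G z with hgdef
  have hgL : ∀ z w, ‖g z - g w‖ ≤ (‖A‖ + K) * ‖z - w‖ := by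
    intro z w
    have : g z - g w = A (z - w) - (G z - G w) := by simp only [hgdef, map_sub]; abel
    rw [this, add_mul]
    exact (norm_sub_le _ _).trans (add_le_add (A.le_opNorm _) (hGL z w))
  have hSd : ∀ z v, HasDerivAt (fun τ : ℝ => S (z + τ • v)) (inner ℝ (g z) v) 0 := by
    intro z v
    have hl : HasDerivAt (fun τ : ℝ => z + τ • v) v 0 := by
      simpa using ((hasDerivAt_id (0 : ℝ)).smul_const v).const_add z
    have hAl : HasDerivAt (fun τ : ℝ => A (z + τ • v)) (A v) 0 :=
      A.hasFDerivAt.comp_hasDerivAt 0 hl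
    have h1 := hAl.inner ℝ hl
    have h2 : HasDerivAt (fun τ : ℝ => h (z + τ • v)) (fderiv ℝ h z v) 0 := by
      have hf : HasFDerivAt h (fderiv ℝ h z) (z + (0 : ℝ) • v) := by
        simpa using (hh.differentiable (by norm_num) z).hasFDerivAt
      exact hf.comp_hasDerivAt 0 hl
    have h3 := (h1.const_mul (1 / 2)).sub h2
    refine h3.congr_deriv ?_
    simp only [zero_smul, add_zero, hgdef, inner_sub_left, hGi]
    rw [hAs v z, real_inner_comm v (A z)]
    ring
  by_contra hcon
  have hgrad : ∀ z, -hi ≤ S z → S z ≤ -lo → δ < ‖g z‖ := by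
    intro z h1 h2
    by_contra h3
    push Not at h3
    refine hcon ⟨z, fun u => ?_, h1, h2⟩
    rw [← hGi, ← inner_sub_left]
    exact (abs_real_inner_le_norm _ _).trans (mul_le_mul_of_nonneg_right h3 (norm_nonneg _))
  set ε : ℝ := 1 / (2 * (‖A‖ + K + 1)) with hεdef
  have hε : 0 < ε := by positivity
  have hεK : ε * (‖A‖ + K) ≤ 1 / 2 := by
    rw [hεdef, div_mul_eq_mul_div, div_le_div_iff₀ (by positivity) (by norm_num)]
    nlinarith [norm_nonneg A]
  set step : EuclideanSpace ℝ ι → EuclideanSpace ℝ ι := fun z => z - ε • g z with hstep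
  have hdesc : ∀ z, S (step z) ≤ S z - ε / 2 * ‖g z‖ ^ 2 := fun z =>
    descent_step hSd hgL hε hεK (by positivity) z
  have hstepC : ContDiff ℝ 1 step :=
    contDiff_id.sub ((A.contDiff.sub hGC).const_smul ε)
  set P : EuclideanSpace ℝ ι →L[ℝ] EuclideanSpace ℝ ι :=
    (1 / 2 : ℝ) • (ContinuousLinearMap.id ℝ _ - A) with hP
  have hPz : ∀ z, P z = (1 / 2 : ℝ) • (z - A z) := fun z => by simp [hP]
  have hPP : ∀ z, P (P z) = P z := by
    intro z
    rw [hPz (P z), hPz z, map_smul, map_sub, hA2]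
    module
  have hAP : ∀ z, A (P z) = -P z := by
    intro z; rw [hPz, map_smul, map_sub, hA2]; module
  have hPstep : ∀ z, P (step z) = (1 + ε) • P z + ε • P (G z) := by
    intro z
    simp only [hstep, hgdef, map_sub, map_smul, hPz, hA2]
    module
  have hiterC : ∀ N, ContDiff ℝ 1 (step^[N]) := by
    intro N
    induction N with
    | zero => simpa using contDiff_id
    | succ N ih => rw [Function.iterate_succ]; exact ih.comp hstepC
  have hiterP : ∀ N, ∃ C', ∀ z, ‖P (step^[N] z) - (1 + ε) ^ N • P z‖ ≤ C' := by
    intro N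
    induction N with
    | zero => exact ⟨0, fun z => by simp⟩
    | succ N ih =>
      obtain ⟨C', hC'⟩ := ih
      refine ⟨(1 + ε) * C' + ε * (‖P‖ * C), fun z => ?_⟩
      rw [Function.iterate_succ_apply', hPstep]
      have : (1 + ε) • P (step^[N] z) + ε • P (G (step^[N] z)) - (1 + ε) ^ (N + 1) • P z
          = (1 + ε) • (P (step^[N] z) - (1 + ε) ^ N • P z) + ε • P (G (step^[N] z)) := by
        rw [pow_succ]; module
      rw [this]
      refine (norm_add_le _ _).trans (add_le_add ?_ ?_)
      · rw [norm_smul, Real.norm_of_nonneg (by positivity)]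
        gcongr; exact hC' z
      · rw [norm_smul, Real.norm_of_nonneg hε.le]
        gcongr
        exact (P.le_opNorm _).trans (by gcongr; exact hGb _)
  have hiterS : ∀ N : ℕ, ∀ z, S z ≤ -lo →
      S (step^[N] z) < -hi ∨ S (step^[N] z) ≤ -lo - N * (ε / 2 * δ ^ 2) := by
    intro N z hz
    induction N with
    | zero => right; simpa using hz
    | succ N ih =>
      rw [Function.iterate_succ_apply']
      set w := step^[N] z
      have hd := hdesc w
      have hnn : 0 ≤ ε / 2 * ‖g w‖ ^ 2 := by positivity
      by_cases hw : S w < -hi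
      · left; linarith
      · right
        have hw2 := ih.resolve_left hw
        have hw3 : S w ≤ -lo := hw2.trans (sub_le_self _ (by positivity))
        have h4 := hgrad w (not_lt.mp hw) hw3
        have h5 : ε / 2 * δ ^ 2 ≤ ε / 2 * ‖g w‖ ^ 2 := by gcongr
        push_cast
        linarith
  obtain ⟨N, hN⟩ := exists_nat_gt ((hi - lo) / (ε / 2 * δ ^ 2))
  rw [div_lt_iff₀ (by positivity)] at hN
  obtain ⟨C', hC'⟩ := hiterP N
  set b : EuclideanSpace ℝ ι → EuclideanSpace ℝ ι :=
    fun z => ((1 + ε) ^ N)⁻¹ • (P (step^[N] (P z)) - (1 + ε) ^ N • P (P z)) with hb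
  have hbC : ContDiff ℝ 1 b := by
    refine ContDiff.const_smul _ (ContDiff.sub ?_ ?_)
    · exact P.contDiff.comp ((hiterC N).comp P.contDiff)
    · exact (P.contDiff.comp P.contDiff).const_smul _
  obtain ⟨z, hz⟩ := exists_zero_of_bounded hbC (C := ((1 + ε) ^ N)⁻¹ * C') fun z => by
    simp only [hb]
    rw [norm_smul, Real.norm_of_nonneg (by positivity)]
    gcongr; exact hC' _
  have hpne : ((1 + ε) ^ N : ℝ) ≠ 0 := by positivity
  have hz' : P (step^[N] (P z)) = 0 := by
    have h1 : z - P z + ((1 + ε) ^ N)⁻¹ • P (step^[N] (P z)) = 0 := by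
      rw [← hz, hb]
      simp only [hPP, smul_sub, smul_smul, inv_mul_cancel₀ hpne, one_smul]
      abel
    have h2 := congrArg P h1
    simp only [map_add, map_sub, map_smul, hPP, sub_self, zero_add, map_zero] at h2
    exact (smul_eq_zero.mp h2).resolve_left (inv_ne_zero hpne)
  set w := step^[N] (P z) with hw
  have hAw : A w = w := by
    have := hz'
    rw [hPz] at this
    have h3 := (smul_eq_zero.mp this).resolve_left (by norm_num)
    exact (sub_eq_zero.mp h3).symm
  have hSw : -hi ≤ S w := by
    simp only [hSdef, hAw, real_inner_self_eq_norm_sq]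
    have := hhi w
    have : 0 ≤ ‖w‖ ^ 2 := by positivity
    linarith
  have hSP : S (P z) ≤ -lo := by
    simp only [hSdef, hAP, inner_neg_left, real_inner_self_eq_norm_sq]
    have := hlo (P z)
    have : 0 ≤ ‖P z‖ ^ 2 := by positivity
    linarith
  rcases hiterS N (P z) hSP with h | h
  · exact absurd hSw (not_le.mpr h)
  · have : S w ≤ -lo - N * (ε / 2 * δ ^ 2) := h
    linarith

/-! ### Hamiltonian vector fields of compactly supported functions -/

lemma exists_lipschitz_bound {V F : Type*} [NormedAddCommGroup V] [NormedSpace ℝ V]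
    [NormedAddCommGroup F] [NormedSpace ℝ F] {f : V → F} (hf : ContDiff ℝ 1 f)
    (hc : HasCompactSupport f) : ∃ K : ℝ, 0 ≤ K ∧ ∀ p q, ‖f p - f q‖ ≤ K * ‖p - q‖ := by
  obtain ⟨C, hC⟩ := ContDiff.lipschitzWith_of_hasCompactSupport hc hf one_ne_zero
  exact ⟨C, C.2, fun p q => hC.norm_sub_le p q⟩

lemma exists_norm_bound {V F : Type*} [NormedAddCommGroup V]
    [NormedAddCommGroup F] {f : V → F} (hf : Continuous f)
    (hc : HasCompactSupport f) : ∃ M : ℝ, 0 ≤ M ∧ ∀ p, ‖f p‖ ≤ M := by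
  obtain ⟨C, hC⟩ := hc.exists_bound_of_continuous hf
  exact ⟨C, (norm_nonneg _).trans (hC 0), hC⟩

lemma fderiv_slice {n : ℕ} {H : ℝ × E n → ℝ} (hH : ContDiff ℝ (⊤ : ℕ∞) H) (t : ℝ) (z v : E n) :
    fderiv ℝ (fun w => H (t, w)) z v = fderiv ℝ H (t, z) (0, v) := by
  have h1 : HasFDerivAt H (fderiv ℝ H (t, z)) (t, z) :=
    (hH.differentiable (by simp)).differentiableAt.hasFDerivAt
  have h2 : HasFDerivAt (fun w : E n => (t, w)) (ContinuousLinearMap.inr ℝ ℝ (E n)) z :=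
    hasFDerivAt_prodMk_right t z
  have h3 := h1.comp z h2
  have h4 : fderiv ℝ (fun w => H (t, w)) z = _ := h3.fderiv
  rw [h4]; rfl

lemma XH_contDiff {n : ℕ} {H : ℝ × E n → ℝ} (hH : ContDiff ℝ (⊤ : ℕ∞) H) :
    ContDiff ℝ (⊤ : ℕ∞) (fun p : ℝ × E n => XH n H p.1 p.2) := by
  have h1 : ContDiff ℝ (⊤ : ℕ∞) (fderiv ℝ H) := hH.fderiv_right (by simp)
  unfold XH
  simp only [fderiv_slice hH]
  refine ContDiff.prodMk (contDiff_pi.2 fun i => ?_) (contDiff_pi.2 fun i => ?_)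
  · exact h1.clm_apply contDiff_const
  · exact (h1.clm_apply contDiff_const).neg

lemma XH_eq_zero {n : ℕ} {H : ℝ × E n → ℝ} (hH : ContDiff ℝ (⊤ : ℕ∞) H) {t : ℝ} {z : E n}
    (h : (t, z) ∉ tsupport H) : XH n H t z = 0 := by
  have h1 : fderiv ℝ H (t, z) = 0 := by
    by_contra h0
    exact h (support_fderiv_subset ℝ h0)
  unfold XH
  simp only [fderiv_slice hH, h1]
  ext i <;> simp

lemma XH_hasCompactSupport {n : ℕ} {H : ℝ × E n → ℝ} (hH : ContDiff ℝ (⊤ : ℕ∞) H)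
    (hc : HasCompactSupport H) : HasCompactSupport (fun p : ℝ × E n => XH n H p.1 p.2) := by
  refine hc.mono' fun p hp => ?_
  by_contra h
  exact hp (XH_eq_zero hH h)

lemma omega0_XH {n : ℕ} (H : ℝ × E n → ℝ) (t : ℝ) (z v : E n) :
    omega0 n (XH n H t z) v = fderiv ℝ (fun w => H (t, w)) z v := by
  set D := fderiv ℝ (fun w => H (t, w)) z
  have h1 : v = ∑ i, (v.1 i • ((Pi.single i 1, 0) : E n) + v.2 i • ((0, Pi.single i 1) : E n)) := by
    ext j
    · simp [Prod.fst_sum, Finset.sum_apply, Pi.single_apply]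
    · simp [Prod.snd_sum, Finset.sum_apply, Pi.single_apply]
  conv_rhs => rw [h1]
  simp only [map_sum, map_add, map_smul, smul_eq_mul]
  unfold omega0 XH
  rw [Finset.sum_add_distrib]
  simp only [neg_mul, Finset.sum_neg_distrib, sub_neg_eq_add]
  rw [add_comm]
  congr 1 <;> exact Finset.sum_congr rfl fun i _ => mul_comm _ _

lemma abs_dotProduct_le {n : ℕ} (a b : Fin n → ℝ) : |a ⬝ᵥ b| ≤ n * (‖a‖ * ‖b‖) := by
  unfold dotProduct
  refine (Finset.abs_sum_le_sum_abs _ _).trans ?_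
  refine (Finset.sum_le_card_nsmul _ _ (‖a‖ * ‖b‖) fun i _ => ?_).trans (by simp)
  rw [abs_mul]
  exact mul_le_mul (norm_le_pi_norm a i) (norm_le_pi_norm b i) (abs_nonneg _) (norm_nonneg _)

/-- The field `(X_G, ⟨y, X_G^x⟩ − G)` on `E × ℝ`, whose last component integrates to the action
`∫ y dx − G dt` along trajectories.  It does not depend on the last coordinate. -/
def augField (n : ℕ) (G : ℝ × E n → ℝ) (p : ℝ × E n) : E n × ℝ :=
  (XH n G p.1 p.2, p.2.2 ⬝ᵥ (XH n G p.1 p.2).1 - G p)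

lemma augField_contDiff {n : ℕ} {G : ℝ × E n → ℝ} (hG : ContDiff ℝ (⊤ : ℕ∞) G) :
    ContDiff ℝ (⊤ : ℕ∞) (augField n G) := by
  have h := XH_contDiff hG
  have h1 : ∀ i, ContDiff ℝ (⊤ : ℕ∞) (fun p : ℝ × E n => (XH n G p.1 p.2).1 i) :=
    fun i => contDiff_pi.1 (contDiff_fst.comp h) i
  unfold augField dotProduct
  refine h.prodMk (ContDiff.sub (ContDiff.sum fun i _ => ContDiff.mul ?_ (h1 i)) hG)
  fun_prop

lemma augField_hasCompactSupport {n : ℕ} {G : ℝ × E n → ℝ} (hG : ContDiff ℝ (⊤ : ℕ∞) G)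
    (hc : HasCompactSupport G) : HasCompactSupport (augField n G) := by
  refine hc.mono' fun p hp => ?_
  by_contra h
  apply hp
  have h1 : XH n G p.1 p.2 = 0 := XH_eq_zero hG h
  unfold augField
  rw [h1, image_eq_zero_of_notMem_tsupport h]
  simp

lemma slice_le_sSup {n : ℕ} {G : ℝ × E n → ℝ} (hG : Continuous G)
    (hc : HasCompactSupport G) (t : ℝ) (z : E n) :
    G (t, z) ≤ sSup (Set.range fun z => G (t, z)) := by
  obtain ⟨M, -, hM⟩ := exists_norm_bound hG hc
  refine le_csSup ⟨M, ?_⟩ ⟨z, rfl⟩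
  rintro _ ⟨w, rfl⟩
  exact (le_abs_self _).trans (hM _)

lemma sInf_le_slice {n : ℕ} {G : ℝ × E n → ℝ} (hG : Continuous G)
    (hc : HasCompactSupport G) (t : ℝ) (z : E n) :
    sInf (Set.range fun z => G (t, z)) ≤ G (t, z) := by
  obtain ⟨M, -, hM⟩ := exists_norm_bound hG hc
  refine csInf_le ⟨-M, ?_⟩ ⟨z, rfl⟩
  rintro _ ⟨w, rfl⟩
  exact (abs_le.1 (hM _)).1

/-! ### Discrete Hamiltonian trajectories -/

/-- Linear part of the `k`-th phase-space point `(x_k, y_k)` of the polygon encoded by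
`z = (v, y)`: the increments are `v_j = z (j, ·, false)` and `x_k = q - ∑_{j ≥ k} v_j`. -/
def polyPt (n m : ℕ) (k : ℕ) : EuclideanSpace ℝ (Fin m × Fin n × Bool) →L[ℝ] E n :=
  LinearMap.toContinuousLinearMap
    { toFun := fun z => (fun i => - ∑ j : Fin m, if k ≤ (j : ℕ) then z (j, i, false) else 0,
        fun i => ∑ j : Fin m, if k = (j : ℕ) then z (j, i, true) else 0)
      map_add' := by
        intro z w
        ext i
        · simp only [PiLp.add_apply, Prod.fst_add, Pi.add_apply]
          rw [← neg_add, ← Finset.sum_add_distrib]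
          congr 1; exact Finset.sum_congr rfl fun j _ => by split_ifs <;> simp
        · simp only [PiLp.add_apply, Prod.snd_add, Pi.add_apply]
          rw [← Finset.sum_add_distrib]
          exact Finset.sum_congr rfl fun j _ => by split_ifs <;> simp
      map_smul' := by
        intro c z
        ext i
        · simp [Finset.mul_sum]
        · simp [Finset.mul_sum] }

lemma polyPt_fst {n m k : ℕ} (z : EuclideanSpace ℝ (Fin m × Fin n × Bool)) (i : Fin n) :
    (polyPt n m k z).1 i = - ∑ j : Fin m, if k ≤ (j : ℕ) then z (j, i, false) else 0 := rfl

lemma polyPt_snd {n m k : ℕ} (z : EuclideanSpace ℝ (Fin m × Fin n × Bool)) (i : Fin n) :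
    (polyPt n m k z).2 i = ∑ j : Fin m, if k = (j : ℕ) then z (j, i, true) else 0 := rfl

/-- The involution exchanging the increments and the momenta; `½⟨Az, z⟩ = ∑ ⟨y_k, v_k⟩`. -/
def swapBool (n m : ℕ) : EuclideanSpace ℝ (Fin m × Fin n × Bool) →L[ℝ]
    EuclideanSpace ℝ (Fin m × Fin n × Bool) :=
  LinearMap.toContinuousLinearMap
    { toFun := fun z => WithLp.toLp 2 fun p => z (p.1, p.2.1, !p.2.2)
      map_add' := by intro z w; ext p; simp
      map_smul' := by intro c z; ext p; simp }

lemma swapBool_apply {n m : ℕ} (z : EuclideanSpace ℝ (Fin m × Fin n × Bool))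
    (p : Fin m × Fin n × Bool) : swapBool n m z p = z (p.1, p.2.1, !p.2.2) := rfl

lemma swapBool_inner {n m : ℕ} (z w : EuclideanSpace ℝ (Fin m × Fin n × Bool)) :
    inner ℝ (swapBool n m z) w
      = ∑ j, ∑ i, (z (j, i, true) * w (j, i, false) + z (j, i, false) * w (j, i, true)) := by
  rw [PiLp.inner_apply]
  simp only [swapBool_apply, RCLike.inner_apply, conj_trivial]
  rw [Fintype.sum_prod_type]
  refine Finset.sum_congr rfl fun j _ => ?_
  rw [Fintype.sum_prod_type]
  refine Finset.sum_congr rfl fun i _ => ?_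
  simp only [Fintype.sum_bool, Bool.not_true, Bool.not_false]
  ring

/-- The discretized action functional has almost critical points with action in the spectral
window given by the extreme values of `G`: these are approximate Euler polygons which start on
`{y = 0}` and end over `q`. -/
lemma discrete_trajectory {n : ℕ} {G : ℝ × E n → ℝ} (hG : ContDiff ℝ (⊤ : ℕ∞) G)
    (hc : HasCompactSupport G) (q : Fin n → ℝ) {m : ℕ} (hm : 0 < m) {δ : ℝ} (hδ : 0 < δ) :
    ∃ x y : ℕ → Fin n → ℝ, x m = q ∧
      (∀ k < m, ‖x (k + 1) - x k - (1 / m : ℝ) • (XH n G (k / m) (x k, y k)).1‖ ≤ δ) ∧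
      (∀ k < m, ‖y k - (1 / m : ℝ) • ∑ j ∈ Finset.range (k + 1),
        (XH n G (j / m) (x j, y j)).2‖ ≤ δ) ∧
      -(1 / m * ∑ k ∈ Finset.range m, sSup (Set.range fun z => G (k / m, z)))
        ≤ ∑ k ∈ Finset.range m, (y k ⬝ᵥ (x (k + 1) - x k) - 1 / m * G (k / m, (x k, y k))) ∧
      ∑ k ∈ Finset.range m, (y k ⬝ᵥ (x (k + 1) - x k) - 1 / m * G (k / m, (x k, y k)))
        ≤ -(1 / m * ∑ k ∈ Finset.range m, sInf (Set.range fun z => G (k / m, z))) := by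
  have hm0 : (0 : ℝ) < m := by exact_mod_cast hm
  have hm1 : (0 : ℝ) ≤ 1 / m := by positivity
  set Z := EuclideanSpace ℝ (Fin m × Fin n × Bool)
  set pt : ℕ → Z → ℝ × E n := fun k z => ((k / m : ℝ), ((q, 0) : E n) + polyPt n m k z) with hpt
  set h : Z → ℝ := fun z => ∑ k ∈ Finset.range m, 1 / m * G (pt k z) with hh
  have hGd : Differentiable ℝ G := hG.differentiable (by simp)
  have hptd : ∀ k z, HasFDerivAt (pt k)
      ((ContinuousLinearMap.inr ℝ ℝ (E n)).comp (polyPt n m k)) z := by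
    intro k z
    have h1 : HasFDerivAt (fun z => ((q, 0) : E n) + polyPt n m k z) (polyPt n m k) z :=
      (polyPt n m k).hasFDerivAt.const_add _
    have h2 := (hasFDerivAt_const ((k / m : ℝ)) z).prodMk h1
    exact h2
  have hptc : ∀ k, ContDiff ℝ (⊤ : ℕ∞) (pt k) := fun k =>
    contDiff_const.prodMk (contDiff_const.add (polyPt n m k).contDiff)
  have hhc : ContDiff ℝ (⊤ : ℕ∞) h :=
    ContDiff.sum fun k _ => contDiff_const.mul (hG.comp (hptc k))
  have hhd : ∀ z, fderiv ℝ h z = ∑ k ∈ Finset.range m, (1 / m : ℝ) •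
      (fderiv ℝ G (pt k z)).comp ((ContinuousLinearMap.inr ℝ ℝ (E n)).comp (polyPt n m k)) := by
    intro z
    apply HasFDerivAt.fderiv
    exact HasFDerivAt.fun_sum fun k _ =>
      (((hGd (pt k z)).hasFDerivAt).comp z (hptd k z)).const_mul _
  have hG1 : ContDiff ℝ (⊤ : ℕ∞) (fderiv ℝ G) := hG.fderiv_right (by simp)
  have hGc1 : HasCompactSupport (fderiv ℝ G) := hc.fderiv ℝ
  obtain ⟨M, hM0, hM⟩ := exists_norm_bound hG1.continuous hGc1
  obtain ⟨K, hK0, hK⟩ := exists_lipschitz_bound (hG1.of_le (by simp)) hGc1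
  have hΛ : ∃ B : ℝ, 0 ≤ B ∧ ∀ k ∈ Finset.range m,
      ‖(ContinuousLinearMap.inr ℝ ℝ (E n)).comp (polyPt n m k)‖ ≤ B ∧ ‖polyPt n m k‖ ≤ B := by
    refine ⟨∑ k ∈ Finset.range m, (‖(ContinuousLinearMap.inr ℝ ℝ (E n)).comp (polyPt n m k)‖
      + ‖polyPt n m k‖), by positivity, fun k hk => ?_⟩
    have := Finset.single_le_sum (f := fun k =>
      (‖(ContinuousLinearMap.inr ℝ ℝ (E n)).comp (polyPt n m k)‖
      + ‖polyPt n m k‖)) (fun i _ => by positivity) hk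
    simp only at this
    constructor <;> linarith [norm_nonneg ((ContinuousLinearMap.inr ℝ ℝ (E n)).comp (polyPt n m k)),
      norm_nonneg (polyPt n m k)]
  obtain ⟨B, hB0, hB⟩ := hΛ
  have hbound : ∀ z, ‖fderiv ℝ h z‖ ≤ ∑ k ∈ Finset.range m, (1 / m : ℝ) * (M * B) := by
    intro z
    rw [hhd]
    refine norm_sum_le_of_le _ fun k hk => ?_
    rw [norm_smul, Real.norm_of_nonneg hm1]
    gcongr
    exact (ContinuousLinearMap.opNorm_comp_le _ _).trans
      (mul_le_mul (hM _) (hB k hk).1 (norm_nonneg _) hM0)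
  have hlip : ∀ z w, ‖fderiv ℝ h z - fderiv ℝ h w‖
      ≤ (∑ k ∈ Finset.range m, (1 / m : ℝ) * (K * B * B)) * ‖z - w‖ := by
    intro z w
    rw [hhd, hhd, ← Finset.sum_sub_distrib, Finset.sum_mul]
    refine norm_sum_le_of_le _ fun k hk => ?_
    rw [← smul_sub, ← ContinuousLinearMap.sub_comp, norm_smul, Real.norm_of_nonneg hm1, mul_assoc]
    gcongr
    refine (ContinuousLinearMap.opNorm_comp_le _ _).trans ?_
    have e1 : ‖pt k z - pt k w‖ ≤ B * ‖z - w‖ := by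
      have : pt k z - pt k w = ((0 : ℝ), polyPt n m k (z - w)) := by
        simp [hpt]
      rw [this]
      have h2 : ‖((0 : ℝ), polyPt n m k (z - w))‖ = ‖polyPt n m k (z - w)‖ := by
        rw [Prod.norm_def]; simp
      rw [h2]
      exact ((polyPt n m k).le_opNorm _).trans
        (mul_le_mul_of_nonneg_right (hB k hk).2 (norm_nonneg _))
    calc _ ≤ (K * ‖pt k z - pt k w‖) * B :=
          mul_le_mul (hK _ _) (hB k hk).1 (norm_nonneg _) (by positivity)
      _ ≤ (K * (B * ‖z - w‖)) * B := by gcongr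
      _ = _ := by ring
  obtain ⟨z, hz, hlo, hhi⟩ := exists_almost_critical (swapBool n m)
    (fun z => by ext p; simp [swapBool_apply])
    (fun z w => by
      rw [real_inner_comm (swapBool n m w) z, swapBool_inner, swapBool_inner]
      refine Finset.sum_congr rfl fun j _ => Finset.sum_congr rfl fun i _ => by ring)
    (contDiff_infty.1 hhc 2) hbound (by positivity) hlip
    (lo := 1 / m * ∑ k ∈ Finset.range m, sInf (Set.range fun z => G (k / m, z)))
    (hi := 1 / m * ∑ k ∈ Finset.range m, sSup (Set.range fun z => G (k / m, z)))
    (fun z => by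
      rw [Finset.mul_sum]
      exact Finset.sum_le_sum fun k _ =>
        mul_le_mul_of_nonneg_left (sInf_le_slice hG.continuous hc _ _) hm1)
    (fun z => by
      rw [Finset.mul_sum]
      exact Finset.sum_le_sum fun k _ =>
        mul_le_mul_of_nonneg_left (slice_le_sSup hG.continuous hc _ _) hm1) hδ
  have hfd : ∀ u, fderiv ℝ h z u = ∑ k ∈ Finset.range m, (1 / m : ℝ) *
      fderiv ℝ G (pt k z) (0, polyPt n m k u) := by
    intro u
    rw [hhd, sum_apply]
    rfl
  set x : ℕ → Fin n → ℝ := fun k => q + (polyPt n m k z).1 with hx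
  set y : ℕ → Fin n → ℝ := fun k => (polyPt n m k z).2 with hy
  have hptz : ∀ k, pt k z = ((k / m : ℝ), (x k, y k)) := by
    intro k; simp only [hpt, hx, hy]; congr 1; ext i <;> simp
  have hxm : x m = q := by
    ext i
    simp only [hx, Pi.add_apply, polyPt_fst]
    rw [Finset.sum_eq_zero]
    · simp
    · intro j _; rw [if_neg (by have := j.2; omega)]
  have hv : ∀ (k : Fin m) i, x (k + 1) i - x k i = z (k, i, false) := by
    intro k i
    simp only [hx, Pi.add_apply, polyPt_fst]
    rw [add_sub_add_left_eq_sub, neg_sub_neg, ← Finset.sum_sub_distrib,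
      Finset.sum_eq_single k]
    · simp
    · intro j _ hj
      have : (j : ℕ) ≠ k := fun h => hj (Fin.ext h)
      by_cases h1 : (k : ℕ) ≤ j
      · rw [if_pos h1, if_pos (by omega)]; simp
      · rw [if_neg h1, if_neg (by omega)]; simp
    · simp
  have hyk : ∀ (k : Fin m) i, y k i = z (k, i, true) := by
    intro k i
    simp only [hy, polyPt_snd]
    rw [Finset.sum_eq_single k]
    · simp
    · intro j _ hj
      rw [if_neg fun h => hj (Fin.ext h.symm)]
    · simp
  have hact : 1 / 2 * inner ℝ (swapBool n m z) z - h z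
      = ∑ k ∈ Finset.range m, (y k ⬝ᵥ (x (k + 1) - x k) - 1 / m * G (k / m, (x k, y k))) := by
    rw [Finset.sum_sub_distrib]
    congr 1
    · rw [swapBool_inner, Finset.sum_range fun k => y k ⬝ᵥ (x (k + 1) - x k), Finset.mul_sum]
      refine Finset.sum_congr rfl fun k _ => ?_
      unfold dotProduct
      rw [Finset.mul_sum]
      refine Finset.sum_congr rfl fun i _ => ?_
      rw [Pi.sub_apply, hv, hyk]; ring
    · exact Finset.sum_congr rfl fun k _ => by rw [hptz]
  refine ⟨x, y, hxm, ?_, ?_, ?_, ?_⟩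
  · intro k hk
    refine (pi_norm_le_iff_of_nonneg hδ.le).2 fun i => ?_
    have h1 := hz (EuclideanSpace.single (⟨k, hk⟩, i, true) 1)
    rw [EuclideanSpace.inner_single_right, hfd, PiLp.norm_single,
      Finset.sum_eq_single k] at h1
    · have e1 : polyPt n m k (EuclideanSpace.single (⟨k, hk⟩, i, true) 1)
          = ((0, Pi.single i 1) : E n) := by
        ext l
        · rw [polyPt_fst]; simp
        · rw [polyPt_snd, Finset.sum_eq_single ⟨k, hk⟩]
          · simp [Pi.single_apply]
          · intro j _ hj
            rw [if_neg fun h => hj (Fin.ext h.symm)]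
          · simp
      rw [e1, hptz, ← fderiv_slice hG, swapBool_apply] at h1
      have := hv ⟨k, hk⟩ i
      simp only [Pi.sub_apply, Pi.smul_apply, smul_eq_mul, Real.norm_eq_abs] at this ⊢
      rw [this]
      simpa [XH] using h1
    · intro b hb hbk
      have e1 : polyPt n m b (EuclideanSpace.single (⟨k, hk⟩, i, true) 1) = 0 := by
        ext l
        · rw [polyPt_fst]; simp
        · rw [polyPt_snd, Finset.sum_eq_zero]
          · rfl
          · intro j _
            split_ifs with hbj
            · have : j ≠ ⟨k, hk⟩ := by rintro rfl; exact hbk hbj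
              simp [this]
            · rfl
      rw [e1, Prod.mk_zero_zero, map_zero, mul_zero]
    · intro hk'; exact absurd (Finset.mem_range.2 hk) hk'
  · intro k hk
    refine (pi_norm_le_iff_of_nonneg hδ.le).2 fun i => ?_
    have h1 := hz (EuclideanSpace.single (⟨k, hk⟩, i, false) 1)
    rw [EuclideanSpace.inner_single_right, hfd, PiLp.norm_single] at h1
    have e2 : ∑ b ∈ Finset.range m, (1 / m : ℝ) * fderiv ℝ G (pt b z)
        (0, polyPt n m b (EuclideanSpace.single (⟨k, hk⟩, i, false) 1))
        = ∑ b ∈ Finset.range (k + 1), (1 / m : ℝ) * (XH n G (b / m) (x b, y b)).2 i := by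
      symm
      refine Finset.sum_subset_zero_on_sdiff (Finset.range_subset_range.2 (by omega)) ?_ ?_
      · intro b hb
        rw [Finset.mem_sdiff, Finset.mem_range, Finset.mem_range] at hb
        have e1 : polyPt n m b (EuclideanSpace.single (⟨k, hk⟩, i, false) 1) = 0 := by
          ext l
          · rw [polyPt_fst, Finset.sum_eq_zero]
            · simp
            · intro j _
              split_ifs with hbj
              · have : j ≠ ⟨k, hk⟩ := by rintro rfl; simp only at hbj; omega
                simp [this]
              · rfl
          · rw [polyPt_snd]; simp
        rw [e1, Prod.mk_zero_zero, map_zero, mul_zero]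
      · intro b hb
        rw [Finset.mem_range] at hb
        have e1 : polyPt n m b (EuclideanSpace.single (⟨k, hk⟩, i, false) 1)
            = -((Pi.single i 1, 0) : E n) := by
          ext l
          · rw [polyPt_fst, Finset.sum_eq_single ⟨k, hk⟩]
            · rw [if_pos (by simp only; omega)]
              simp [Pi.single_apply]
            · intro j _ hj
              split_ifs <;> simp [hj]
            · simp
          · rw [polyPt_snd]; simp
        rw [e1, hptz, ← fderiv_slice hG, map_neg]
        rfl
    rw [e2, swapBool_apply] at h1
    have := hyk ⟨k, hk⟩ i
    simp only [Pi.sub_apply, Pi.smul_apply, smul_eq_mul, Real.norm_eq_abs,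
      Finset.sum_apply] at this ⊢
    rw [this, Finset.mul_sum]
    simpa using h1
  · rw [← hact]; exact hlo
  · rw [← hact]; exact hhi

/-! ### Convergence of Euler polygons -/

lemma le_pow_of_le_sum {d : ℕ → ℝ} {C a : ℝ} (ha : 0 ≤ a) {m : ℕ}
    (h : ∀ k ≤ m, d k ≤ C + a * ∑ j ∈ Finset.range k, d j) :
    ∀ k ≤ m, d k ≤ C * (1 + a) ^ k := by
  intro k
  induction k using Nat.strong_induction_on with
  | _ k ih =>
    intro hk
    refine (h k hk).trans ?_
    have h1 : ∑ j ∈ Finset.range k, d j ≤ ∑ j ∈ Finset.range k, C * (1 + a) ^ j :=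
      Finset.sum_le_sum fun j hj => by
        rw [Finset.mem_range] at hj
        exact ih j hj (by omega)
    have h2 : a * ∑ j ∈ Finset.range k, (1 + a) ^ j = (1 + a) ^ k - 1 := by
      have := mul_geom_sum (1 + a) k
      rwa [add_sub_cancel_left] at this
    rw [← Finset.mul_sum] at h1
    have h3 := mul_le_mul_of_nonneg_left h1 ha
    have h4 : a * (C * ∑ j ∈ Finset.range k, (1 + a) ^ j) = C * ((1 + a) ^ k - 1) := by
      rw [← h2]; ring
    linarith

/-- Error estimate for approximate Euler polygons of a bounded Lipschitz field. -/
lemma euler_error {X : Type*} [NormedAddCommGroup X] [NormedSpace ℝ X] {F : ℝ → X → X}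
    {K M : ℝ} (hK : 0 ≤ K) (hM : 0 ≤ M)
    (hF : ∀ t s x y, ‖F t x - F s y‖ ≤ K * (|t - s| + ‖x - y‖)) (hFM : ∀ t x, ‖F t x‖ ≤ M)
    {Z : ℝ → X} (hZ : ∀ t, HasDerivAt Z (F t (Z t)) t) {m : ℕ} (hm : 0 < m) {w : ℕ → X} {B : ℝ}
    (hw : ∀ k ≤ m, ‖w k - Z 0 - (1 / m : ℝ) • ∑ j ∈ Finset.range k, F (j / m) (w j)‖ ≤ B) :
    ∀ k ≤ m, ‖w k - Z (k / m)‖ ≤ (B + K * (1 + M) / m) * Real.exp K := by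
  have hm0 : (0 : ℝ) < m := by exact_mod_cast hm
  have hLip : ∀ s t, ‖Z s - Z t‖ ≤ M * |s - t| := by
    intro s t
    have := Convex.norm_image_sub_le_of_norm_hasDerivWithin_le (s := Set.univ) (f := Z)
      (fun x _ => (hZ x).hasDerivWithinAt) (fun x _ => hFM x (Z x)) convex_univ
      (Set.mem_univ t) (Set.mem_univ s)
    rwa [Real.norm_eq_abs] at this
  have hstep : ∀ j : ℕ, ‖Z ((j + 1 : ℕ) / m) - Z (j / m) - (1 / m : ℝ) • F (j / m) (Z (j / m))‖
      ≤ K * (1 + M) / m * (1 / m) := by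
    intro j
    set a : ℝ := j / m
    have e1 : ((j + 1 : ℕ) / m : ℝ) = a + 1 / m := by push_cast; simp only [a]; ring
    rw [e1]
    have hd : ∀ t ∈ Set.Icc a (a + 1 / m), HasDerivWithinAt (fun t => Z t - (t - a) • F a (Z a))
        (F t (Z t) - F a (Z a)) (Set.Icc a (a + 1 / m)) t := by
      intro t _
      have h2 : HasDerivAt (fun t : ℝ => (t - a) • F a (Z a)) ((1 : ℝ) • F a (Z a)) t :=
        ((hasDerivAt_id t).sub_const a).smul_const _
      rw [one_smul] at h2
      exact ((hZ t).sub h2).hasDerivWithinAt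
    have hb : ∀ t ∈ Set.Icc a (a + 1 / m), ‖F t (Z t) - F a (Z a)‖ ≤ K * (1 + M) / m := by
      intro t ht
      refine (hF _ _ _ _).trans ?_
      have h1 : |t - a| ≤ 1 / m := by
        rw [abs_of_nonneg (by linarith [ht.1])]; linarith [ht.2]
      calc K * (|t - a| + ‖Z t - Z a‖) ≤ K * (|t - a| + M * |t - a|) := by
            gcongr; exact hLip t a
        _ = K * (1 + M) * |t - a| := by ring
        _ ≤ K * (1 + M) * (1 / m) := by gcongr
        _ = _ := by ring
    have h3 := Convex.norm_image_sub_le_of_norm_hasDerivWithin_le hd hb (convex_Icc _ _)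
      (Set.left_mem_Icc.2 (by simp)) (Set.right_mem_Icc.2 (by simp))
    simp only [sub_self, zero_smul, sub_zero, add_sub_cancel_left] at h3
    rw [Real.norm_of_nonneg (by positivity)] at h3
    rwa [sub_right_comm] at h3
  have hsum : ∀ k ≤ m, ‖Z (k / m) - Z 0 - (1 / m : ℝ) • ∑ j ∈ Finset.range k,
      F (j / m) (Z (j / m))‖ ≤ K * (1 + M) / m := by
    intro k hk
    have e1 : Z (k / m) - Z 0 = ∑ j ∈ Finset.range k, (Z ((j + 1 : ℕ) / m) - Z (j / m)) := by
      rw [Finset.sum_range_sub (fun j : ℕ => Z (j / m))]; simp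
    rw [e1, Finset.smul_sum, ← Finset.sum_sub_distrib]
    refine (norm_sum_le_of_le _ fun j _ => hstep j).trans ?_
    rw [Finset.sum_const, Finset.card_range, nsmul_eq_mul]
    have h1 : (k : ℝ) * (1 / m) ≤ 1 := by
      rw [mul_one_div, div_le_one hm0]; exact_mod_cast hk
    calc (k : ℝ) * (K * (1 + M) / m * (1 / m)) = K * (1 + M) / m * (k * (1 / m)) := by ring
      _ ≤ K * (1 + M) / m * 1 := by gcongr
      _ = _ := mul_one _
  have hrec : ∀ k ≤ m, ‖w k - Z (k / m)‖ ≤ (B + K * (1 + M) / m) +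
      K / m * ∑ j ∈ Finset.range k, ‖w j - Z (j / m)‖ := by
    intro k hk
    have e1 : w k - Z (k / m) = (w k - Z 0 - (1 / m : ℝ) • ∑ j ∈ Finset.range k, F (j / m) (w j))
        - (Z (k / m) - Z 0 - (1 / m : ℝ) • ∑ j ∈ Finset.range k, F (j / m) (Z (j / m)))
        + (1 / m : ℝ) • ∑ j ∈ Finset.range k, (F (j / m) (w j) - F (j / m) (Z (j / m))) := by
      rw [Finset.sum_sub_distrib, smul_sub]; abel
    rw [e1]
    refine (norm_add_le _ _).trans (add_le_add ((norm_sub_le _ _).trans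
      (add_le_add (hw k hk) (hsum k hk))) ?_)
    rw [norm_smul, Real.norm_of_nonneg (by positivity)]
    calc _ ≤ (1 / m : ℝ) * ∑ j ∈ Finset.range k, K * ‖w j - Z (j / m)‖ := by
          gcongr
          refine norm_sum_le_of_le _ fun j _ => ?_
          refine (hF _ _ _ _).trans ?_
          simp
      _ = _ := by rw [← Finset.mul_sum]; ring
  intro k hk
  have hC0 : 0 ≤ B + K * (1 + M) / m := by
    have h1 := (norm_nonneg _).trans (hw 0 (Nat.zero_le _))
    positivity
  refine (le_pow_of_le_sum (by positivity) hrec k hk).trans ?_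
  gcongr
  calc (1 + K / m) ^ k ≤ (1 + K / m) ^ m :=
        pow_le_pow_right₀ (by linarith [show 0 ≤ K / m by positivity]) hk
    _ ≤ (Real.exp (K / m)) ^ m := by
        gcongr
        linarith [Real.add_one_le_exp (K / m)]
    _ = Real.exp K := by
        rw [← Real.exp_nat_mul]; congr 1; field_simp

lemma sSup_slice_lipschitz {n : ℕ} {G : ℝ × E n → ℝ} (hG : Continuous G)
    (hc : HasCompactSupport G) {K : ℝ} (hK : ∀ p q, ‖G p - G q‖ ≤ K * ‖p - q‖) (t s : ℝ) :
    |sSup (Set.range fun z => G (t, z)) - sSup (Set.range fun z => G (s, z))| ≤ K * |t - s| := by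
  have key : ∀ t s : ℝ, sSup (Set.range fun z => G (t, z)) ≤
      sSup (Set.range fun z => G (s, z)) + K * |t - s| := by
    intro t s
    refine csSup_le (Set.range_nonempty _) ?_
    rintro _ ⟨z, rfl⟩
    have h1 := hK (t, z) (s, z)
    have h2 : ‖(t, z) - (s, z)‖ = |t - s| := by
      rw [Prod.mk_sub_mk, sub_self, Prod.norm_mk]; simp
    rw [h2] at h1
    have h3 := slice_le_sSup hG hc s z
    have h4 := (le_abs_self _).trans h1
    simp only at h4 ⊢
    linarith
  rw [abs_le]
  have h1 := key t s
  have h2 := key s t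
  rw [abs_sub_comm] at h2
  constructor <;> linarith

lemma sSup_slice_continuous {n : ℕ} {G : ℝ × E n → ℝ} (hG : ContDiff ℝ (⊤ : ℕ∞) G)
    (hc : HasCompactSupport G) : Continuous fun t => sSup (Set.range fun z => G (t, z)) := by
  obtain ⟨K, hK0, hK⟩ := exists_lipschitz_bound (hG.of_le (by simp)) hc
  refine (LipschitzWith.of_dist_le_mul (K := ⟨K, hK0⟩) fun t s => ?_).continuous
  exact sSup_slice_lipschitz hG.continuous hc hK t s

lemma riemann_sSup {n : ℕ} {G : ℝ × E n → ℝ} (hG : ContDiff ℝ (⊤ : ℕ∞) G)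
    (hc : HasCompactSupport G) : ∃ C : ℝ, 0 ≤ C ∧ ∀ m : ℕ, 0 < m →
      |1 / m * ∑ k ∈ Finset.range m, sSup (Set.range fun z => G (k / m, z))
        - ∫ t in (0:ℝ)..1, sSup (Set.range fun z => G (t, z))| ≤ C / m := by
  obtain ⟨K, hK0, hK⟩ := exists_lipschitz_bound (hG.of_le (by simp)) hc
  obtain ⟨M, hM0, hM⟩ := exists_norm_bound hG.continuous hc
  refine ⟨K * (1 + M) * Real.exp K, by positivity, fun m hm => ?_⟩
  have hm0 : (0 : ℝ) < m := by exact_mod_cast hm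
  have hcont := sSup_slice_continuous hG hc
  have := euler_error (X := ℝ) (F := fun t _ => sSup (Set.range fun z => G (t, z))) hK0 hM0
    (fun t s x y => by
      refine (sSup_slice_lipschitz hG.continuous hc hK t s).trans ?_
      gcongr
      exact le_add_of_nonneg_right (norm_nonneg _))
    (fun t x => by
      rw [Real.norm_eq_abs, abs_le]
      constructor
      · exact (abs_le.1 (hM (t, 0))).1.trans (slice_le_sSup hG.continuous hc t 0)
      · refine csSup_le (Set.range_nonempty _) ?_
        rintro _ ⟨z, rfl⟩
        exact (abs_le.1 (hM (t, z))).2)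
    (Z := fun s => ∫ t in (0:ℝ)..s, sSup (Set.range fun z => G (t, z)))
    (fun t => intervalIntegral.integral_hasDerivAt_right (hcont.intervalIntegrable _ _)
      hcont.stronglyMeasurable.stronglyMeasurableAtFilter hcont.continuousAt)
    hm (w := fun k => 1 / m * ∑ j ∈ Finset.range k, sSup (Set.range fun z => G (j / m, z)))
    (B := 0) (fun k _ => by simp) m le_rfl
  rw [div_self hm0.ne', Real.norm_eq_abs] at this
  refine this.trans (le_of_eq ?_)
  ring

/-- For the Hamiltonian `G`, some trajectory starting on the zero section ends (almost) over any
prescribed base point `q`, with action bounded below by `-∫ sup G`. -/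
lemma exists_trajectory {n : ℕ} {G : ℝ × E n → ℝ} (hG : ContDiff ℝ (⊤ : ℕ∞) G)
    (hc : HasCompactSupport G) {Z : (Fin n → ℝ) → ℝ → E n × ℝ}
    (hZ0 : ∀ x, Z x 0 = ((x, 0), 0))
    (hZ : ∀ x t, HasDerivAt (Z x) (augField n G (t, (Z x t).1)) t) (q : Fin n → ℝ)
    {η : ℝ} (hη : 0 < η) :
    ∃ x, ‖(Z x 1).1.1 - q‖ ≤ η ∧
      -(∫ t in (0:ℝ)..1, sSup (Set.range fun z => G (t, z))) - η ≤ (Z x 1).2 := by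
  obtain ⟨K, hK0, hK⟩ := exists_lipschitz_bound ((augField_contDiff hG).of_le (by simp))
    (augField_hasCompactSupport hG hc)
  obtain ⟨M, hM0, hM⟩ := exists_norm_bound (augField_contDiff hG).continuous
    (augField_hasCompactSupport hG hc)
  obtain ⟨R, hR0, hR⟩ := riemann_sSup hG hc
  have hXM : ∀ t z, ‖XH n G t z‖ ≤ M := fun t z => (norm_fst_le _).trans (hM (t, z))
  have hX1 : ∀ t z, ‖(XH n G t z).1‖ ≤ M := fun t z => (norm_fst_le _).trans (hXM t z)
  have hX2 : ∀ t z, ‖(XH n G t z).2‖ ≤ M := fun t z => (norm_snd_le _).trans (hXM t z)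
  set C : ℝ := ((1 + n) * (1 + M) + K * (1 + M)) * Real.exp K + R with hC
  obtain ⟨m, hmC⟩ := exists_nat_gt (C / η)
  have hC0 : 0 ≤ C := by positivity
  have hm0 : (0 : ℝ) < m := lt_of_le_of_lt (by positivity) hmC
  have hm : 0 < m := by exact_mod_cast hm0
  have hm1 : (1 : ℝ) ≤ m := by exact_mod_cast hm
  have hCm : C / m ≤ η := by
    rw [div_lt_iff₀ hη] at hmC
    rw [div_le_iff₀ hm0]; linarith
  set δ : ℝ := 1 / m * (1 / m) with hδ
  have hδ0 : 0 < δ := by positivity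
  have hδm : δ ≤ 1 / m := by
    rw [hδ]
    have : (1 : ℝ) / m ≤ 1 := by rw [div_le_one hm0]; exact hm1
    exact mul_le_of_le_one_left (by positivity) this
  obtain ⟨x, y, hxm, h1, h2, h3, -⟩ := discrete_trajectory hG hc q hm hδ0
  -- the momentum at the final node is not a variable of the discrete problem
  set y' : ℕ → Fin n → ℝ := fun k => if k < m then y k else
    (1 / m : ℝ) • ∑ j ∈ Finset.range m, (XH n G (j / m) (x j, y j)).2 with hy'
  set b : ℕ → ℝ := fun k => ∑ j ∈ Finset.range k,
    (y j ⬝ᵥ (x (j + 1) - x j) - 1 / m * G (j / m, (x j, y j))) with hb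
  set w : ℕ → E n × ℝ := fun k => ((x k, y' k), b k) with hw
  have hwj : ∀ k ≤ m, ∀ j ∈ Finset.range k, augField n G (j / m, (w j).1)
      = augField n G (j / m, (x j, y j)) := by
    intro k hk j hj
    rw [Finset.mem_range] at hj
    simp only [hw, hy']
    rw [if_pos (by omega)]
  have hyM : ∀ k < m, ‖y k‖ ≤ 1 + M := by
    intro k hk
    have e1 : y k = (y k - (1 / m : ℝ) • ∑ j ∈ Finset.range (k + 1),
        (XH n G (j / m) (x j, y j)).2) + (1 / m : ℝ) • ∑ j ∈ Finset.range (k + 1),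
        (XH n G (j / m) (x j, y j)).2 := by abel
    rw [e1]
    refine (norm_add_le _ _).trans (add_le_add ((h2 k hk).trans ?_) ?_)
    · refine hδm.trans ?_
      rw [div_le_one hm0]; exact hm1
    · rw [norm_smul, Real.norm_of_nonneg (by positivity)]
      have e2 : ‖∑ j ∈ Finset.range (k + 1), (XH n G (j / m) (x j, y j)).2‖ ≤ (k + 1 : ℕ) * M := by
        refine (norm_sum_le_of_le _ fun j _ => hX2 _ _).trans ?_
        simp
      have e3 : ((k + 1 : ℕ) : ℝ) ≤ m := by exact_mod_cast hk
      calc _ ≤ (1 / m : ℝ) * (m * M) := by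
            gcongr
            exact e2.trans (by gcongr)
        _ = M := by field_simp
  have hres : ∀ k ≤ m, ‖w k - Z (x 0) 0 - (1 / m : ℝ) • ∑ j ∈ Finset.range k,
      (fun t (p : E n × ℝ) => augField n G (t, p.1)) (j / m) (w j)‖
      ≤ (1 + n) * (1 + M) / m := by
    intro k hk
    have hkm : (k : ℝ) * δ ≤ 1 / m := by
      rw [hδ, ← mul_assoc]
      refine mul_le_of_le_one_left (by positivity) ?_
      rw [mul_one_div, div_le_one hm0]; exact_mod_cast hk
    rw [Finset.sum_congr rfl (hwj k hk), hZ0]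
    have hn0 : (0:ℝ) ≤ n := Nat.cast_nonneg n
    refine max_le (max_le ?_ ?_) ?_
    · simp only [hw, augField, Prod.fst_sub, Prod.smul_fst, Prod.fst_sum]
      have e1 : x k - x 0 - (1 / m : ℝ) • ∑ j ∈ Finset.range k, (XH n G (j / m) (x j, y j)).1
          = ∑ j ∈ Finset.range k, (x (j + 1) - x j
            - (1 / m : ℝ) • (XH n G (j / m) (x j, y j)).1) := by
        rw [Finset.sum_sub_distrib, Finset.sum_range_sub, Finset.smul_sum]
      rw [e1]
      refine (norm_sum_le_of_le _ fun j hj => h1 j ?_).trans ?_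
      · rw [Finset.mem_range] at hj; omega
      · rw [Finset.sum_const, Finset.card_range, nsmul_eq_mul]
        refine hkm.trans ?_
        gcongr
        nlinarith
    · simp only [hw, augField, Prod.snd_sub, Prod.fst_sub, Prod.smul_fst, Prod.smul_snd,
        Prod.fst_sum, Prod.snd_sum, sub_zero]
      rcases hk.lt_or_eq with hk' | rfl
      · simp only [hy', if_pos hk']
        have e1 : y k - (1 / m : ℝ) • ∑ j ∈ Finset.range k, (XH n G (j / m) (x j, y j)).2
            = (y k - (1 / m : ℝ) • ∑ j ∈ Finset.range (k + 1), (XH n G (j / m) (x j, y j)).2)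
              + (1 / m : ℝ) • (XH n G (k / m) (x k, y k)).2 := by
          rw [Finset.sum_range_succ, smul_add]; abel
        rw [e1]
        refine (norm_add_le _ _).trans ((add_le_add ((h2 k hk').trans hδm) ?_).trans
          (b := 1 / (m : ℝ) + 1 / m * M) ?_)
        · rw [norm_smul, Real.norm_of_nonneg (by positivity)]
          gcongr
          exact hX2 _ _
        · rw [← mul_one_add, one_div_mul_eq_div]
          gcongr
          nlinarith
      · simp only [hy', lt_irrefl, if_false, sub_self, norm_zero]
        positivity
    · simp only [hw, augField, Prod.snd_sub, Prod.smul_snd, Prod.snd_sum, sub_zero]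
      have e1 : b k - (1 / m : ℝ) • ∑ j ∈ Finset.range k,
          (y j ⬝ᵥ (XH n G (j / m) (x j, y j)).1 - G (j / m, (x j, y j)))
          = ∑ j ∈ Finset.range k, y j ⬝ᵥ (x (j + 1) - x j
            - (1 / m : ℝ) • (XH n G (j / m) (x j, y j)).1) := by
        rw [hb, Finset.smul_sum, ← Finset.sum_sub_distrib]
        refine Finset.sum_congr rfl fun j _ => ?_
        rw [dotProduct_sub (y j) (x (j + 1) - x j), dotProduct_smul]
        simp only [smul_eq_mul]; ring
      rw [e1]
      have e2 : ∀ j ∈ Finset.range k, ‖y j ⬝ᵥ (x (j + 1) - x j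
            - (1 / m : ℝ) • (XH n G (j / m) (x j, y j)).1)‖ ≤ n * ((1 + M) * δ) := by
        intro j hj
        rw [Finset.mem_range] at hj
        refine (abs_dotProduct_le _ _).trans ?_
        gcongr
        · exact hyM j (by omega)
        · exact h1 j (by omega)
      refine (norm_sum_le_of_le _ e2).trans ?_
      rw [Finset.sum_const, Finset.card_range, nsmul_eq_mul]
      calc (k : ℝ) * (n * ((1 + M) * δ)) = n * (1 + M) * (k * δ) := by ring
        _ ≤ n * (1 + M) * (1 / m) := by gcongr
        _ = n * (1 + M) / m := by ring
        _ ≤ _ := by gcongr; linarith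
  have hfin := euler_error (F := fun t (p : E n × ℝ) => augField n G (t, p.1)) hK0 hM0
    (fun t s p q => by
      refine (hK _ _).trans ?_
      gcongr
      rw [Prod.mk_sub_mk, Prod.norm_mk]
      refine max_le (le_add_of_nonneg_right (norm_nonneg _)) ?_
      exact (norm_fst_le (p - q)).trans (le_add_of_nonneg_left (abs_nonneg _)))
    (fun t p => hM _) (hZ (x 0)) hm hres m le_rfl
  rw [div_self hm0.ne'] at hfin
  have hfin' : ‖w m - Z (x 0) 1‖ ≤ (C - R) / m := by
    refine hfin.trans (le_of_eq ?_)
    rw [hC]; ring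
  have hRm := hR m hm
  refine ⟨x 0, ?_, ?_⟩
  · have e1 : ‖(w m - Z (x 0) 1).1.1‖ ≤ (C - R) / m :=
      (norm_fst_le _).trans ((norm_fst_le _).trans hfin')
    simp only [hw, Prod.fst_sub, hxm] at e1
    rw [norm_sub_rev]
    refine e1.trans (le_trans ?_ hCm)
    gcongr; linarith
  · have e1 : ‖(w m - Z (x 0) 1).2‖ ≤ (C - R) / m := (norm_snd_le _).trans hfin'
    have e2 : (C - R) / m + R / m = C / m := by ring
    simp only [hw, Prod.snd_sub, Real.norm_eq_abs] at e1
    have e3 := (abs_le.1 e1).2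
    have e4 := (abs_le.1 hRm).2
    linarith

/-! ### Hamiltonian flows and symplectic changes of coordinates -/

lemma omega0_eq {n : ℕ} (z w : E n) : omega0 n z w = z.1 ⬝ᵥ w.2 - z.2 ⬝ᵥ w.1 := rfl

lemma omega0_nondeg {n : ℕ} {z : E n} (h : ∀ w, omega0 n z w = 0) : z = 0 := by
  ext i
  · have := h (0, Pi.single i 1)
    rw [omega0_eq] at this
    simpa using this
  · have := h (Pi.single i 1, 0)
    rw [omega0_eq] at this
    simpa using this

lemma omega0_sub_left {n : ℕ} (z z' w : E n) :
    omega0 n (z - z') w = omega0 n z w - omega0 n z' w := by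
  simp only [omega0_eq, Prod.fst_sub, Prod.snd_sub, sub_dotProduct]; ring

lemma symplectic_surjective {n : ℕ} {S : E n →L[ℝ] E n}
    (hS : ∀ u v, omega0 n (S u) (S v) = omega0 n u v) : Function.Surjective S := by
  have hinj : Function.Injective S.toLinearMap := by
    rw [← LinearMap.ker_eq_bot, LinearMap.ker_eq_bot']
    intro u hu
    refine omega0_nondeg fun w => ?_
    rw [← hS u w]
    have : S u = 0 := hu
    rw [this]
    simp [omega0_eq]
  exact LinearMap.injective_iff_surjective.1 hinj

/-- Hamiltonian vector fields are natural under maps with symplectic derivative. -/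
lemma XH_comp {n : ℕ} {σ : E n → E n} {z : E n} {S : E n →L[ℝ] E n} (hσ : HasFDerivAt σ S z)
    (hS : ∀ u v, omega0 n (S u) (S v) = omega0 n u v) {K : ℝ × E n → ℝ} {t : ℝ}
    (hK : DifferentiableAt ℝ (fun w => K (t, w)) (σ z)) :
    XH n K t (σ z) = S (XH n (fun p => K (p.1, σ p.2)) t z) := by
  rw [← sub_eq_zero]
  refine omega0_nondeg fun w => ?_
  obtain ⟨v, rfl⟩ := symplectic_surjective hS w
  rw [omega0_sub_left, hS, omega0_XH, omega0_XH]
  have h1 : HasFDerivAt (fun w => K (t, σ w)) _ z := hK.hasFDerivAt.comp z hσ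
  have h2 : fderiv ℝ (fun w => K (t, σ w)) z = _ := h1.fderiv
  change _ - fderiv ℝ (fun w => K (t, σ w)) z v = 0
  rw [h2]
  simp

lemma slice_differentiable {n : ℕ} {H : ℝ × E n → ℝ} (hH : ContDiff ℝ (⊤ : ℕ∞) H) (t : ℝ) :
    Differentiable ℝ (fun w => H (t, w)) := by
  have h1 : Differentiable ℝ H := hH.differentiable (by simp)
  exact h1.comp (by fun_prop)

lemma XH_lipschitz {n : ℕ} {H : ℝ × E n → ℝ} (hH : ContDiff ℝ (⊤ : ℕ∞) H)
    (hc : HasCompactSupport H) : ∃ K : NNReal, ∀ t, LipschitzWith K (XH n H t) := by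
  obtain ⟨K, hK0, hK⟩ := exists_lipschitz_bound ((XH_contDiff hH).of_le (by simp))
    (XH_hasCompactSupport hH hc)
  refine ⟨⟨K, hK0⟩, fun t => LipschitzWith.of_dist_le_mul fun z w => ?_⟩
  rw [dist_eq_norm, dist_eq_norm]
  refine (hK (t, z) (t, w)).trans (le_of_eq ?_)
  congr 1
  rw [Prod.mk_sub_mk, sub_self, Prod.norm_mk]; simp

lemma ham_unique {n : ℕ} {H : ℝ × E n → ℝ} (hH : ContDiff ℝ (⊤ : ℕ∞) H)
    (hc : HasCompactSupport H) {f g : ℝ → E n} (hf : ∀ t, HasDerivAt f (XH n H t (f t)) t)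
    (hg : ∀ t, HasDerivAt g (XH n H t (g t)) t) {t₀ : ℝ} (h : f t₀ = g t₀) : f = g := by
  obtain ⟨K, hK⟩ := XH_lipschitz hH hc
  exact ODE_solution_unique_univ (s := fun _ => Set.univ) (fun t => (hK t).lipschitzOnWith)
    (fun t => ⟨hf t, trivial⟩) (fun t => ⟨hg t, trivial⟩) h

lemma flow_injective {n : ℕ} {H : ℝ × E n → ℝ} (hH : ContDiff ℝ (⊤ : ℕ∞) H)
    (hc : HasCompactSupport H) {Φ : ℝ → E n → E n} (hΦ : IsHamFlow n H Φ) (t : ℝ) :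
    Function.Injective (Φ t) := by
  intro z w h
  have := congrFun (ham_unique hH hc (hΦ.2 z) (hΦ.2 w) h) 0
  simpa only [hΦ.1] using this

lemma flow_surjective {n : ℕ} {H : ℝ × E n → ℝ} (hH : ContDiff ℝ (⊤ : ℕ∞) H)
    (hc : HasCompactSupport H) {Φ : ℝ → E n → E n} (hΦ : IsHamFlow n H Φ) :
    Function.Surjective (Φ 1) := by
  intro p
  obtain ⟨K, hK⟩ := XH_lipschitz hH hc
  obtain ⟨M, hM0, hM⟩ := exists_norm_bound (XH_contDiff hH).continuous (XH_hasCompactSupport hH hc)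
  have hP : IsPicardLindelof (XH n H) (tmin := -1) (tmax := 2) ⟨1, by norm_num⟩ p
      (2 * ⟨M, hM0⟩) 0 ⟨M, hM0⟩ K :=
    { lipschitzOnWith := fun t _ => (hK t).lipschitzOnWith
      continuousOn := fun x _ => by
        have h1 : Continuous fun t : ℝ => XH n H t x :=
          (XH_contDiff hH).continuous.comp (f := fun t : ℝ => (t, x)) (by fun_prop)
        exact h1.continuousOn
      norm_le := fun t _ x _ => hM (t, x)
      mul_max_le := by
        have : max ((2:ℝ) - 1) (1 - -1) = 2 := by norm_num
        simp only [this, NNReal.coe_zero, sub_zero]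
        change M * 2 ≤ 2 * M
        linarith }
  obtain ⟨α, hα1, hα⟩ := hP.exists_eq_forall_mem_Icc_hasDerivWithinAt₀
  have hα' : ∀ t ∈ Set.Ioo (-1 : ℝ) 2, HasDerivAt α (XH n H t (α t)) t := fun t ht =>
    (hα t ⟨ht.1.le, ht.2.le⟩).hasDerivAt (Icc_mem_nhds ht.1 ht.2)
  have := ODE_solution_unique_of_mem_Ioo (s := fun _ => Set.univ) (a := -1) (b := 2) (t₀ := 0)
    (v := XH n H) (fun t _ => (hK t).lipschitzOnWith) (by norm_num)
    (fun t ht => ⟨hα' t ht, trivial⟩) (g := fun t => Φ t (α 0))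
    (fun t _ => ⟨hΦ.2 (α 0) t, trivial⟩) (hΦ.1 (α 0)).symm
  refine ⟨α 0, ?_⟩
  have h1 := this (show (1 : ℝ) ∈ Set.Ioo (-1 : ℝ) 2 by norm_num)
  rw [← hα1]
  exact h1.symm

lemma XH_eq_zero_of_nonpos {n : ℕ} {H : ℝ × E n → ℝ} (hH : ContDiff ℝ (⊤ : ℕ∞) H)
    (ht : tsupport H ⊆ Set.Icc (0 : ℝ) 1 ×ˢ Set.univ) {t : ℝ} (h : t ≤ 0) (z : E n) :
    XH n H t z = 0 := by
  have hcont : Continuous fun t : ℝ => XH n H t z :=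
    (XH_contDiff hH).continuous.comp (f := fun t : ℝ => (t, z)) (by fun_prop)
  have hcl : IsClosed {t : ℝ | XH n H t z = 0} := isClosed_eq hcont continuous_const
  have hsub : Set.Iio (0 : ℝ) ⊆ {t : ℝ | XH n H t z = 0} := by
    intro s hs
    refine XH_eq_zero hH fun h => ?_
    have := (ht h).1.1
    simp only at this
    exact absurd hs (not_lt.2 this)
  have := hcl.closure_subset_iff.2 hsub
  rw [closure_Iio] at this
  exact this h

lemma slice_eq_zero_of_nonpos {n : ℕ} {H : ℝ × E n → ℝ} (hH : Continuous H)
    (ht : tsupport H ⊆ Set.Icc (0 : ℝ) 1 ×ˢ Set.univ) {t : ℝ} (h : t ≤ 0) (z : E n) :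
    H (t, z) = 0 := by
  have hcont : Continuous fun t : ℝ => H (t, z) := hH.comp (by fun_prop)
  have hcl : IsClosed {t : ℝ | H (t, z) = 0} := isClosed_eq hcont continuous_const
  have hsub : Set.Iio (0 : ℝ) ⊆ {t : ℝ | H (t, z) = 0} := by
    intro s hs
    refine image_eq_zero_of_notMem_tsupport fun h => ?_
    have := (ht h).1.1
    simp only at this
    exact absurd hs (not_lt.2 this)
  have := hcl.closure_subset_iff.2 hsub
  rw [closure_Iio] at this
  exact this h

lemma flow_of_nonpos {n : ℕ} {H : ℝ × E n → ℝ} (hH : ContDiff ℝ (⊤ : ℕ∞) H)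
    (ht : tsupport H ⊆ Set.Icc (0 : ℝ) 1 ×ˢ Set.univ) {Φ : ℝ → E n → E n}
    (hΦ : IsHamFlow n H Φ) {t : ℝ} (h : t ≤ 0) (z : E n) : Φ t z = z := by
  have := Convex.norm_image_sub_le_of_norm_hasDerivWithin_le (s := Set.Iic (0 : ℝ))
    (f := fun s => Φ s z) (C := 0)
    (fun x _ => (hΦ.2 z x).hasDerivWithinAt)
    (fun x hx => by rw [XH_eq_zero_of_nonpos hH ht hx]; simp) (convex_Iic 0)
    (Set.self_mem_Iic) (show t ∈ Set.Iic (0 : ℝ) from h)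
  rw [zero_mul, norm_le_zero_iff, sub_eq_zero, hΦ.1] at this
  exact this

lemma flow_fixed {n : ℕ} {H : ℝ × E n → ℝ} (hH : ContDiff ℝ (⊤ : ℕ∞) H)
    (hc : HasCompactSupport H) {Φ : ℝ → E n → E n}
    (hΦ : IsHamFlow n H Φ) {z : E n} (hz : ∀ t, (t, z) ∉ tsupport H) (t : ℝ) : Φ t z = z := by
  have := ham_unique hH hc (hΦ.2 z) (g := fun _ => z) (t₀ := 0)
    (fun t => by rw [XH_eq_zero hH (hz t)]; exact hasDerivAt_const t z) (hΦ.1 z)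
  exact congrFun this t

/-! ### Compactly supported rotations -/

/-- `|z|²` for the Euclidean norm of `E`. -/
def nsq (n : ℕ) (z : E n) : ℝ := z.1 ⬝ᵥ z.1 + z.2 ⬝ᵥ z.2

/-- Rotation of `z = x + iy` by the angle `θ(|z|²)`: the time-one map of the Hamiltonian flow of
a function of `|z|²`. -/
def rot (n : ℕ) (θ : ℝ → ℝ) (z : E n) : E n :=
  (Real.cos (θ (nsq n z)) • z.1 - Real.sin (θ (nsq n z)) • z.2,
   Real.sin (θ (nsq n z)) • z.1 + Real.cos (θ (nsq n z)) • z.2)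

lemma nsq_rot {n : ℕ} (θ : ℝ → ℝ) (z : E n) : nsq n (rot n θ z) = nsq n z := by
  simp only [rot]
  set c := Real.cos (θ (nsq n z))
  set s := Real.sin (θ (nsq n z))
  have hcs : s ^ 2 + c ^ 2 = 1 := Real.sin_sq_add_cos_sq _
  simp only [nsq, sub_dotProduct, dotProduct_sub, add_dotProduct, dotProduct_add,
    smul_dotProduct, dotProduct_smul, smul_eq_mul]
  linear_combination (z.1 ⬝ᵥ z.1 + z.2 ⬝ᵥ z.2) * hcs

lemma rot_neg_rot {n : ℕ} (θ : ℝ → ℝ) (z : E n) : rot n (-θ) (rot n θ z) = z := by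
  have h := nsq_rot θ z
  unfold rot at h ⊢
  rw [h]
  simp only [Pi.neg_apply, Real.cos_neg, Real.sin_neg]
  have hcs := Real.sin_sq_add_cos_sq (θ (nsq n z))
  ext i
  · simp only [Pi.sub_apply, Pi.smul_apply, Pi.add_apply, smul_eq_mul]
    linear_combination z.1 i * hcs
  · simp only [Pi.sub_apply, Pi.smul_apply, Pi.add_apply, smul_eq_mul]
    linear_combination z.2 i * hcs

lemma rot_rot_neg {n : ℕ} (θ : ℝ → ℝ) (z : E n) : rot n θ (rot n (-θ) z) = z := by
  have := rot_neg_rot (-θ) z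
  rwa [neg_neg] at this

lemma nsq_contDiff (n : ℕ) : ContDiff ℝ (⊤ : ℕ∞) (nsq n) := by
  unfold nsq dotProduct
  fun_prop

lemma rot_contDiff {n : ℕ} {θ : ℝ → ℝ} (hθ : ContDiff ℝ (⊤ : ℕ∞) θ) :
    ContDiff ℝ (⊤ : ℕ∞) (rot n θ) := by
  have h1 : ContDiff ℝ (⊤ : ℕ∞) (fun z => θ (nsq n z)) := hθ.comp (nsq_contDiff n)
  have h2 := Real.contDiff_cos.comp h1
  have h3 := Real.contDiff_sin.comp h1
  exact ((h2.smul contDiff_fst).sub (h3.smul contDiff_snd)).prodMk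
    ((h3.smul contDiff_fst).add (h2.smul contDiff_snd))

lemma hasFDerivAt_nsq {n : ℕ} (z : E n) : ∃ D : E n →L[ℝ] ℝ, HasFDerivAt (nsq n) D z ∧
    ∀ v, D v = 2 * (z.1 ⬝ᵥ v.1 + z.2 ⬝ᵥ v.2) := by
  have hd : DifferentiableAt ℝ (nsq n) z :=
    ((nsq_contDiff n).differentiable (by simp)).differentiableAt
  refine ⟨fderiv ℝ (nsq n) z, hd.hasFDerivAt, fun v => ?_⟩
  have h1 : HasDerivAt (fun s : ℝ => nsq n (z + s • v)) (fderiv ℝ (nsq n) z v) 0 := by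
    have := hd.hasFDerivAt.hasLineDerivAt v
    exact this
  have h2 : (fun s : ℝ => nsq n (z + s • v)) = fun s : ℝ =>
      nsq n z + s * (2 * (z.1 ⬝ᵥ v.1 + z.2 ⬝ᵥ v.2)) + s ^ 2 * nsq n v := by
    funext s
    simp only [nsq, Prod.fst_add, Prod.snd_add, Prod.smul_fst, Prod.smul_snd, add_dotProduct,
      dotProduct_add, smul_dotProduct, dotProduct_smul, smul_eq_mul,
      dotProduct_comm v.1 z.1, dotProduct_comm v.2 z.2]
    ring
  rw [h2] at h1
  have h3 : HasDerivAt (fun s : ℝ =>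
      nsq n z + s * (2 * (z.1 ⬝ᵥ v.1 + z.2 ⬝ᵥ v.2)) + s ^ 2 * nsq n v)
      (1 * (2 * (z.1 ⬝ᵥ v.1 + z.2 ⬝ᵥ v.2)) + (2 * (0:ℝ) ^ 1 * 1) * nsq n v) 0 := by
    refine HasDerivAt.add ?_ ?_
    · exact ((hasDerivAt_id (0:ℝ)).mul_const _).const_add _
    · exact ((hasDerivAt_id (0:ℝ)).pow 2).mul_const _
  have := h1.unique h3
  rw [this]; ring

lemma rot_symplectic {n : ℕ} {θ : ℝ → ℝ} (hθ : ContDiff ℝ (⊤ : ℕ∞) θ) (z : E n) :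
    ∃ S : E n →L[ℝ] E n, HasFDerivAt (rot n θ) S z ∧
      ∀ u v, omega0 n (S u) (S v) = omega0 n u v := by
  obtain ⟨D, hD, hDv⟩ := hasFDerivAt_nsq z
  have h0 : HasDerivAt θ (deriv θ (nsq n z)) (nsq n z) :=
    ((hθ.differentiable (by simp)).differentiableAt).hasDerivAt
  have h1 : HasFDerivAt (fun z => θ (nsq n z)) (deriv θ (nsq n z) • D) z :=
    h0.comp_hasFDerivAt z hD
  have hcos := h1.cos
  have hsin := h1.sin
  have hx : HasFDerivAt (fun z : E n => z.1) (ContinuousLinearMap.fst ℝ _ _) z := hasFDerivAt_fst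
  have hy : HasFDerivAt (fun z : E n => z.2) (ContinuousLinearMap.snd ℝ _ _) z := hasFDerivAt_snd
  have hS : HasFDerivAt (rot n θ) _ z :=
    ((hcos.smul hx).sub (hsin.smul hy)).prodMk ((hsin.smul hx).add (hcos.smul hy))
  refine ⟨_, hS, fun u v => ?_⟩
  have hcs := Real.sin_sq_add_cos_sq (θ (nsq n z))
  simp only [omega0_eq, ContinuousLinearMap.prod_apply, add_apply,
    sub_apply, smul_apply,
    ContinuousLinearMap.smulRight_apply, ContinuousLinearMap.coe_fst',
    ContinuousLinearMap.coe_snd', hDv, sub_dotProduct, dotProduct_sub, add_dotProduct,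
    dotProduct_add, smul_dotProduct, dotProduct_smul, smul_eq_mul]
  simp only [dotProduct_comm u.1 z.1, dotProduct_comm u.1 z.2, dotProduct_comm u.2 z.1,
    dotProduct_comm u.2 z.2, dotProduct_comm z.2 z.1, dotProduct_comm u.2 v.1]
  generalize deriv θ (nsq n z) = d
  generalize Real.cos (θ (nsq n z)) = c at *
  generalize Real.sin (θ (nsq n z)) = s at *
  generalize z.1 ⬝ᵥ u.1 = a1
  generalize z.1 ⬝ᵥ u.2 = a2
  generalize z.2 ⬝ᵥ u.1 = a3
  generalize z.2 ⬝ᵥ u.2 = a4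
  generalize z.1 ⬝ᵥ v.1 = b1
  generalize z.1 ⬝ᵥ v.2 = b2
  generalize z.2 ⬝ᵥ v.1 = b3
  generalize z.2 ⬝ᵥ v.2 = b4
  generalize z.1 ⬝ᵥ z.1 = e1
  generalize z.1 ⬝ᵥ z.2 = e2
  generalize z.2 ⬝ᵥ z.2 = e3
  linear_combination (u.1 ⬝ᵥ v.2 - v.1 ⬝ᵥ u.2) * hcs

/-- `rot` as a homeomorphism. -/
def rotHomeo (n : ℕ) {θ : ℝ → ℝ} (hθ : ContDiff ℝ (⊤ : ℕ∞) θ) : E n ≃ₜ E n where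
  toFun := rot n θ
  invFun := rot n (-θ)
  left_inv := rot_neg_rot θ
  right_inv := rot_rot_neg θ
  continuous_toFun := (rot_contDiff hθ).continuous
  continuous_invFun := (rot_contDiff hθ.neg).continuous

/-! ### Variation of the action -/

/-- Along trajectories issuing from the zero section, the endpoint action `a`, position `X` and
momentum `Y` satisfy `da = Y · dX`, in the form of a uniform quadratic estimate. -/
lemma action_variation {n : ℕ} {G : ℝ × E n → ℝ} (hG : ContDiff ℝ (⊤ : ℕ∞) G)
    (hc : HasCompactSupport G) {Z : (Fin n → ℝ) → ℝ → E n × ℝ}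
    (hZ0 : ∀ x, Z x 0 = ((x, 0), 0))
    (hZ : ∀ x t, HasDerivAt (Z x) (augField n G (t, (Z x t).1)) t) :
    ∃ C : ℝ, 0 ≤ C ∧ ∀ x x', |(Z x' 1).2 - (Z x 1).2
      - (Z x 1).1.2 ⬝ᵥ ((Z x' 1).1.1 - (Z x 1).1.1)| ≤ C * ‖x' - x‖ ^ 2 := by
  obtain ⟨K, hK⟩ := XH_lipschitz hG hc
  have hG1 : ContDiff ℝ (⊤ : ℕ∞) (fderiv ℝ G) := hG.fderiv_right (by simp)
  obtain ⟨K2, hK20, hK2⟩ := exists_lipschitz_bound (hG1.of_le (by simp)) (hc.fderiv ℝ)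
  set R : ℝ := Real.exp K with hR
  refine ⟨(n * K + K2) * R ^ 2, by positivity, fun x x' => ?_⟩
  have hz : ∀ x t, HasDerivAt (fun t => (Z x t).1) (XH n G t (Z x t).1) t := fun x t =>
    (hZ x t).fst
  have ha : ∀ x t, HasDerivAt (fun t => (Z x t).2)
    ((Z x t).1.2 ⬝ᵥ (XH n G t (Z x t).1).1 - G (t, (Z x t).1)) t := fun x t => (hZ x t).snd
  have hD : ∀ t ∈ Set.Icc (0:ℝ) 1, ‖(Z x' t).1 - (Z x t).1‖ ≤ ‖x' - x‖ * R := by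
    intro t ht
    have := dist_le_of_trajectories_ODE (v := XH n G) (a := 0) (b := 1) (δ := ‖x' - x‖) hK
      (f := fun t => (Z x' t).1) (g := fun t => (Z x t).1)
      (fun t _ => (hz x' t).continuousAt.continuousWithinAt)
      (fun t _ => (hz x' t).hasDerivWithinAt)
      (fun t _ => (hz x t).continuousAt.continuousWithinAt)
      (fun t _ => (hz x t).hasDerivWithinAt)
      (by
        rw [hZ0, hZ0, dist_eq_norm, Prod.mk_sub_mk, sub_zero, Prod.norm_mk]
        simp) t ht
    rw [dist_eq_norm] at this
    refine this.trans ?_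
    rw [hR]
    gcongr
    rw [sub_zero]
    exact mul_le_of_le_one_right K.2 ht.2
  have hdot : ∀ (f g : ℝ → Fin n → ℝ) (f' g' : Fin n → ℝ) (t : ℝ), HasDerivAt f f' t →
      HasDerivAt g g' t → HasDerivAt (fun t => f t ⬝ᵥ g t) (f' ⬝ᵥ g t + f t ⬝ᵥ g') t := by
    intro f g f' g' t hf hg
    unfold dotProduct
    rw [← Finset.sum_add_distrib]
    exact HasDerivAt.fun_sum fun i _ => (hasDerivAt_pi.1 hf i).mul (hasDerivAt_pi.1 hg i)
  have hz1 : ∀ x t, HasDerivAt (fun t => (Z x t).1.1) (XH n G t (Z x t).1).1 t :=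
    fun x t => (hz x t).fst
  have hz2 : ∀ x t, HasDerivAt (fun t => (Z x t).1.2) (XH n G t (Z x t).1).2 t :=
    fun x t => (hz x t).snd
  have hsub : ∀ t, HasDerivAt (fun t => (Z x' t).1.1 - (Z x t).1.1)
      ((XH n G t (Z x' t).1).1 - (XH n G t (Z x t).1).1) t := fun t =>
    (hz1 x' t).fun_sub (hz1 x t)
  have hf : ∀ t, HasDerivAt (fun t => (Z x' t).2 - (Z x t).2
      - (Z x t).1.2 ⬝ᵥ ((Z x' t).1.1 - (Z x t).1.1)) _ t := fun t =>
    ((ha x' t).fun_sub (ha x t)).fun_sub (hdot _ _ _ _ t (hz2 x t) (hsub t))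
  have hb := Convex.norm_image_sub_le_of_norm_hasDerivWithin_le
    (s := Set.Icc (0:ℝ) 1) (C := (n * K + K2) * R ^ 2 * ‖x' - x‖ ^ 2)
    (fun t _ => (hf t).hasDerivWithinAt) ?_ (convex_Icc 0 1)
    (Set.left_mem_Icc.2 zero_le_one) (Set.right_mem_Icc.2 zero_le_one)
  · simp only [hZ0, zero_dotProduct, sub_zero, norm_one, mul_one, Real.norm_eq_abs] at hb
    exact hb
  · intro t ht
    have hDt := hD t ht
    set z := (Z x t).1 with hzdef
    set z' := (Z x' t).1 with hz'def
    have hT : ‖G (t, z') - G (t, z) - fderiv ℝ G (t, z) ((t, z') - (t, z))‖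
        ≤ (K2 * ‖z' - z‖) * ‖(t, z') - (t, z)‖ := by
      have e0 : ‖(t, z') - (t, z)‖ = ‖z' - z‖ := by
        rw [Prod.mk_sub_mk, sub_self, Prod.norm_mk]; simp
      refine Convex.norm_image_sub_le_of_norm_fderiv_le' (s := Metric.closedBall (t, z) ‖z' - z‖)
        (fun p _ => (hG.differentiable (by simp)).differentiableAt)
        (fun p hp => ?_) (convex_closedBall _ _) (Metric.mem_closedBall_self (norm_nonneg _)) ?_
      · refine (hK2 p (t, z)).trans ?_
        gcongr
        rwa [← mem_closedBall_iff_norm]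
      · rw [mem_closedBall_iff_norm, e0]
    have e0 : (t, z') - (t, z) = ((0:ℝ), z' - z) := by rw [Prod.mk_sub_mk, sub_self]
    have e1 : ‖((0:ℝ), z' - z)‖ = ‖z' - z‖ := by rw [Prod.norm_mk]; simp
    rw [e0, e1, ← fderiv_slice hG, ← omega0_XH, omega0_eq] at hT
    have hX : ‖XH n G t z' - XH n G t z‖ ≤ K * ‖z' - z‖ := (hK t).norm_sub_le z' z
    have e2 : z'.2 ⬝ᵥ (XH n G t z').1 - G (t, z') - (z.2 ⬝ᵥ (XH n G t z).1 - G (t, z))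
        - ((XH n G t z).2 ⬝ᵥ (z'.1 - z.1) + z.2 ⬝ᵥ ((XH n G t z').1 - (XH n G t z).1))
        = (z' - z).2 ⬝ᵥ (XH n G t z' - XH n G t z).1 - (G (t, z') - G (t, z)
          - ((XH n G t z).1 ⬝ᵥ (z' - z).2 - (XH n G t z).2 ⬝ᵥ (z' - z).1)) := by
      simp only [Prod.snd_sub, Prod.fst_sub, dotProduct_sub, sub_dotProduct,
        dotProduct_comm (XH n G t z).1]
      ring
    change ‖z'.2 ⬝ᵥ (XH n G t z').1 - G (t, z') - (z.2 ⬝ᵥ (XH n G t z).1 - G (t, z))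
        - ((XH n G t z).2 ⬝ᵥ (z'.1 - z.1) + z.2 ⬝ᵥ ((XH n G t z').1 - (XH n G t z).1))‖ ≤ _
    rw [e2]
    have e3 : ‖(z' - z).2 ⬝ᵥ (XH n G t z' - XH n G t z).1‖ ≤ n * (‖z' - z‖ * (K * ‖z' - z‖)) := by
      refine (abs_dotProduct_le _ _).trans ?_
      gcongr
      · exact norm_snd_le _
      · exact (norm_fst_le _).trans hX
    calc _ ≤ n * (‖z' - z‖ * (K * ‖z' - z‖)) + K2 * ‖z' - z‖ * ‖z' - z‖ :=
          (norm_sub_le _ _).trans (add_le_add e3 hT)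
      _ = (n * K + K2) * ‖z' - z‖ ^ 2 := by ring
      _ ≤ (n * K + K2) * (‖x' - x‖ * R) ^ 2 := by gcongr
      _ = _ := by ring

/-! ### The commutator Hamiltonian -/

/-- The Hamiltonian generating, on `[0, 1/2]`, the reversed flow of `H` and, on `[1/2, 1]`, the
flow of `H` conjugated by the rotation `rot n θ`. If `φ` is the
time-one map of `H` and `R = rot n θ`, its time-one map is the commutator `R φ R⁻¹ φ⁻¹`. -/
def commH (n : ℕ) (H : ℝ × E n → ℝ) (θ : ℝ → ℝ) (p : ℝ × E n) : ℝ :=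
  -2 * H (1 - 2 * p.1, p.2) + 2 * H (2 * p.1 - 1, rot n (-θ) p.2)

lemma commH_contDiff {n : ℕ} {H : ℝ × E n → ℝ} (hH : ContDiff ℝ (⊤ : ℕ∞) H) {θ : ℝ → ℝ}
    (hθ : ContDiff ℝ (⊤ : ℕ∞) θ) : ContDiff ℝ (⊤ : ℕ∞) (commH n H θ) := by
  have h1 : ContDiff ℝ (⊤ : ℕ∞) fun p : ℝ × E n => H (1 - 2 * p.1, p.2) :=
    hH.comp ((contDiff_const.sub (contDiff_const.mul contDiff_fst)).prodMk contDiff_snd)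
  have h2 : ContDiff ℝ (⊤ : ℕ∞) fun p : ℝ × E n => H (2 * p.1 - 1, rot n (-θ) p.2) :=
    hH.comp (((contDiff_const.mul contDiff_fst).sub contDiff_const).prodMk
      ((rot_contDiff hθ.neg).comp contDiff_snd))
  exact (contDiff_const.mul h1).add (contDiff_const.mul h2)

lemma commH_hasCompactSupport {n : ℕ} {H : ℝ × E n → ℝ} (hc : HasCompactSupport H) {θ : ℝ → ℝ}
    (hθ : ContDiff ℝ (⊤ : ℕ∞) θ) : HasCompactSupport (commH n H θ) := by
  let a : ℝ ≃ₜ ℝ :=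
    { toFun := fun t => 1 - 2 * t
      invFun := fun s => (1 - s) / 2
      left_inv := fun t => by ring
      right_inv := fun t => by ring
      continuous_toFun := by fun_prop
      continuous_invFun := by fun_prop }
  let b : ℝ ≃ₜ ℝ :=
    { toFun := fun t => 2 * t - 1
      invFun := fun s => (s + 1) / 2
      left_inv := fun t => by ring
      right_inv := fun t => by ring
      continuous_toFun := by fun_prop
      continuous_invFun := by fun_prop }
  have h1 := hc.comp_homeomorph (a.prodCongr (Homeomorph.refl (E n)))
  have h2 := hc.comp_homeomorph (b.prodCongr (rotHomeo n hθ.neg))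
  exact (h1.smul_left (f := fun _ => (-2 : ℝ))).add (h2.smul_left (f := fun _ => (2 : ℝ)))

lemma XH_rot {n : ℕ} {H : ℝ × E n → ℝ} (hH : ContDiff ℝ (⊤ : ℕ∞) H) {θ : ℝ → ℝ}
    (hθ : ContDiff ℝ (⊤ : ℕ∞) θ) {z : E n} {S : E n →L[ℝ] E n} (hS : HasFDerivAt (rot n θ) S z)
    (hS' : ∀ u v, omega0 n (S u) (S v) = omega0 n u v) (t : ℝ) :
    XH n (fun p => H (p.1, rot n (-θ) p.2)) t (rot n θ z) = S (XH n H t z) := by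
  have hK : ContDiff ℝ (⊤ : ℕ∞) fun p : ℝ × E n => H (p.1, rot n (-θ) p.2) :=
    hH.comp (contDiff_fst.prodMk ((rot_contDiff hθ.neg).comp contDiff_snd))
  have := XH_comp (K := fun p : ℝ × E n => H (p.1, rot n (-θ) p.2)) (t := t) hS hS'
    (slice_differentiable hK t).differentiableAt
  simpa only [rot_neg_rot] using this

lemma XH_commH {n : ℕ} {H : ℝ × E n → ℝ} (hH : ContDiff ℝ (⊤ : ℕ∞) H) {θ : ℝ → ℝ}
    (hθ : ContDiff ℝ (⊤ : ℕ∞) θ) (t : ℝ) (z : E n) :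
    XH n (commH n H θ) t z = (-2 : ℝ) • XH n H (1 - 2 * t) z
      + (2 : ℝ) • XH n (fun p => H (p.1, rot n (-θ) p.2)) (2 * t - 1) z := by
  have hK : ContDiff ℝ (⊤ : ℕ∞) fun p : ℝ × E n => H (p.1, rot n (-θ) p.2) :=
    hH.comp (contDiff_fst.prodMk ((rot_contDiff hθ.neg).comp contDiff_snd))
  have h1 := (slice_differentiable hH (1 - 2 * t) z).hasFDerivAt
  have h2 := (slice_differentiable hK (2 * t - 1) z).hasFDerivAt
  have h3 : HasFDerivAt (fun w => commH n H θ (t, w)) _ z :=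
    (h1.const_mul (-2)).add (h2.const_mul 2)
  unfold XH
  rw [h3.fderiv]
  ext i
  · simp
  · simp; ring

/-- The explicit trajectories of the commutator Hamiltonian: those issuing from the zero section
start at a point `(x, 0) = φ(w)`, and since `φ` displaces the ball `{|z|² < ρ}` from the zero
section, `w` is fixed by the rotation. Hence they end at `rot n θ (x, 0)`. -/
lemma exists_commH_trajectory {n : ℕ} {H : ℝ × E n → ℝ} (hH : ContDiff ℝ (⊤ : ℕ∞) H)
    (hc : HasCompactSupport H) (ht : tsupport H ⊆ Set.Icc (0 : ℝ) 1 ×ˢ Set.univ)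
    {Φ : ℝ → E n → E n} (hΦ : IsHamFlow n H Φ) {θ : ℝ → ℝ} (hθ : ContDiff ℝ (⊤ : ℕ∞) θ) {ρ : ℝ}
    (hθρ : ∀ r, ρ ≤ r → θ r = 0) (hdisp : ∀ z, nsq n z < ρ → (Φ 1 z).2 ≠ 0) :
    ∃ Z : (Fin n → ℝ) → ℝ → E n × ℝ, (∀ x, Z x 0 = ((x, 0), 0)) ∧
      (∀ x t, HasDerivAt (Z x) (augField n (commH n H θ) (t, (Z x t).1)) t) ∧
      (∀ x, (Z x 1).1 = rot n θ (x, 0)) ∧ ∃ R : ℝ, ∀ x, R < ‖x‖ → (Z x 1).2 = 0 := by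
  choose w hw using fun x : Fin n → ℝ => flow_surjective hH hc hΦ (x, 0)
  have hrw : ∀ x, rot n θ (w x) = w x := by
    intro x
    have h1 : ρ ≤ nsq n (w x) := by
      by_contra h
      exact hdisp (w x) (not_le.1 h) (by rw [hw])
    simp [rot, hθρ _ h1]
  set z : (Fin n → ℝ) → ℝ → E n := fun x t =>
    rot n θ (Φ (2 * t - 1) (w x)) + Φ (1 - 2 * t) (w x) - w x with hz
  have hder : ∀ x t, HasDerivAt (z x) (XH n (commH n H θ) t (z x t)) t := by
    intro x t
    have d1 : HasDerivAt (fun t => Φ (2 * t - 1) (w x))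
        ((2 : ℝ) • XH n H (2 * t - 1) (Φ (2 * t - 1) (w x))) t := by
      have h1 : HasDerivAt (fun t : ℝ => 2 * t - 1) 2 t := by
        simpa using ((hasDerivAt_id t).const_mul (2 : ℝ)).sub_const 1
      exact (hΦ.2 (w x) (2 * t - 1)).scomp t h1
    have d2 : HasDerivAt (fun t => Φ (1 - 2 * t) (w x))
        ((-2 : ℝ) • XH n H (1 - 2 * t) (Φ (1 - 2 * t) (w x))) t := by
      have h1 : HasDerivAt (fun t : ℝ => 1 - 2 * t) (-2) t := by
        simpa using ((hasDerivAt_id t).const_mul (2 : ℝ)).const_sub 1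
      exact (hΦ.2 (w x) (1 - 2 * t)).scomp t h1
    obtain ⟨S, hS, hS'⟩ := rot_symplectic hθ (Φ (2 * t - 1) (w x))
    have d3 : HasDerivAt (fun t => rot n θ (Φ (2 * t - 1) (w x)))
        (S ((2 : ℝ) • XH n H (2 * t - 1) (Φ (2 * t - 1) (w x)))) t :=
      HasFDerivAt.comp_hasDerivAt (f := fun t => Φ (2 * t - 1) (w x)) t hS d1
    have d4 : HasDerivAt (z x) (S ((2 : ℝ) • XH n H (2 * t - 1) (Φ (2 * t - 1) (w x)))
        + (-2 : ℝ) • XH n H (1 - 2 * t) (Φ (1 - 2 * t) (w x))) t :=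
      (d3.fun_add d2).sub_const (w x)
    convert d4 using 1
    rw [XH_commH hH hθ, S.map_smul, add_comm]
    rcases le_total (2 * t - 1) 0 with h | h
    · have e1 : z x t = Φ (1 - 2 * t) (w x) := by
        simp only [hz, flow_of_nonpos hH ht hΦ h, hrw]; abel
      obtain ⟨S₁, hS₁, hS₁'⟩ := rot_symplectic hθ (rot n (-θ) (z x t))
      have e2 := XH_rot hH hθ hS₁ hS₁' (2 * t - 1)
      rw [rot_rot_neg, XH_eq_zero_of_nonpos hH ht h, map_zero] at e2
      rw [e2, XH_eq_zero_of_nonpos hH ht h, map_zero, e1]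
    · have h' : 1 - 2 * t ≤ 0 := by linarith
      have e1 : z x t = rot n θ (Φ (2 * t - 1) (w x)) := by
        simp only [hz, flow_of_nonpos hH ht hΦ h']; abel
      rw [XH_eq_zero_of_nonpos hH ht h', XH_eq_zero_of_nonpos hH ht h', e1,
        XH_rot hH hθ hS hS']
  have hzc : ∀ x, Continuous (z x) := fun x =>
    continuous_iff_continuousAt.2 fun t => (hder x t).continuousAt
  set G := commH n H θ with hG
  have hac : ∀ x, Continuous fun s => (augField n G (s, z x s)).2 := fun x =>
    continuous_snd.comp ((augField_contDiff (commH_contDiff hH hθ)).continuous.comp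
      (continuous_id.prodMk (hzc x)))
  refine ⟨fun x t => (z x t, ∫ s in (0:ℝ)..t, (augField n G (s, z x s)).2), ?_, ?_, ?_, ?_⟩
  · intro x
    have e1 : z x 0 = (x, 0) := by
      simp only [hz]
      rw [flow_of_nonpos hH ht hΦ (by norm_num), hrw]
      norm_num [hw]
    simp [e1]
  · intro x t
    exact (hder x t).prodMk ((hac x).integral_hasStrictDerivAt 0 t).hasDerivAt
  · intro x
    simp only [hz]
    rw [flow_of_nonpos hH ht hΦ (t := 1 - 2 * 1) (by norm_num)]
    norm_num [hw]
  · obtain ⟨R, hR⟩ := hc.isCompact.isBounded.subset_closedBall 0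
    refine ⟨R, fun x hx => ?_⟩
    have hout : ∀ t, (t, ((x, 0) : E n)) ∉ tsupport H := by
      intro t h
      have h1 := hR h
      rw [mem_closedBall_zero_iff] at h1
      have h2 : ‖x‖ ≤ ‖(t, ((x, 0) : E n))‖ :=
        (norm_fst_le ((x, 0) : E n)).trans (norm_snd_le (t, ((x, 0) : E n)))
      linarith
    have hfix := flow_fixed hH hc hΦ hout
    have hwx : w x = (x, 0) := flow_injective hH hc hΦ 1 (by rw [hw, hfix])
    have hz' : ∀ t, z x t = (x, 0) := by
      intro t
      have := hrw x
      simp only [hz]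
      rw [hwx] at this ⊢
      rw [hfix, hfix, this]; abel
    have h0 : ∀ s, (augField n G (s, z x s)).2 = 0 := by
      intro s
      rw [hz']
      have e1 : rot n (-θ) ((x, 0) : E n) = (x, 0) := by
        have h1 := hrw x
        rw [hwx] at h1
        conv_lhs => rw [← h1]
        exact rot_neg_rot θ _
      simp only [augField, hG, commH, zero_dotProduct, e1,
        image_eq_zero_of_notMem_tsupport (hout _)]
      norm_num
    simp [h0]

/-! ### Energy estimate in standard position -/

lemma hasDerivAt_of_quadratic {α f : ℝ → ℝ} {m f' s C : ℝ} (hf : HasDerivAt f f' s)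
    (h : ∀ s', |α s' - α s - m * (f s' - f s)| ≤ C * |s' - s| ^ 2) :
    HasDerivAt α (m * f') s := by
  have h1 : HasDerivAt (fun u => α u - m * f u) 0 s := by
    rw [hasDerivAt_iff_isLittleO]
    refine Asymptotics.IsBigO.trans_isLittleO (g := fun u => (u - s) ^ 2) ?_ ?_
    · refine Asymptotics.IsBigO.of_bound C (Filter.Eventually.of_forall fun u => ?_)
      rw [smul_zero, sub_zero, Real.norm_eq_abs, Real.norm_eq_abs, abs_pow]
      have e : α u - m * f u - (α s - m * f s) = α u - α s - m * (f u - f s) := by ring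
      rw [e]
      exact h u
    · have h2 : Filter.Tendsto (fun u : ℝ => u - s) (𝓝 s) (𝓝 0) := by
        have : Continuous fun u : ℝ => u - s := by fun_prop
        simpa using this.tendsto s
      exact (Asymptotics.isLittleO_pow_id (n := 2) (by norm_num)).comp_tendsto h2
  have h2 := h1.fun_add (hf.const_mul m)
  simpa using h2

/-- The action of the commutator trajectory through the origin, bounded by integrating
`da = Y · dX` along a ray out to infinity, where the action vanishes. -/
lemma commH_action_zero {n : ℕ} (hn : 1 ≤ n) {θ : ℝ → ℝ} (hθ : ContDiff ℝ (⊤ : ℕ∞) θ)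
    (hθ0 : ∀ r, 0 ≤ θ r) {ρ : ℝ} (hρ : 0 ≤ ρ)
    (hθρ : ∀ r, ρ ≤ r → θ r = 0) {a : (Fin n → ℝ) → ℝ} {C R : ℝ}
    (ha : ∀ x x', |a x' - a x - (rot n θ (x, 0)).2 ⬝ᵥ ((rot n θ (x', 0)).1 - (rot n θ (x, 0)).1)|
      ≤ C * ‖x' - x‖ ^ 2) (hR : ∀ x, R < ‖x‖ → a x = 0) :
    a 0 ≤ -(1 / 2 * ∫ r in (0:ℝ)..ρ, θ r) := by
  let e : Fin n → ℝ := Pi.single ⟨0, hn⟩ 1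
  have hee : e ⬝ᵥ e = 1 := by simp [e]
  have hen : ‖e‖ = 1 := by simp [e, Pi.norm_single]
  have hns : ∀ s : ℝ, nsq n (s • e, 0) = s ^ 2 := by
    intro s
    simp [nsq, hee]; ring
  have hθc : Continuous θ := hθ.continuous
  have hα : ∀ s : ℝ, HasDerivAt (fun s : ℝ => a (s • e)) ((s * Real.sin (θ (s ^ 2))) *
      (1 * Real.cos (θ (s ^ 2)) + s * (-Real.sin (θ (s ^ 2)) *
        (deriv θ (s ^ 2) * (2 * s))))) s := by
    intro s
    have hsq : HasDerivAt (fun s : ℝ => s ^ 2) (2 * s) s := by simpa using hasDerivAt_pow 2 s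
    have hθs : HasDerivAt (fun s : ℝ => θ (s ^ 2)) (deriv θ (s ^ 2) * (2 * s)) s :=
      (((hθ.differentiable (by simp)).differentiableAt).hasDerivAt).comp s hsq
    refine hasDerivAt_of_quadratic (f := fun s => s * Real.cos (θ (s ^ 2))) (C := C)
      ((hasDerivAt_id s).fun_mul hθs.cos) fun s' => ?_
    have h := ha (s • e) (s' • e)
    rw [← sub_smul, norm_smul, hen, mul_one, Real.norm_eq_abs] at h
    refine le_trans (le_of_eq ?_) h
    congr 2
    simp only [rot, hns, smul_zero, sub_zero, add_zero, smul_smul, ← sub_smul, smul_dotProduct,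
      dotProduct_smul, hee, smul_eq_mul]
    ring
  have hβ : ∀ s : ℝ, HasDerivAt (fun s : ℝ => 1 / 2 * (s ^ 2 * (Real.sin (θ (s ^ 2)) *
      Real.cos (θ (s ^ 2)))) - 1 / 2 * (s ^ 2 * θ (s ^ 2)) + 1 / 2 * ∫ r in (0:ℝ)..s ^ 2, θ r)
      ((s * Real.sin (θ (s ^ 2))) * (1 * Real.cos (θ (s ^ 2)) + s * (-Real.sin (θ (s ^ 2)) *
        (deriv θ (s ^ 2) * (2 * s))))) s := by
    intro s
    have hsq : HasDerivAt (fun s : ℝ => s ^ 2) (2 * s) s := by simpa using hasDerivAt_pow 2 s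
    have hθs : HasDerivAt (fun s : ℝ => θ (s ^ 2)) (deriv θ (s ^ 2) * (2 * s)) s :=
      (((hθ.differentiable (by simp)).differentiableAt).hasDerivAt).comp s hsq
    have hprim : HasDerivAt (fun s : ℝ => ∫ r in (0:ℝ)..s ^ 2, θ r) (θ (s ^ 2) * (2 * s)) s :=
      HasDerivAt.comp (h := fun s : ℝ => s ^ 2) s
        (hθc.integral_hasStrictDerivAt 0 (s ^ 2)).hasDerivAt hsq
    have h := (((hsq.fun_mul (hθs.sin.fun_mul hθs.cos)).const_mul (1 / 2)).fun_sub
      ((hsq.fun_mul hθs).const_mul (1 / 2))).fun_add (hprim.const_mul (1 / 2))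
    refine h.congr_deriv ?_
    have hcs := Real.sin_sq_add_cos_sq (θ (s ^ 2))
    linear_combination (s ^ 3 * deriv θ (s ^ 2)) * hcs
  have hconst := fun s : ℝ => is_const_of_deriv_eq_zero
    (fun u => ((hα u).fun_sub (hβ u)).differentiableAt)
    (fun u => by rw [((hα u).fun_sub (hβ u)).deriv, sub_self]) 0 s
  set s : ℝ := |R| + 1 + ρ with hs
  have hs1 : R < s := by have := le_abs_self R; rw [hs]; linarith
  have hs0 : 1 ≤ s := by have := abs_nonneg R; rw [hs]; linarith
  have hsρ : ρ ≤ s := by have := abs_nonneg R; rw [hs]; linarith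
  have hsρ2 : ρ ≤ s ^ 2 := by nlinarith
  have h := hconst s
  have hmono : ∫ r in (0:ℝ)..ρ, θ r ≤ ∫ r in (0:ℝ)..s ^ 2, θ r :=
    intervalIntegral.integral_mono_interval le_rfl hρ hsρ2
      (Filter.Eventually.of_forall hθ0) (hθc.intervalIntegrable _ _)
  rw [hR (s • e) (by rw [norm_smul, hen, Real.norm_eq_abs, abs_of_pos (by linarith)]; linarith),
    hθρ _ hsρ2] at h
  simp at h
  linarith

lemma sInf_slice_eq {n : ℕ} (H : ℝ × E n → ℝ) (t : ℝ) :
    sInf (Set.range fun z => H (t, z)) = -sSup (Set.range fun z => (-H) (t, z)) := by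
  rw [Real.sInf_def]
  congr 2
  ext r
  simp only [Set.mem_neg, Set.mem_range, Pi.neg_apply]
  exact exists_congr fun z => by constructor <;> intro h <;> linarith

lemma integral_sSup_commH_le {n : ℕ} {H : ℝ × E n → ℝ} (hH : ContDiff ℝ (⊤ : ℕ∞) H)
    (hc : HasCompactSupport H) (ht : tsupport H ⊆ Set.Icc (0 : ℝ) 1 ×ˢ Set.univ)
    {θ : ℝ → ℝ} (hθ : ContDiff ℝ (⊤ : ℕ∞) θ) :
    ∫ t in (0:ℝ)..1, sSup (Set.range fun z => commH n H θ (t, z)) ≤ HNorm n H := by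
  set s : ℝ → ℝ := fun t => sSup (Set.range fun z => H (t, z)) with hs
  set i : ℝ → ℝ := fun t => sInf (Set.range fun z => H (t, z)) with hi
  have hsc : Continuous s := sSup_slice_continuous hH hc
  have hic : Continuous i := by
    have := sSup_slice_continuous hH.neg hc.neg
    rw [show i = fun t => -sSup (Set.range fun z => (-H) (t, z)) from
      funext fun t => sInf_slice_eq H t]
    exact this.neg
  have hle : ∀ t, sSup (Set.range fun z => commH n H θ (t, z))
      ≤ -2 * i (1 - 2 * t) + 2 * s (2 * t - 1) := by
    intro t
    refine csSup_le (Set.range_nonempty _) ?_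
    rintro _ ⟨z, rfl⟩
    have h1 := sInf_le_slice hH.continuous hc (1 - 2 * t) z
    have h2 := slice_le_sSup hH.continuous hc (2 * t - 1) (rot n (-θ) z)
    simp only [commH, hi, hs]
    linarith
  have hs0 : ∀ t ≤ 0, s t = 0 := by
    intro t h
    simp [hs, slice_eq_zero_of_nonpos hH.continuous ht h]
  have hi0 : ∀ t ≤ 0, i t = 0 := by
    intro t h
    simp [hi, slice_eq_zero_of_nonpos hH.continuous ht h]
  have key : ∀ f : ℝ → ℝ, Continuous f → (∀ t ≤ 0, f t = 0) →
      ∫ t in (-1:ℝ)..1, f t = ∫ t in (0:ℝ)..1, f t := by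
    intro f hf h0
    rw [← intervalIntegral.integral_add_adjacent_intervals (b := 0)
      (hf.intervalIntegrable _ _) (hf.intervalIntegrable _ _)]
    have : ∫ t in (-1:ℝ)..0, f t = ∫ t in (-1:ℝ)..0, (0:ℝ) := by
      refine intervalIntegral.integral_congr fun t h => ?_
      rw [Set.uIcc_of_le (by norm_num)] at h
      exact h0 t h.2
    rw [this]; simp
  calc ∫ t in (0:ℝ)..1, sSup (Set.range fun z => commH n H θ (t, z))
      ≤ ∫ t in (0:ℝ)..1, (-2 * i (1 - 2 * t) + 2 * s (2 * t - 1)) := by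
        refine intervalIntegral.integral_mono_on zero_le_one
          ((sSup_slice_continuous (commH_contDiff hH hθ)
            (commH_hasCompactSupport hc hθ)).intervalIntegrable _ _)
          (Continuous.intervalIntegrable (by fun_prop) _ _) fun t _ => hle t
    _ = -2 * (∫ t in (0:ℝ)..1, i (1 - 2 * t)) + 2 * ∫ t in (0:ℝ)..1, s (2 * t - 1) := by
        rw [intervalIntegral.integral_add (Continuous.intervalIntegrable (by fun_prop) _ _)
          (Continuous.intervalIntegrable (by fun_prop) _ _), intervalIntegral.integral_const_mul,
          intervalIntegral.integral_const_mul]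
    _ = -(∫ t in (0:ℝ)..1, i t) + ∫ t in (0:ℝ)..1, s t := by
        rw [intervalIntegral.integral_comp_sub_mul i two_ne_zero,
          intervalIntegral.integral_comp_mul_sub s two_ne_zero]
        norm_num
        rw [key i hic hi0, key s hsc hs0]
        ring
    _ = HNorm n H := by
        rw [HNorm, intervalIntegral.integral_sub (hsc.intervalIntegrable _ _)
          (hic.intervalIntegrable _ _)]
        ring

/-- A Hamiltonian whose time-one map moves the ball `{|z|² < ρ}` off the zero section
`{y = 0}` has Hofer length at least `½ ∫₀^ρ θ`. -/
lemma main_estimate {n : ℕ} (hn : 1 ≤ n) {H : ℝ × E n → ℝ} (hH : ContDiff ℝ (⊤ : ℕ∞) H)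
    (hc : HasCompactSupport H) (ht : tsupport H ⊆ Set.Icc (0 : ℝ) 1 ×ˢ Set.univ)
    {Φ : ℝ → E n → E n} (hΦ : IsHamFlow n H Φ) {θ : ℝ → ℝ} (hθ : ContDiff ℝ (⊤ : ℕ∞) θ)
    (hθ0 : ∀ r, 0 ≤ θ r) (hθ1 : ∀ r, θ r ≤ 1) {ρ : ℝ} (hρ : 0 ≤ ρ)
    (hθρ : ∀ r, ρ ≤ r → θ r = 0) (hdisp : ∀ z, nsq n z < ρ → (Φ 1 z).2 ≠ 0) :
    1 / 2 * ∫ r in (0:ℝ)..ρ, θ r ≤ HNorm n H := by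
  obtain ⟨Z, hZ0, hZ, hZ1, R, hR⟩ := exists_commH_trajectory hH hc ht hΦ hθ hθρ hdisp
  have hG := commH_contDiff hH hθ
  have hGc := commH_hasCompactSupport hc hθ
  obtain ⟨C, hC0, hC⟩ := action_variation hG hGc hZ0 hZ
  simp only [hZ1] at hC
  have ha0 := commH_action_zero hn hθ hθ0 hρ hθρ (a := fun x => (Z x 1).2) hC hR
  refine le_trans ?_ (integral_sSup_commH_le hH hc ht hθ)
  set I := ∫ t in (0:ℝ)..1, sSup (Set.range fun z => commH n H θ (t, z)) with hI
  have hk : 0 < Real.cos 1 := Real.cos_one_pos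
  have hη : ∀ η : ℝ, 0 < η → 1 / 2 * ∫ r in (0:ℝ)..ρ, θ r
      ≤ I + η + C * (η / Real.cos 1) ^ 2 := by
    intro η hη
    obtain ⟨x, hx, hxa⟩ := exists_trajectory hG hGc hZ0 hZ 0 hη
    rw [sub_zero, hZ1] at hx
    have hxn : ‖x‖ ≤ η / Real.cos 1 := by
      rw [le_div_iff₀ hk]
      refine le_trans ?_ hx
      simp only [rot, smul_zero, sub_zero, norm_smul, Real.norm_eq_abs]
      rw [mul_comm]
      gcongr
      refine le_trans ?_ (le_abs_self _)
      exact Real.cos_le_cos_of_nonneg_of_le_pi (hθ0 _)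
        (by linarith [Real.pi_gt_three]) (hθ1 _)
    have h1 := hC 0 x
    have h2 : (rot n θ ((0 : Fin n → ℝ), 0)).2 = 0 := by simp [rot]
    rw [h2, zero_dotProduct, sub_zero, sub_zero] at h1
    have h3 := (le_abs_self _).trans h1
    have h4 : C * ‖x‖ ^ 2 ≤ C * (η / Real.cos 1) ^ 2 := by gcongr
    linarith
  have hcont : Continuous fun η : ℝ => I + η + C * (η / Real.cos 1) ^ 2 := by fun_prop
  have hlim : Filter.Tendsto (fun η : ℝ => I + η + C * (η / Real.cos 1) ^ 2) (𝓝[>] 0) (𝓝 I) := by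
    have := (hcont.tendsto 0).mono_left (nhdsWithin_le_nhds (s := Set.Ioi 0))
    simpa using this
  exact ge_of_tendsto hlim (Filter.eventually_of_mem self_mem_nhdsWithin fun η h => hη η h)

/-! ### Symplectic shears and linear symplectic maps -/

/-- The dot product as a continuous bilinear form. -/
def dotCLM (n : ℕ) : (Fin n → ℝ) →L[ℝ] (Fin n → ℝ) →L[ℝ] ℝ :=
  ∑ i, (ContinuousLinearMap.proj (R := ℝ) (φ := fun _ : Fin n => ℝ) i).smulRight
    (ContinuousLinearMap.proj (R := ℝ) (φ := fun _ : Fin n => ℝ) i)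

lemma dotCLM_apply {n : ℕ} (a v : Fin n → ℝ) : dotCLM n a v = a ⬝ᵥ v := by
  simp [dotCLM, dotProduct]

/-- A closed one-form on a ball agrees near the centre with a closed one-form on the whole space:
by the Poincaré lemma it is exact, and its primitive can be cut off. -/
lemma exists_global_closed {n : ℕ} {r : ℝ} (hr : 0 < r) {α : (Fin n → ℝ) → (Fin n → ℝ)}
    (hα : ContDiffOn ℝ (⊤ : ℕ∞) α (Metric.ball 0 r))
    (hsym : ∀ x ∈ Metric.ball (0 : Fin n → ℝ) r, ∀ v w,
      fderiv ℝ α x v ⬝ᵥ w = v ⬝ᵥ fderiv ℝ α x w) :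
    ∃ β : (Fin n → ℝ) → (Fin n → ℝ), ContDiff ℝ (⊤ : ℕ∞) β ∧
      (∀ x v w, fderiv ℝ β x v ⬝ᵥ w = v ⬝ᵥ fderiv ℝ β x w) ∧
      ∀ x ∈ Metric.ball (0 : Fin n → ℝ) (r / 3), β x = α x := by
  have hω : ContDiffOn ℝ (⊤ : ℕ∞) (fun x => dotCLM n (α x)) (Metric.ball 0 r) :=
    (dotCLM n).contDiff.comp_contDiffOn hα
  have hαd : ∀ x ∈ Metric.ball (0 : Fin n → ℝ) r, DifferentiableAt ℝ α x := fun x hx =>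
    (hα.differentiableOn (by simp)).differentiableAt (Metric.isOpen_ball.mem_nhds hx)
  obtain ⟨f, hf⟩ := (convex_ball (0 : Fin n → ℝ) r).exists_forall_hasFDerivAt_of_fderiv_symmetric
    Metric.isOpen_ball (hω.differentiableOn (by simp)) (by
      intro x hx v w
      have h1 : HasFDerivAt (fun x => dotCLM n (α x)) ((dotCLM n).comp (fderiv ℝ α x)) x :=
        (dotCLM n).hasFDerivAt.comp x (hαd x hx).hasFDerivAt
      rw [h1.fderiv]
      simp only [ContinuousLinearMap.comp_apply, dotCLM_apply]
      rw [hsym x hx, dotProduct_comm])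
  have hfs : ContDiffOn ℝ (⊤ : ℕ∞) f (Metric.ball 0 r) := by
    rw [contDiffOn_infty_iff_fderiv_of_isOpen Metric.isOpen_ball]
    exact ⟨fun x hx => (hf x hx).differentiableAt.differentiableWithinAt,
      hω.congr fun x hx => (hf x hx).fderiv⟩
  let χ : ContDiffBump (0 : Fin n → ℝ) := ⟨r / 3, r / 2, by linarith, by linarith⟩
  set h : (Fin n → ℝ) → ℝ := fun x => χ x * f x with hh
  have hhs : ContDiff ℝ (⊤ : ℕ∞) h := by
    rw [contDiff_iff_contDiffAt]
    intro x
    by_cases hx : x ∈ Metric.ball (0 : Fin n → ℝ) r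
    · exact χ.contDiffAt.mul (hfs.contDiffAt (Metric.isOpen_ball.mem_nhds hx))
    · have hopen : IsOpen (Metric.closedBall (0 : Fin n → ℝ) (r / 2))ᶜ :=
        Metric.isClosed_closedBall.isOpen_compl
      have hx' : x ∈ (Metric.closedBall (0 : Fin n → ℝ) (r / 2))ᶜ := fun h' =>
        hx (Metric.closedBall_subset_ball (by linarith) h')
      refine (contDiffAt_const (c := (0 : ℝ))).congr_of_eventuallyEq ?_
      filter_upwards [hopen.mem_nhds hx'] with y hy
      have : χ y = 0 := χ.zero_of_le_dist (by
        have := not_le.1 (fun h' => hy (Metric.mem_closedBall.2 h'))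
        exact this.le)
      rw [hh]
      simp only [this, zero_mul]
  have hdh : ContDiff ℝ (⊤ : ℕ∞) (fderiv ℝ h) := hhs.fderiv_right (by simp)
  set β : (Fin n → ℝ) → (Fin n → ℝ) := fun x i => fderiv ℝ h x (Pi.single i 1) with hβ
  have hdβ : ∀ x, HasFDerivAt β (ContinuousLinearMap.pi fun i =>
      (ContinuousLinearMap.apply ℝ ℝ (Pi.single i (1:ℝ))).comp (fderiv ℝ (fderiv ℝ h) x)) x := by
    intro x
    rw [hasFDerivAt_pi]
    intro i
    exact (ContinuousLinearMap.apply ℝ ℝ (Pi.single i (1:ℝ))).hasFDerivAt.comp x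
      ((hdh.differentiable (by simp)) x).hasFDerivAt
  have hdot : ∀ x v w, fderiv ℝ β x v ⬝ᵥ w = fderiv ℝ (fderiv ℝ h) x v w := by
    intro x v w
    rw [(hdβ x).fderiv]
    conv_rhs => rw [pi_eq_sum_univ' w, map_sum]
    simp only [dotProduct, map_smul, smul_eq_mul, ContinuousLinearMap.pi_apply,
      ContinuousLinearMap.comp_apply, ContinuousLinearMap.apply_apply]
    refine Finset.sum_congr rfl fun i _ => ?_
    rw [mul_comm]
  refine ⟨β, ?_, ?_, ?_⟩
  · exact contDiff_pi.2 fun i => hdh.clm_apply contDiff_const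
  · intro x v w
    rw [hdot, dotProduct_comm, hdot]
    exact ((contDiff_infty.1 hhs 2).contDiffAt.isSymmSndFDerivAt (by simp)) v w
  · intro x hx
    have hx' : x ∈ Metric.ball (0 : Fin n → ℝ) r := Metric.ball_subset_ball (by linarith) hx
    have h1 : h =ᶠ[𝓝 x] f := by
      filter_upwards [χ.eventuallyEq_one_of_mem_ball hx] with y hy
      simp [hh, hy]
    funext i
    simp only [hβ]
    rw [h1.fderiv_eq, (hf x hx').fderiv, dotCLM_apply]
    simp

/-- The shear `(x, y) ↦ (x, y + β x)`. -/
def shear (n : ℕ) (β : (Fin n → ℝ) → (Fin n → ℝ)) (z : E n) : E n := (z.1, z.2 + β z.1)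

lemma shear_contDiff {n : ℕ} {β : (Fin n → ℝ) → (Fin n → ℝ)} (hβ : ContDiff ℝ (⊤ : ℕ∞) β) :
    ContDiff ℝ (⊤ : ℕ∞) (shear n β) :=
  contDiff_fst.prodMk (contDiff_snd.add (hβ.comp contDiff_fst))

lemma shear_symplectic {n : ℕ} {β : (Fin n → ℝ) → (Fin n → ℝ)} (hβ : ContDiff ℝ (⊤ : ℕ∞) β)
    (hsym : ∀ x v w, fderiv ℝ β x v ⬝ᵥ w = v ⬝ᵥ fderiv ℝ β x w) (z : E n) :
    ∃ S : E n →L[ℝ] E n, HasFDerivAt (shear n β) S z ∧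
      ∀ u v, omega0 n (S u) (S v) = omega0 n u v := by
  have h1 : HasFDerivAt (fun z : E n => β z.1)
      ((fderiv ℝ β z.1).comp (ContinuousLinearMap.fst ℝ _ _)) z :=
    HasFDerivAt.comp (f := fun z : E n => z.1) z
      ((hβ.differentiable (by simp)) z.1).hasFDerivAt hasFDerivAt_fst
  refine ⟨_, hasFDerivAt_fst.prodMk (hasFDerivAt_snd.add h1), fun u v => ?_⟩
  simp only [omega0_eq, ContinuousLinearMap.prod_apply, add_apply, ContinuousLinearMap.coe_fst',
    ContinuousLinearMap.coe_snd', ContinuousLinearMap.comp_apply, dotProduct_add, add_dotProduct,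
    hsym]
  ring

/-- Multiplication by `i` on `E = ℂⁿ`. -/
def Jmap (n : ℕ) : E n →ₗ[ℝ] E n :=
  LinearMap.prod (-LinearMap.snd ℝ _ _) (LinearMap.fst ℝ _ _)

/-- Every parametrized Lagrangian subspace is the image of the zero section under a linear
symplectic map. With `P = BᵀB`, the map is `(x, y) ↦ B x + i B P⁻¹ y`. -/
lemma exists_linear_symplectic {n : ℕ} (B : (Fin n → ℝ) →ₗ[ℝ] E n) (hB : Function.Injective B)
    (hiso : ∀ u v, omega0 n (B u) (B v) = 0) :
    ∃ A : E n ≃L[ℝ] E n, (∀ u v, omega0 n (A u) (A v) = omega0 n u v) ∧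
      ∀ x, A (x, 0) = B x := by
  let P : (Fin n → ℝ) →ₗ[ℝ] (Fin n → ℝ) := LinearMap.pi fun i =>
    { toFun := fun u => (B u).1 ⬝ᵥ (B (Pi.single i 1)).1 + (B u).2 ⬝ᵥ (B (Pi.single i 1)).2
      map_add' := fun u v => by
        simp only [map_add, Prod.fst_add, Prod.snd_add, add_dotProduct]; ring
      map_smul' := fun c u => by
        simp only [map_smul, Prod.smul_fst, Prod.smul_snd, smul_dotProduct, smul_eq_mul,
          RingHom.id_apply]; ring }
  have hP : ∀ u v, P u ⬝ᵥ v = (B u).1 ⬝ᵥ (B v).1 + (B u).2 ⬝ᵥ (B v).2 := by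
    intro u v
    have h1 : B v = ∑ i, v i • B (Pi.single i 1) := by
      conv_lhs => rw [← Finset.univ_sum_single v, map_sum]
      refine Finset.sum_congr rfl fun i _ => ?_
      rw [← map_smul, ← Pi.single_smul, smul_eq_mul, mul_one]
    rw [h1, Prod.fst_sum, Prod.snd_sum, dotProduct_sum, dotProduct_sum, ← Finset.sum_add_distrib]
    unfold dotProduct
    refine Finset.sum_congr rfl fun i _ => ?_
    have e : P u i = (B u).1 ⬝ᵥ (B (Pi.single i 1)).1 + (B u).2 ⬝ᵥ (B (Pi.single i 1)).2 := rfl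
    rw [e]
    simp only [dotProduct, Prod.smul_fst, Prod.smul_snd, Pi.smul_apply, smul_eq_mul]
    rw [add_mul, Finset.sum_mul, Finset.sum_mul]
    congr 1 <;> exact Finset.sum_congr rfl fun j _ => by ring
  have hPinj : Function.Injective P := by
    rw [← LinearMap.ker_eq_bot, LinearMap.ker_eq_bot']
    intro u hu
    have h1 := hP u u
    rw [hu, zero_dotProduct] at h1
    have h2 : 0 ≤ (B u).1 ⬝ᵥ (B u).1 := Finset.sum_nonneg fun i _ => mul_self_nonneg _
    have h3 : 0 ≤ (B u).2 ⬝ᵥ (B u).2 := Finset.sum_nonneg fun i _ => mul_self_nonneg _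
    have h4 : (B u).1 = 0 := dotProduct_self_eq_zero.1 (by linarith)
    have h5 : (B u).2 = 0 := dotProduct_self_eq_zero.1 (by linarith)
    exact hB (by rw [map_zero]; exact Prod.ext h4 h5)
  let Pe := LinearEquiv.ofInjectiveEndo P hPinj
  have hPe : ∀ y, P (Pe.symm y) = y := fun y => by
    have := Pe.apply_symm_apply y
    rwa [LinearEquiv.coe_ofInjectiveEndo] at this
  let A₀ : E n →ₗ[ℝ] E n := B.comp (LinearMap.fst ℝ _ _)
    + (Jmap n).comp (B.comp (Pe.symm.toLinearMap.comp (LinearMap.snd ℝ _ _)))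
  have hA₀ : ∀ z, A₀ z = B z.1 + Jmap n (B (Pe.symm z.2)) := fun z => rfl
  have hJ : ∀ z : E n, Jmap n z = (-z.2, z.1) := fun z => rfl
  have hsymp : ∀ u v, omega0 n (A₀ u) (A₀ v) = omega0 n u v := by
    intro u v
    have h1 := hiso u.1 v.1
    have h2 := hiso (Pe.symm u.2) (Pe.symm v.2)
    have h3 := hP (Pe.symm v.2) u.1
    have h4 := hP (Pe.symm u.2) v.1
    rw [hPe] at h3 h4
    rw [dotProduct_comm v.2 u.1] at h3
    simp only [hA₀, hJ, omega0_eq, Prod.fst_add, Prod.snd_add, add_dotProduct, dotProduct_add,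
      neg_dotProduct, dotProduct_neg] at h1 h2 ⊢
    rw [h3, h4]
    simp only [dotProduct_comm (B (Pe.symm v.2)).1 (B u.1).1,
      dotProduct_comm (B (Pe.symm v.2)).2 (B u.1).2]
    linear_combination h1 + h2
  have hinj : Function.Injective A₀ := by
    rw [← LinearMap.ker_eq_bot, LinearMap.ker_eq_bot']
    intro u hu
    refine omega0_nondeg fun w => ?_
    rw [← hsymp u w, hu]
    simp [omega0_eq]
  refine ⟨(LinearEquiv.ofInjectiveEndo A₀ hinj).toContinuousLinearEquiv, fun u v => hsymp u v,
    fun x => ?_⟩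
  change A₀ (x, 0) = B x
  rw [hA₀]; simp

/-! ### Charts of a Lagrangian submanifold -/

/-- `coordSubspace` as a submodule. -/
def coordSub (n k : ℕ) : Submodule ℝ (E n) where
  carrier := coordSubspace n k
  add_mem' := by
    rintro a b ⟨h1, h2⟩ ⟨h3, h4⟩
    exact ⟨fun i hi => by simp [h1 i hi, h3 i hi], fun i hi => by simp [h2 i hi, h4 i hi]⟩
  zero_mem' := ⟨fun _ _ => rfl, fun _ _ => rfl⟩
  smul_mem' := by
    rintro c a ⟨h1, h2⟩
    exact ⟨fun i hi => by simp [h1 i hi], fun i hi => by simp [h2 i hi]⟩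

lemma mem_coordSub {n k : ℕ} {z : E n} : z ∈ coordSub n k ↔ z ∈ coordSubspace n k := Iff.rfl

lemma coordSub_mono {n k l : ℕ} (h : k ≤ l) : coordSub n k ≤ coordSub n l := fun _ hz =>
  ⟨fun i hi => hz.1 i (h.trans hi), fun i hi => hz.2 i (h.trans hi)⟩

lemma mem_coordSub_self {n : ℕ} {z : E n} : z ∈ coordSub n n ↔ z.2 = 0 := by
  constructor
  · intro h
    exact funext fun i => h.2 i (by omega)
  · intro h
    exact ⟨fun i hi => absurd i.2 (by omega), fun i _ => by rw [h]; rfl⟩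

lemma finrank_coordSub_self (n : ℕ) : Module.finrank ℝ (coordSub n n) = n := by
  have h : coordSub n n = LinearMap.range (LinearMap.inl ℝ (Fin n → ℝ) (Fin n → ℝ)) := by
    ext z
    rw [mem_coordSub_self, LinearMap.mem_range]
    constructor
    · intro h
      exact ⟨z.1, Prod.ext rfl h.symm⟩
    · rintro ⟨x, rfl⟩
      rfl
  rw [h, LinearMap.finrank_range_of_inj LinearMap.inl_injective]
  simp

/-- `omega0` as a bilinear form. -/
def omegaBilin (n : ℕ) : LinearMap.BilinForm ℝ (E n) :=
  LinearMap.mk₂ ℝ (omega0 n)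
    (fun a b c => by simp only [omega0_eq, Prod.fst_add, Prod.snd_add, add_dotProduct]; ring)
    (fun r a b => by
      simp only [omega0_eq, Prod.smul_fst, Prod.smul_snd, smul_dotProduct, smul_eq_mul]; ring)
    (fun a b c => by simp only [omega0_eq, Prod.fst_add, Prod.snd_add, dotProduct_add]; ring)
    (fun r a b => by
      simp only [omega0_eq, Prod.smul_fst, Prod.smul_snd, dotProduct_smul, smul_eq_mul]; ring)

lemma omega0_swap {n : ℕ} (z w : E n) : omega0 n z w = -omega0 n w z := by
  rw [omega0_eq, omega0_eq, dotProduct_comm z.1, dotProduct_comm z.2]; ring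

lemma finrank_of_self_orth {n : ℕ} (T : Submodule ℝ (E n))
    (hT : symplOrth n (T : Set (E n)) = T) : Module.finrank ℝ T = n := by
  have h1 : (omegaBilin n).orthogonal T = T := by
    ext z
    rw [LinearMap.BilinForm.mem_orthogonal_iff]
    have : z ∈ T ↔ z ∈ symplOrth n (T : Set (E n)) := by rw [hT]; rfl
    rw [this]
    constructor
    · intro h u hu
      rw [omega0_swap]
      have h2 : omega0 n u z = 0 := h u hu
      rw [h2, neg_zero]
    · intro h u hu
      change omega0 n u z = 0
      rw [omega0_swap, h u hu, neg_zero]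
  have h2 := LinearMap.BilinForm.finrank_add_finrank_orthogonal' (B := omegaBilin n) T
  have h3 : (omegaBilin n).ker = ⊥ := by
    rw [LinearMap.ker_eq_bot']
    intro z hz
    exact omega0_nondeg fun w => by
      have := LinearMap.congr_fun hz w
      exact this
  rw [h1, h3, inf_bot_eq, finrank_bot, add_zero, Module.finrank_prod] at h2
  simp at h2
  omega

/-- Around each point of a Lagrangian submanifold there is a chart straightening it to
`{y = 0}`, whose inverse restricts to an isotropic parametrization. -/
lemma exists_lagrangian_chart {n k : ℕ} {L : Set (E n)} (hL : IsSubmanifold n k L)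
    (hLag : IsLagrangian n L) {p : E n} (hp : p ∈ L) :
    ∃ (V : Set (E n)) (Φ g : E n → E n), IsOpen V ∧ p ∈ V ∧ IsOpen (Φ '' V) ∧
      ContDiffOn ℝ (⊤ : ℕ∞) Φ V ∧ ContDiffOn ℝ (⊤ : ℕ∞) g (Φ '' V) ∧ (∀ z ∈ V, g (Φ z) = z) ∧
      (∀ z ∈ V, z ∈ L ↔ (Φ z).2 = 0) ∧ Function.Injective (fderiv ℝ g (Φ p)) ∧
      ∀ u : Fin n → ℝ, ((u, 0) : E n) ∈ Φ '' V → ∀ a b : Fin n → ℝ,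
        omega0 n (fderiv ℝ g (u, 0) (a, 0)) (fderiv ℝ g (u, 0) (b, 0)) = 0 := by
  obtain ⟨V, Φ, hV, hpV, hΦV, hinj, hΦ, ⟨g, hg, hgΦ⟩, himg⟩ := hL p hp
  have hgd : ∀ c ∈ Φ '' V, HasFDerivAt g (fderiv ℝ g c) c := fun c hc =>
    ((hg.differentiableOn (by simp)).differentiableAt (hΦV.mem_nhds hc)).hasFDerivAt
  have hΦd : ∀ z ∈ V, HasFDerivAt Φ (fderiv ℝ Φ z) z := fun z hz =>
    ((hΦ.differentiableOn (by simp)).differentiableAt (hV.mem_nhds hz)).hasFDerivAt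
  have hgL : ∀ c ∈ coordSubspace n k ∩ Φ '' V, g c ∈ L := by
    intro c hc
    rw [← himg] at hc
    obtain ⟨z, hz, rfl⟩ := hc
    rw [hgΦ z hz.2]
    exact hz.1
  have hiff : ∀ z ∈ V, z ∈ L ↔ Φ z ∈ coordSubspace n k := by
    intro z hz
    constructor
    · intro h
      have : Φ z ∈ Φ '' (L ∩ V) := ⟨z, ⟨h, hz⟩, rfl⟩
      rw [himg] at this
      exact this.1
    · intro h
      have := hgL (Φ z) ⟨h, z, hz, rfl⟩
      rwa [hgΦ z hz] at this
  have htan : ∀ c ∈ coordSubspace n k ∩ Φ '' V, ∀ v ∈ coordSubspace n k,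
      fderiv ℝ g c v ∈ TangentSet n L (g c) := by
    intro c hc v hv
    have hcurve : HasDerivAt (fun t : ℝ => c + t • v) v 0 := by
      simpa using ((hasDerivAt_id (0 : ℝ)).smul_const v).const_add c
    refine ⟨fun t => g (c + t • v), by simp, ?_, ?_⟩
    · have hmem : ∀ᶠ t in 𝓝 (0 : ℝ), c + t • v ∈ Φ '' V :=
        hcurve.continuousAt.eventually_mem (hΦV.mem_nhds (by simpa using hc.2))
      filter_upwards [hmem] with t ht
      exact hgL _ ⟨(coordSub n k).add_mem hc.1 ((coordSub n k).smul_mem t hv), ht⟩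
    · have h : HasFDerivAt g (fderiv ℝ g c) ((fun t : ℝ => c + t • v) 0) := by
        simpa using hgd c hc.2
      exact HasFDerivAt.comp_hasDerivAt (f := fun t : ℝ => c + t • v) (0 : ℝ) h hcurve
  have hinv : fderiv ℝ Φ p ∘SL fderiv ℝ g (Φ p) = ContinuousLinearMap.id ℝ (E n) := by
    have h1 : HasFDerivAt (Φ ∘ g) (fderiv ℝ Φ p ∘SL fderiv ℝ g (Φ p)) (Φ p) := by
      refine HasFDerivAt.comp (Φ p) ?_ (hgd _ ⟨p, hpV, rfl⟩)
      rw [hgΦ p hpV]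
      exact hΦd p hpV
    refine h1.unique ((hasFDerivAt_id (Φ p)).congr_of_eventuallyEq ?_)
    filter_upwards [hΦV.mem_nhds ⟨p, hpV, rfl⟩] with c hc
    obtain ⟨z, hz, rfl⟩ := hc
    simp [hgΦ z hz]
  have hinv' : fderiv ℝ g (Φ p) ∘SL fderiv ℝ Φ p = ContinuousLinearMap.id ℝ (E n) := by
    have h1 : HasFDerivAt (g ∘ Φ) (fderiv ℝ g (Φ p) ∘SL fderiv ℝ Φ p) p :=
      HasFDerivAt.comp p (hgd _ ⟨p, hpV, rfl⟩) (hΦd p hpV)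
    refine h1.unique ((hasFDerivAt_id p).congr_of_eventuallyEq ?_)
    filter_upwards [hV.mem_nhds hpV] with z hz
    simp [hgΦ z hz]
  have hginj : Function.Injective (fderiv ℝ g (Φ p)) := by
    intro a b hab
    have := congrArg (fderiv ℝ Φ p) hab
    have e : ∀ c, fderiv ℝ Φ p (fderiv ℝ g (Φ p) c) = c := fun c => by
      have := congrArg (fun F : E n →L[ℝ] E n => F c) hinv
      simpa using this
    rwa [e, e] at this
  have hpc : Φ p ∈ coordSubspace n k := (hiff p hpV).1 hp
  have hT : TangentSet n L p = ((coordSub n k).map (fderiv ℝ g (Φ p)).toLinearMap : Set (E n)) := by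
    apply Set.Subset.antisymm
    · rintro v ⟨γ, hγ0, hγL, hγ⟩
      refine ⟨fderiv ℝ Φ p v, ?_, ?_⟩
      · have hΦp : HasFDerivAt Φ (fderiv ℝ Φ p) (γ 0) := by rw [hγ0]; exact hΦd p hpV
        have hd : HasDerivAt (fun t => Φ (γ t)) (fderiv ℝ Φ p v) 0 :=
          HasFDerivAt.comp_hasDerivAt (0 : ℝ) hΦp hγ
        have hmem : ∀ᶠ t in 𝓝 (0 : ℝ), Φ (γ t) ∈ coordSubspace n k := by
          have hVm : ∀ᶠ t in 𝓝 (0 : ℝ), γ t ∈ V :=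
            hγ.continuousAt.eventually_mem (hV.mem_nhds (by rw [hγ0]; exact hpV))
          filter_upwards [hVm, hγL] with t h1 h2
          exact (hiff _ h1).1 h2
        refine ⟨fun i hi => ?_, fun i hi => ?_⟩
        · have h1 : HasDerivAt (fun t => (Φ (γ t)).1 i) ((fderiv ℝ Φ p v).1 i) 0 :=
            hasDerivAt_pi.1 hd.fst i
          refine h1.unique ((hasDerivAt_const (0 : ℝ) (0 : ℝ)).congr_of_eventuallyEq ?_)
          filter_upwards [hmem] with t h
          exact h.1 i hi
        · have h1 : HasDerivAt (fun t => (Φ (γ t)).2 i) ((fderiv ℝ Φ p v).2 i) 0 :=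
            hasDerivAt_pi.1 hd.snd i
          refine h1.unique ((hasDerivAt_const (0 : ℝ) (0 : ℝ)).congr_of_eventuallyEq ?_)
          filter_upwards [hmem] with t h
          exact h.2 i hi
      · have := congrArg (fun F : E n →L[ℝ] E n => F v) hinv'
        simpa using this
    · rintro _ ⟨v, hv, rfl⟩
      have := htan (Φ p) ⟨hpc, p, hpV, rfl⟩ v hv
      rwa [hgΦ p hpV] at this
  have hdim : Module.finrank ℝ (coordSub n k) = n := by
    have h1 := finrank_of_self_orth ((coordSub n k).map (fderiv ℝ g (Φ p)).toLinearMap)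
      (by rw [← hT]; exact hLag p hp)
    exact (Submodule.equivMapOfInjective _ hginj (coordSub n k)).finrank_eq.trans h1
  have hk : coordSub n k = coordSub n n := by
    rcases le_total k n with h | h
    · exact Submodule.eq_of_le_of_finrank_eq (coordSub_mono h)
        (by rw [hdim, finrank_coordSub_self])
    · exact (Submodule.eq_of_le_of_finrank_eq (coordSub_mono h)
        (by rw [hdim, finrank_coordSub_self])).symm
  have hmemk : ∀ z : E n, z ∈ coordSubspace n k ↔ z.2 = 0 := fun z => by
    rw [← mem_coordSub, hk, mem_coordSub_self]
  refine ⟨V, Φ, g, hV, hpV, hΦV, hΦ, hg, hgΦ, fun z hz => (hiff z hz).trans (hmemk _), hginj, ?_⟩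
  intro u hu a b
  have hc : ((u, 0) : E n) ∈ coordSubspace n k ∩ Φ '' V := ⟨(hmemk _).2 rfl, hu⟩
  have ha := htan _ hc (a, 0) ((hmemk _).2 rfl)
  have hb := htan _ hc (b, 0) ((hmemk _).2 rfl)
  rw [← hLag _ (hgL _ hc)] at ha
  exact ha _ hb

/-! ### Local normal form of a Lagrangian submanifold -/

/-- An isotropic parametrisation tangent to `ℝⁿ × 0` is, near the origin, a graph over the first
factor; `s` is the inverse of its first component, and isotropy makes the one-form whose graph it
is closed. -/
lemma exists_graph {n : ℕ} {D : Set (Fin n → ℝ)} {j : (Fin n → ℝ) → E n} {u₀ : Fin n → ℝ}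
    (hD : IsOpen D) (hu₀ : u₀ ∈ D) (hj : ContDiffOn ℝ (⊤ : ℕ∞) j D) (hj0 : j u₀ = 0)
    (hder : ∀ x, (fderiv ℝ j u₀ x).1 = x)
    (hiso : ∀ u ∈ D, ∀ a b, omega0 n (fderiv ℝ j u a) (fderiv ℝ j u b) = 0) :
    ∃ (r : ℝ) (O : Set (Fin n → ℝ)) (s : (Fin n → ℝ) → (Fin n → ℝ)), 0 < r ∧ IsOpen O ∧ u₀ ∈ O ∧
      (∀ u ∈ O, s (j u).1 = u) ∧ (∀ x ∈ Metric.ball 0 r, s x ∈ D ∧ (j (s x)).1 = x) ∧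
      ContDiffOn ℝ (⊤ : ℕ∞) (fun x => (j (s x)).2) (Metric.ball 0 r) ∧
      ∀ x ∈ Metric.ball (0 : Fin n → ℝ) r, ∀ v w,
        fderiv ℝ (fun x => (j (s x)).2) x v ⬝ᵥ w = v ⬝ᵥ fderiv ℝ (fun x => (j (s x)).2) x w := by
  have hjd : ∀ u ∈ D, HasFDerivAt j (fderiv ℝ j u) u := fun u hu =>
    ((hj.differentiableOn (by simp)).differentiableAt (hD.mem_nhds hu)).hasFDerivAt
  set a : (Fin n → ℝ) → (Fin n → ℝ) := fun u => (j u).1 with ha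
  have haD : ContDiffOn ℝ (⊤ : ℕ∞) a D := contDiff_fst.comp_contDiffOn hj
  have hafd : ∀ u ∈ D, HasFDerivAt a (fderiv ℝ a u) u := fun u hu =>
    ((haD.differentiableOn (by simp)).differentiableAt (hD.mem_nhds hu)).hasFDerivAt
  have haid : HasFDerivAt a
      ((ContinuousLinearEquiv.refl ℝ (Fin n → ℝ) : (Fin n → ℝ) ≃L[ℝ] (Fin n → ℝ)) :
        (Fin n → ℝ) →L[ℝ] (Fin n → ℝ)) u₀ := by
    refine (hjd u₀ hu₀).fst.congr_fderiv ?_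
    ext1 x
    exact hder x
  have haAt : ContDiffAt ℝ (⊤ : ℕ∞) a u₀ := haD.contDiffAt (hD.mem_nhds hu₀)
  set e := haAt.toOpenPartialHomeomorph a haid (by simp) with he
  have hecoe : ∀ u, e u = a u := fun u => rfl
  have hsrc : u₀ ∈ e.source := haAt.mem_toOpenPartialHomeomorph_source haid (by simp)
  set D' : Set (Fin n → ℝ) := D ∩ fderiv ℝ a ⁻¹' Set.range
    ((↑) : ((Fin n → ℝ) ≃L[ℝ] (Fin n → ℝ)) → (Fin n → ℝ) →L[ℝ] (Fin n → ℝ)) with hD'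
  have hD'o : IsOpen D' :=
    (haD.continuousOn_fderiv_of_isOpen hD (by simp)).isOpen_inter_preimage hD
      ContinuousLinearEquiv.isOpen
  have hu₀' : u₀ ∈ D' := ⟨hu₀, _, haid.fderiv.symm⟩
  have ht : IsOpen (e.target ∩ e.symm ⁻¹' D') := e.isOpen_inter_preimage_symm hD'o
  have h0 : (0 : Fin n → ℝ) ∈ e.target ∩ e.symm ⁻¹' D' := by
    have h1 : e u₀ = 0 := by rw [hecoe, ha]; simp [hj0]
    rw [← h1]
    refine ⟨e.map_source hsrc, ?_⟩
    simp only [Set.mem_preimage]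
    rw [e.left_inv hsrc]
    exact hu₀'
  obtain ⟨r, hr, hball⟩ := Metric.isOpen_iff.1 ht 0 h0
  have hsm : ∀ x ∈ Metric.ball (0 : Fin n → ℝ) r, ContDiffAt ℝ (⊤ : ℕ∞) e.symm x := by
    intro x hx
    obtain ⟨hxt, hxD, f', hf'⟩ := hball hx
    refine e.contDiffAt_symm (f₀' := f') hxt ?_ (haD.contDiffAt (hD.mem_nhds hxD))
    rw [hf']
    exact hafd _ hxD
  have hright : ∀ x ∈ Metric.ball (0 : Fin n → ℝ) r, (j (e.symm x)).1 = x := fun x hx =>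
    e.right_inv (hball hx).1
  have hjs : ∀ x ∈ Metric.ball (0 : Fin n → ℝ) r,
      ContDiffAt ℝ (⊤ : ℕ∞) (fun x => j (e.symm x)) x := fun x hx =>
    ContDiffAt.comp x (hj.contDiffAt (hD.mem_nhds (hball hx).2.1)) (hsm x hx)
  refine ⟨r, e.source, e.symm, hr, e.open_source, hsrc, fun u hu => e.left_inv hu,
    fun x hx => ⟨(hball hx).2.1, hright x hx⟩,
    fun x hx => ((contDiff_snd.contDiffAt).comp x (hjs x hx)).contDiffWithinAt, ?_⟩
  intro x hx v w
  have hs : HasFDerivAt e.symm (fderiv ℝ e.symm x) x :=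
    ((hsm x hx).differentiableAt (by simp)).hasFDerivAt
  have hcomp : HasFDerivAt (fun x => j (e.symm x))
      (fderiv ℝ j (e.symm x) ∘SL fderiv ℝ e.symm x) x :=
    (hjd _ (hball hx).2.1).comp x hs
  have h1 : ∀ v, (fderiv ℝ j (e.symm x) (fderiv ℝ e.symm x v)).1 = v := by
    have hid : HasFDerivAt (fun x => (j (e.symm x)).1) (ContinuousLinearMap.id ℝ _) x := by
      refine (hasFDerivAt_id x).congr_of_eventuallyEq ?_
      filter_upwards [Metric.isOpen_ball.mem_nhds hx] with y hy
      exact hright y hy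
    intro v
    exact congrArg (fun F : (Fin n → ℝ) →L[ℝ] (Fin n → ℝ) => F v) (hcomp.fst.unique hid)
  have h2 : ∀ v, fderiv ℝ (fun x => (j (e.symm x)).2) x v =
      (fderiv ℝ j (e.symm x) (fderiv ℝ e.symm x v)).2 := fun v => by
    rw [hcomp.snd.fderiv]; rfl
  have h3 := hiso _ (hball hx).2.1 (fderiv ℝ e.symm x v) (fderiv ℝ e.symm x w)
  rw [omega0_eq, h1, h1] at h3
  rw [h2, h2]
  linarith

/-- Every Lagrangian submanifold is locally the image of the zero section `{y = 0}` under a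
globally defined symplectic diffeomorphism `σ`, with inverse `τ`. -/
lemma exists_normal_form {n k : ℕ} {L : Set (E n)} {p : E n}
    (hL : IsSubmanifold n k L) (hLag : IsLagrangian n L) (hp : p ∈ L) :
    ∃ (W : Set (E n)) (σ τ : E n → E n), IsOpen W ∧ p ∈ W ∧
      ContDiff ℝ (⊤ : ℕ∞) σ ∧ ContDiff ℝ (⊤ : ℕ∞) τ ∧
      (∀ z, τ (σ z) = z) ∧ (∀ z, σ (τ z) = z) ∧
      (∀ z, ∃ S : E n →L[ℝ] E n, HasFDerivAt τ S z ∧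
        ∀ u v, omega0 n (S u) (S v) = omega0 n u v) ∧
      σ 0 = p ∧ ∀ z ∈ W, z ∈ L ↔ (τ z).2 = 0 := by
  obtain ⟨V, Φ, g, hV, hpV, hΦV, hΦ, hg, hgΦ, hLV, hginj, hiso⟩ :=
    exists_lagrangian_chart hL hLag hp
  have hΦp : Φ p = ((Φ p).1, 0) := Prod.ext rfl ((hLV p hpV).1 hp)
  set u₀ := (Φ p).1 with hu₀
  set ι : (Fin n → ℝ) →L[ℝ] E n := ContinuousLinearMap.inl ℝ (Fin n → ℝ) (Fin n → ℝ) with hι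
  have hιa : ∀ u, ι u = (u, 0) := fun u => by simp [hι]
  set D : Set (Fin n → ℝ) := ι ⁻¹' (Φ '' V) with hD
  have hDo : IsOpen D := hΦV.preimage ι.continuous
  have hu₀D : u₀ ∈ D := by
    rw [hD, Set.mem_preimage, hιa, ← hΦp]
    exact ⟨p, hpV, rfl⟩
  have hgd : ∀ c ∈ Φ '' V, HasFDerivAt g (fderiv ℝ g c) c := fun c hc =>
    ((hg.differentiableOn (by simp)).differentiableAt (hΦV.mem_nhds hc)).hasFDerivAt
  obtain ⟨A, hAs, hAB⟩ := exists_linear_symplectic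
    ((fderiv ℝ g (Φ p) ∘SL ι : (Fin n → ℝ) →L[ℝ] E n) : (Fin n → ℝ) →ₗ[ℝ] E n)
    (by
      intro x y hxy
      have h : ι x = ι y := hginj hxy
      rw [hιa, hιa] at h
      exact (Prod.ext_iff.1 h).1)
    (by
      intro u v
      have h := hiso u₀ (by rw [← hΦp]; exact ⟨p, hpV, rfl⟩) u v
      rw [← hΦp] at h
      simpa [hιa] using h)
  have hAs' : ∀ u v, omega0 n (A.symm u) (A.symm v) = omega0 n u v := fun u v => by
    rw [← hAs, A.apply_symm_apply, A.apply_symm_apply]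
  set j : (Fin n → ℝ) → E n := fun u => A.symm (g (ι u) - p) with hj
  have hjd : ∀ u ∈ D, HasFDerivAt j
      ((A.symm : E n →L[ℝ] E n) ∘SL (fderiv ℝ g (ι u) ∘SL ι)) u := fun u hu =>
    (A.symm : E n →L[ℝ] E n).hasFDerivAt.comp u
      (((hgd _ hu).comp u ι.hasFDerivAt).sub_const p)
  have hgp : g (ι u₀) = p := by rw [hιa, ← hΦp, hgΦ p hpV]
  obtain ⟨r, O, s, hr, hO, hu₀O, hsO, hsD, hα, hsym⟩ := exists_graph (j := j) (u₀ := u₀) hDo hu₀D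
    (A.symm.contDiff.comp_contDiffOn
      ((hg.comp ι.contDiff.contDiffOn fun u hu => hu).sub contDiffOn_const))
    (by simp [hj, hgp])
    (by
      intro x
      rw [(hjd u₀ hu₀D).fderiv]
      have h := hAB x
      simp only [ContinuousLinearMap.coe_coe, ContinuousLinearMap.comp_apply] at h
      simp only [ContinuousLinearMap.comp_apply]
      rw [hιa u₀, ← hΦp, ← h]
      simp)
    (by
      intro u hu a b
      rw [(hjd u hu).fderiv]
      simp only [ContinuousLinearMap.comp_apply, ContinuousLinearEquiv.coe_coe]
      rw [hAs', hιa u, hιa a, hιa b]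
      refine hiso u ?_ a b
      rw [← hιa]
      exact hu)
  obtain ⟨β, hβ, hβsym, hβα⟩ := exists_global_closed hr hα hsym
  have hβn : ContDiff ℝ (⊤ : ℕ∞) (fun x => -β x) := hβ.neg
  have hβ0 : β 0 = 0 := by
    have hju : j u₀ = 0 := by simp [hj, hgp]
    have h1 := hsO u₀ hu₀O
    rw [hju] at h1
    rw [hβα 0 (by simpa using hr)]
    have h1' : s 0 = u₀ := h1
    simp [h1', hju]
  have hgι : ∀ z ∈ V, (Φ z).2 = 0 → g (ι (Φ z).1) = z := fun z hz h => by
    rw [hιa, show (((Φ z).1, 0) : E n) = Φ z from Prod.ext rfl h.symm, hgΦ z hz]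
  set W : Set (E n) := (V ∩ Φ ⁻¹' (Prod.fst ⁻¹' O)) ∩
    {z | (A.symm (z - p)).1 ∈ Metric.ball (0 : Fin n → ℝ) (r / 3)} with hW
  have hWo : IsOpen W := by
    refine (hΦ.continuousOn.isOpen_inter_preimage hV (hO.preimage continuous_fst)).inter ?_
    exact Metric.isOpen_ball.preimage (by fun_prop)
  refine ⟨W, fun z => A (shear n β z) + p, fun z => shear n (fun x => -β x) (A.symm (z - p)),
    hWo, ⟨⟨hpV, hu₀O⟩, by simpa using hr⟩, ?_, ?_, ?_, ?_, ?_, ?_, ?_⟩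
  · exact (A.contDiff.comp (shear_contDiff hβ)).add contDiff_const
  · exact (shear_contDiff hβn).comp (A.symm.contDiff.comp (contDiff_id.sub contDiff_const))
  · intro z
    simp [shear]
  · intro z
    simp only [shear, neg_add_cancel_right]
    exact (congrArg (· + p) (A.apply_symm_apply (z - p))).trans (sub_add_cancel z p)
  · intro z
    obtain ⟨S, hS, hSs⟩ := shear_symplectic hβn (by
      intro x v w
      have : fderiv ℝ (fun x => -β x) x = -fderiv ℝ β x := fderiv_fun_neg
      rw [this]
      simpa using hβsym x v w) (A.symm (z - p))
    refine ⟨S ∘SL (A.symm : E n →L[ℝ] E n), ?_, fun u v => ?_⟩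
    · exact hS.comp z ((A.symm : E n →L[ℝ] E n).hasFDerivAt.comp z
        ((hasFDerivAt_id z).sub_const p))
    · simp only [ContinuousLinearMap.comp_apply, ContinuousLinearEquiv.coe_coe]
      rw [hSs, hAs']
  · simp [shear, hβ0]
  · rintro z ⟨⟨hzV, hzO⟩, hzr⟩
    have hzr' : (A.symm (z - p)).1 ∈ Metric.ball (0 : Fin n → ℝ) r :=
      Metric.ball_subset_ball (by linarith) hzr
    have key : (shear n (fun x => -β x) (A.symm (z - p))).2 = 0 ↔
        (A.symm (z - p)).2 = (j (s (A.symm (z - p)).1)).2 := by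
      simp only [shear]
      rw [← sub_eq_add_neg, sub_eq_zero, hβα _ hzr]
    rw [key]
    constructor
    · intro hzL
      have h1 := hgι z hzV ((hLV z hzV).1 hzL)
      have h2 : j (Φ z).1 = A.symm (z - p) := by simp only [hj]; rw [h1]
      rw [← h2, hsO _ hzO]
    · intro h
      obtain ⟨hsu, hs1⟩ := hsD _ hzr'
      have h2 : j (s (A.symm (z - p)).1) = A.symm (z - p) := Prod.ext hs1 h.symm
      have h3 : g (ι (s (A.symm (z - p)).1)) = z := by
        have := A.symm.injective h2
        exact sub_left_injective this
      obtain ⟨z', hz', hz'e⟩ := hsu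
      rw [← hz'e, hgΦ z' hz'] at h3
      subst h3
      rw [hLV z' hzV, hz'e, hιa]

/-! ### Transport to the zero section and conclusion -/

lemma norm_lt_of_nsq_lt {n : ℕ} {z : E n} {ε : ℝ} (hε : 0 < ε) (h : nsq n z < ε ^ 2) :
    ‖z‖ < ε := by
  have h1 : ∀ (x : Fin n → ℝ) i, x i ^ 2 ≤ x ⬝ᵥ x := fun x i => by
    rw [dotProduct, pow_two]
    exact Finset.single_le_sum (f := fun i => x i * x i) (fun i _ => mul_self_nonneg _)
      (Finset.mem_univ i)
  have h0 : ∀ x : Fin n → ℝ, 0 ≤ x ⬝ᵥ x := fun x =>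
    Finset.sum_nonneg fun i _ => mul_self_nonneg _
  have ha := h0 z.1
  have hb := h0 z.2
  unfold nsq at h
  rw [Prod.norm_def, max_lt_iff, pi_norm_lt_iff hε, pi_norm_lt_iff hε]
  refine ⟨fun i => ?_, fun i => ?_⟩
  · have := h1 z.1 i
    exact abs_lt_of_sq_lt_sq (by linarith) hε.le
  · have := h1 z.2 i
    exact abs_lt_of_sq_lt_sq (by linarith) hε.le

/-- A smooth profile supported in `(-∞, ρ]` whose integral over `[0, ρ]` is positive. -/
lemma exists_profile {ρ : ℝ} (hρ : 0 < ρ) : ∃ θ : ℝ → ℝ, ContDiff ℝ (⊤ : ℕ∞) θ ∧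
    (∀ r, 0 ≤ θ r) ∧ (∀ r, θ r ≤ 1) ∧ (∀ r, ρ ≤ r → θ r = 0) ∧ 0 < ∫ r in (0:ℝ)..ρ, θ r := by
  have hc : ContDiff ℝ (⊤ : ℕ∞) (fun r : ℝ => Real.smoothTransition (1 - r / ρ)) :=
    Real.smoothTransition.contDiff.comp (by fun_prop)
  refine ⟨fun r => Real.smoothTransition (1 - r / ρ), hc,
    fun r => Real.smoothTransition.nonneg _, fun r => Real.smoothTransition.le_one _, ?_, ?_⟩
  · intro r hr
    apply Real.smoothTransition.zero_of_nonpos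
    have : 1 ≤ r / ρ := (one_le_div hρ).2 hr
    linarith
  · refine intervalIntegral.intervalIntegral_pos_of_pos_on
      (hc.continuous.intervalIntegrable _ _) (fun r hr => ?_) hρ
    apply Real.smoothTransition.pos_of_pos
    have : r / ρ < 1 := (div_lt_one hρ).2 hr.2
    linarith

/-- The main estimate transported by a global symplectic diffeomorphism `σ` with inverse `τ`. -/
lemma transported_estimate {n : ℕ} (hn : 1 ≤ n) {σ τ : E n → E n}
    (hσ : ContDiff ℝ (⊤ : ℕ∞) σ) (hτ : ContDiff ℝ (⊤ : ℕ∞) τ)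
    (hτσ : ∀ z, τ (σ z) = z) (hστ : ∀ z, σ (τ z) = z)
    (hsymp : ∀ z, ∃ S : E n →L[ℝ] E n, HasFDerivAt τ S z ∧
      ∀ u v, omega0 n (S u) (S v) = omega0 n u v)
    {W : Set (E n)} {H : ℝ × E n → ℝ} (hH : AdmissibleH n W H) {Φ : ℝ → E n → E n}
    (hΦ : IsHamFlow n H Φ) {θ : ℝ → ℝ} (hθ : ContDiff ℝ (⊤ : ℕ∞) θ)
    (hθ0 : ∀ r, 0 ≤ θ r) (hθ1 : ∀ r, θ r ≤ 1) {ρ : ℝ} (hρ : 0 ≤ ρ)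
    (hθρ : ∀ r, ρ ≤ r → θ r = 0) (hdisp : ∀ z, nsq n z < ρ → (τ (Φ 1 (σ z))).2 ≠ 0) :
    1 / 2 * ∫ r in (0:ℝ)..ρ, θ r ≤ HNorm n H := by
  obtain ⟨hHs, hHc, hHt⟩ := hH
  set K : ℝ × E n → ℝ := fun q => H (q.1, σ q.2) with hK
  have hKs : ContDiff ℝ (⊤ : ℕ∞) K :=
    hHs.comp (contDiff_fst.prodMk (hσ.comp contDiff_snd))
  let h : E n ≃ₜ E n := ⟨⟨σ, τ, hτσ, hστ⟩, hσ.continuous, hτ.continuous⟩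
  let F : ℝ × E n ≃ₜ ℝ × E n := (Homeomorph.refl ℝ).prodCongr h
  have hKF : K = H ∘ F := rfl
  have hKc : HasCompactSupport K := by
    rw [hKF]
    exact HasCompactSupport.comp_homeomorph hHc F
  have hKt : tsupport K ⊆ Set.Icc (0 : ℝ) 1 ×ˢ Set.univ := by
    intro q hq
    have h1 : F q ∈ tsupport H := by
      rw [hKF] at hq
      exact tsupport_comp_subset_preimage H F.continuous hq
    exact ⟨(hHt h1).1, trivial⟩
  have hflow : IsHamFlow n K (fun t z => τ (Φ t (σ z))) := by
    refine ⟨fun z => ?_, fun z t => ?_⟩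
    · simp only [hΦ.1, hτσ]
    · obtain ⟨S, hS, hSs⟩ := hsymp (Φ t (σ z))
      have h1 := XH_comp (t := t) hS hSs (slice_differentiable hKs t _)
      have h2 : (fun p : ℝ × E n => K (p.1, τ p.2)) = H := by
        funext q
        simp [hK, hστ]
      rw [h2] at h1
      rw [h1]
      exact hS.comp_hasDerivAt (f := fun s => Φ s (σ z)) t (hΦ.2 (σ z) t)
  have hnorm : HNorm n K = HNorm n H := by
    have hr : ∀ t, Set.range (fun z => K (t, z)) = Set.range (fun z => H (t, z)) := fun t =>
      h.surjective.range_comp (fun z => H (t, z))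
    simp only [HNorm, hr]
  rw [← hnorm]
  exact main_estimate hn hKs hKc hKt hflow hθ hθ0 hθ1 hρ hθρ hdisp

/-- every point of a Lagrangian submanifold is locally rigid. -/
theorem locRigid_of_lagrangian
    (n : ℕ) (hn : 1 ≤ n) (k : ℕ) (L : Set (E n)) (hL : IsSubmanifold n k L)
    (hLag : IsLagrangian n L) :
    ∀ p ∈ L, LocRigid n L p := by
  intro p hp
  obtain ⟨W, σ, τ, hW, hpW, hσ, hτ, hτσ, hστ, hsymp, hσ0, hWL⟩ := exists_normal_form hL hLag hp
  refine ⟨W, hW, hpW, ⟨Set.inter_subset_right, ?_⟩, ?_⟩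
  · rintro z ⟨hz, hzW⟩
    have hcl : IsClosed {z | (τ z).2 = 0} :=
      isClosed_eq (continuous_snd.comp hτ.continuous) continuous_const
    have hsub : L ∩ W ⊆ {z | (τ z).2 = 0} := fun w hw => (hWL w hw.2).1 hw.1
    exact ⟨(hWL z hzW).2 (closure_minimal hsub hcl hz), hzW⟩
  intro U hU hpU hUW
  obtain ⟨ε, hε, hball⟩ := Metric.isOpen_iff.1 (hU.preimage hσ.continuous) 0
    (by rw [Set.mem_preimage, hσ0]; exact hpU)
  have hρ : 0 < ε ^ 2 := by positivity
  obtain ⟨θ, hθ, hθ0, hθ1, hθρ, hθpos⟩ := exists_profile hρ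
  have hlow : ENNReal.ofReal (1 / 2 * ∫ r in (0:ℝ)..(ε ^ 2), θ r) ≤ dispE n W U (L ∩ W) := by
    refine le_sInf ?_
    rintro _ ⟨φ, ⟨H₀, Φ₀, hH₀, hΦ₀, hφ₀⟩, hdisp, rfl⟩
    refine ENNReal.ofReal_le_ofReal (le_csInf ⟨_, H₀, Φ₀, hH₀, hΦ₀, hφ₀, rfl⟩ ?_)
    rintro _ ⟨H, Φ, hH, hΦ, rfl, rfl⟩
    refine transported_estimate hn hσ hτ hτσ hστ hsymp hH hΦ hθ hθ0 hθ1 hρ.le hθρ ?_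
    intro z hz h0
    have hzU : σ z ∈ U := hball (by simpa using norm_lt_of_nsq_lt hε hz)
    -- The flow fixes every point outside `W`, so by injectivity it preserves `W`.
    have hmem : Φ 1 (σ z) ∈ W := by
      by_contra hout
      have hfix : Φ 1 (Φ 1 (σ z)) = Φ 1 (σ z) :=
        flow_fixed hH.1 hH.2.1 hΦ (fun t ht => hout (hH.2.2 ht).2) 1
      have heq := flow_injective hH.1 hH.2.1 hΦ 1 hfix
      exact hout (by rw [heq]; exact hUW hzU)
    have hin : Φ 1 (σ z) ∈ Φ 1 '' (closure U ∩ W) ∩ (L ∩ W) :=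
      ⟨⟨σ z, ⟨subset_closure hzU, hUW hzU⟩, rfl⟩, (hWL _ hmem).2 h0, hmem⟩
    rw [hdisp] at hin
    exact hin
  exact lt_of_lt_of_le (ENNReal.ofReal_pos.2 (by linarith)) hlow
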